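/- arXiv:2003.11002 — 3 statements merged into one kernel-verified Lean document; each statement's English description precedes it below -/
import Mathlib

section
/- Let H be a real Hilbert space, let P be a continuous polynomial of degree at most n on H with ‖P‖ ≤ 1, and let 1 ≤ k ≤ n. Then for every x ∈ H with ‖x‖ < 1 one has ‖D^k P(x)‖² = ‖D̂^k P(x)‖² ≤ M_k(‖x‖), where M_k(t) = (T_n^{(k)}(t))² + (S_n^{(k)}(t))². -/
open Metric

/-- `M_k(t) = (T_n^{(k)}(t))^2 + (S_n^{(k)}(t))^2`, where `T_n(t) = cos (n arccos t)` and
`S_n(t) = sin (n arccos t)` on `(-1, 1)`, and the superscript `(k)` denotes the `k`-th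
derivative of these functions. -/
noncomputable def chebM (n k : ℕ) (t : ℝ) : ℝ :=
  (iteratedDeriv k (fun s : ℝ => Real.cos (n * Real.arccos s)) t) ^ 2 +
  (iteratedDeriv k (fun s : ℝ => Real.sin (n * Real.arccos s)) t) ^ 2

noncomputable def bco (N : ℝ) : ℕ → ℕ → ℝ
  | 0, 0 => N
  | 0, _ + 1 => 0
  | k + 1, 0 => (N - (k + 1) ^ 2) * bco N k 0
  | k + 1, m + 1 => (k + 1 + m) * (2 * m + 1) * bco N k m
      + (N - (m + 1) ^ 2 - (k + m + 2) ^ 2) * bco N k (m + 1)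

lemma bco_zero (N : ℝ) (k : ℕ) : ∀ m, k < m → bco N k m = 0 := by
  induction k with
  | zero => intro m hm; obtain ⟨m, rfl⟩ : ∃ j, m = j + 1 := ⟨m - 1, by omega⟩; simp [bco]
  | succ k ih =>
    intro m hm
    obtain ⟨m, rfl⟩ : ∃ j, m = j + 1 := ⟨m - 1, by omega⟩
    simp [bco, ih m (by omega), ih (m + 1) (by omega)]

lemma bco_Q_of_R (N : ℝ) (k : ℕ)
    (R : ∀ m : ℕ, 2 * (m + 1) * (N - (m + 1) ^ 2) * bco N k (m + 1)
      = (k - m) * (k + 1 + m) * (2 * m + 1) * bco N k m) (m : ℕ) :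
    ((k : ℝ) + 1 - m) * bco N (k + 1) m = (k + 1 + m) * (N - (k + 1) ^ 2) * bco N k m := by
  cases m with
  | zero => simp [bco]; ring
  | succ m =>
    have := R m
    simp only [bco]
    push_cast
    linear_combination -this

lemma bco_R (N : ℝ) (k : ℕ) :
    ∀ m : ℕ, 2 * (m + 1) * (N - (m + 1) ^ 2) * bco N k (m + 1)
      = (k - m) * (k + 1 + m) * (2 * m + 1) * bco N k m := by
  induction k with
  | zero =>
    intro m
    cases m <;> simp [bco]
  | succ k ih =>
    intro m
    have q := bco_Q_of_R N k ih m
    have r := ih m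
    simp only [bco]
    push_cast
    linear_combination (N - (m + 1) ^ 2 - (k + m + 2) ^ 2) * r - (k + 2 + m) * (2 * m + 1) * q

lemma bco_Q (N : ℝ) (k m : ℕ) :
    ((k : ℝ) + 1 - m) * bco N (k + 1) m = (k + 1 + m) * (N - (k + 1) ^ 2) * bco N k m :=
  bco_Q_of_R N k (bco_R N k) m

lemma bco_diag_pos (N : ℝ) (hN : 0 < N) (k : ℕ) : 0 < bco N k k := by
  induction k with
  | zero => simpa [bco]
  | succ k ih =>
    simp only [bco, bco_zero N k (k + 1) (by omega), mul_zero, add_zero]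
    positivity

lemma bco_nonneg (n : ℕ) (hn : 1 ≤ n) (k : ℕ) (hk : k + 1 ≤ n) (m : ℕ) :
    0 ≤ bco ((n : ℝ) ^ 2) k m := by
  have hN : (0 : ℝ) < (n : ℝ) ^ 2 := by positivity
  induction k generalizing m with
  | zero => cases m <;> simp [bco]
  | succ k ih =>
    rcases lt_trichotomy m (k + 1) with h | h | h
    · have q := bco_Q ((n : ℝ) ^ 2) k m
      have h1 : (0 : ℝ) < (k : ℝ) + 1 - m := by
        have : (m : ℝ) < k + 1 := by exact_mod_cast h
        linarith
      have h2 : (0 : ℝ) ≤ (n : ℝ) ^ 2 - (k + 1) ^ 2 := by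
        have : (k : ℝ) + 1 ≤ n := by exact_mod_cast (by omega : k + 1 ≤ n)
        nlinarith
      have h3 := ih (by omega) m
      by_contra hc
      push Not at hc
      have := mul_neg_of_pos_of_neg h1 hc
      have h4 : 0 ≤ ((k : ℝ) + 1 + m) * ((n : ℝ) ^ 2 - (k + 1) ^ 2) * bco ((n : ℝ) ^ 2) k m := by
        positivity
      linarith
    · subst h; exact (bco_diag_pos _ hN _).le
    · rw [bco_zero _ _ _ h]

lemma bco_top (n : ℕ) (hn : 1 ≤ n) (m : ℕ) (hm : m < n) : bco ((n : ℝ) ^ 2) n m = 0 := by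
  obtain ⟨k, rfl⟩ : ∃ k, n = k + 1 := ⟨n - 1, by omega⟩
  have q := bco_Q (((k + 1 : ℕ) : ℝ) ^ 2) k m
  have h1 : (k : ℝ) + 1 - m ≠ 0 := by
    have : (m : ℝ) < k + 1 := by exact_mod_cast hm
    linarith
  have : ((k : ℝ) + 1 - m) * bco (((k + 1 : ℕ) : ℝ) ^ 2) (k + 1) m = 0 := by
    rw [q]; push_cast; ring
  exact (mul_eq_zero.1 this).resolve_left h1

section seqs

variable (n : ℕ)

noncomputable def Tq (k : ℕ) : ℝ → ℝ := iteratedDeriv k (fun s : ℝ => Real.cos (n * Real.arccos s))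
noncomputable def Sq (k : ℕ) : ℝ → ℝ := iteratedDeriv k (fun s : ℝ => Real.sin (n * Real.arccos s))

lemma hasDerivAt_iter {f : ℝ → ℝ} {t : ℝ} (h : ContDiffAt ℝ ⊤ f t) (k : ℕ) :
    HasDerivAt (iteratedDeriv k f) (iteratedDeriv (k + 1) f t) t := by
  rw [iteratedDeriv_succ]
  apply DifferentiableAt.hasDerivAt
  rw [iteratedDeriv_eq_iterate]
  exact (h.analyticAt.iterated_deriv k).differentiableAt

lemma Tq_deriv (k : ℕ) {t : ℝ} (ht : t ∈ Set.Ioo (-1 : ℝ) 1) :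
    HasDerivAt (Tq n k) (Tq n (k + 1) t) t := by
  apply hasDerivAt_iter
  have := Real.contDiffAt_arccos (n := ⊤) ht.1.ne' ht.2.ne
  exact Real.contDiff_cos.contDiffAt.comp t (contDiffAt_const.mul this)

lemma Sq_deriv (k : ℕ) {t : ℝ} (ht : t ∈ Set.Ioo (-1 : ℝ) 1) :
    HasDerivAt (Sq n k) (Sq n (k + 1) t) t := by
  apply hasDerivAt_iter
  have := Real.contDiffAt_arccos (n := ⊤) ht.1.ne' ht.2.ne
  exact Real.contDiff_sin.contDiffAt.comp t (contDiffAt_const.mul this)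

lemma w_pos {t : ℝ} (ht : t ∈ Set.Ioo (-1 : ℝ) 1) : 0 < 1 - t ^ 2 := by
  nlinarith [ht.1, ht.2]

lemma Tq_zero (t : ℝ) : Tq n 0 t = Real.cos (n * Real.arccos t) := by simp [Tq]
lemma Sq_zero (t : ℝ) : Sq n 0 t = Real.sin (n * Real.arccos t) := by simp [Sq]

lemma Tq_one {t : ℝ} (ht : t ∈ Set.Ioo (-1 : ℝ) 1) :
    Tq n 1 t = n * Sq n 0 t / Real.sqrt (1 - t ^ 2) := by
  have h := Tq_deriv n 0 ht
  have h2 := ((Real.hasDerivAt_arccos ht.1.ne' ht.2.ne).const_mul (n : ℝ)).cos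
  have e : Tq n 0 = fun s => Real.cos (n * Real.arccos s) := by funext s; simp [Tq]
  rw [e] at h
  rw [h.unique h2, Sq_zero]
  ring

lemma Sq_one {t : ℝ} (ht : t ∈ Set.Ioo (-1 : ℝ) 1) :
    Sq n 1 t = - (n * Tq n 0 t / Real.sqrt (1 - t ^ 2)) := by
  have h := Sq_deriv n 0 ht
  have h2 := ((Real.hasDerivAt_arccos ht.1.ne' ht.2.ne).const_mul (n : ℝ)).sin
  have e : Sq n 0 = fun s => Real.sin (n * Real.arccos s) := by funext s; simp [Sq]
  rw [e] at h
  rw [h.unique h2, Tq_zero]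
  ring

/-- from the first order system to the second order equation -/
lemma ode_base {Y Z : ℝ → ℝ} {Y' Y'' Z' : ℝ → ℝ} (c : ℝ)
    (hY : ∀ t ∈ Set.Ioo (-1 : ℝ) 1, HasDerivAt Y' (Y'' t) t)
    (hZ : ∀ t ∈ Set.Ioo (-1 : ℝ) 1, HasDerivAt Z (Z' t) t)
    (h1 : ∀ t ∈ Set.Ioo (-1 : ℝ) 1, Y' t = c * Z t / Real.sqrt (1 - t ^ 2))
    (h2 : ∀ t ∈ Set.Ioo (-1 : ℝ) 1, Z' t = - (c * Y t / Real.sqrt (1 - t ^ 2)))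
    {t : ℝ} (ht : t ∈ Set.Ioo (-1 : ℝ) 1) :
    (1 - t ^ 2) * Y'' t - t * Y' t + c ^ 2 * Y t = 0 := by
  have hw := w_pos ht
  have hs : HasDerivAt (fun t : ℝ => Real.sqrt (1 - t ^ 2)) ((-(2 * t)) / (2 * Real.sqrt (1 - t ^ 2))) t := by
    have : HasDerivAt (fun t : ℝ => 1 - t ^ 2) (-(2 * t)) t := by
      simpa using (hasDerivAt_pow 2 t).const_sub 1
    exact this.sqrt hw.ne'
  have hl := (hY t ht).mul hs
  have hr := (hZ t ht).const_mul c
  have heq : (Y' * fun t : ℝ => Real.sqrt (1 - t ^ 2)) =ᶠ[nhds t] fun y => c * Z y := by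
    filter_upwards [isOpen_Ioo.mem_nhds ht] with s hs
    have : 0 < Real.sqrt (1 - s ^ 2) := Real.sqrt_pos.2 (w_pos hs)
    simp only [Pi.mul_apply, h1 s hs]
    field_simp
  have hu := hl.unique (hr.congr_of_eventuallyEq heq)
  rw [h2 t ht] at hu
  have hsp : 0 < Real.sqrt (1 - t ^ 2) := Real.sqrt_pos.2 hw
  have hsq : Real.sqrt (1 - t ^ 2) ^ 2 = 1 - t ^ 2 := Real.sq_sqrt hw.le
  field_simp at hu
  rw [hsq] at hu
  linarith

lemma ode_succ {Y : ℕ → ℝ → ℝ} (c : ℝ)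
    (hY : ∀ k, ∀ t ∈ Set.Ioo (-1 : ℝ) 1, HasDerivAt (Y k) (Y (k + 1) t) t)
    (h0 : ∀ t ∈ Set.Ioo (-1 : ℝ) 1, (1 - t ^ 2) * Y 2 t - t * Y 1 t + c * Y 0 t = 0) (k : ℕ) :
    ∀ t ∈ Set.Ioo (-1 : ℝ) 1,
      (1 - t ^ 2) * Y (k + 2) t - (2 * k + 1) * t * Y (k + 1) t + (c - k ^ 2) * Y k t = 0 := by
  induction k with
  | zero => intro t ht; have := h0 t ht; simp; linarith
  | succ k ih =>
    intro t ht
    have hw : HasDerivAt (fun t : ℝ => 1 - t ^ 2) (-(2 * t)) t := by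
      simpa using (hasDerivAt_pow 2 t).const_sub 1
    have hl : HasDerivAt (fun t => (2 * (k : ℝ) + 1) * t) (2 * (k : ℝ) + 1) t := by
      simpa using (hasDerivAt_id t).const_mul (2 * (k : ℝ) + 1)
    have H := ((hw.mul (hY (k + 2) t ht)).sub (hl.mul (hY (k + 1) t ht))).add
      ((hY k t ht).const_mul (c - k ^ 2))
    have H0 := (hasDerivAt_const t (0 : ℝ)).congr_of_eventuallyEq (f₁ := 
      ((((fun t : ℝ => 1 - t ^ 2) * Y (k + 2)) - ((fun t => (2 * (k : ℝ) + 1) * t) * Y (k + 1)))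
        + fun y => (c - k ^ 2) * Y k y)) (by
        filter_upwards [isOpen_Ioo.mem_nhds ht] with s hs
        exact ih s hs)
    have := H.unique H0
    push_cast
    linarith

lemma Tq_ode (k : ℕ) : ∀ t ∈ Set.Ioo (-1 : ℝ) 1,
      (1 - t ^ 2) * Tq n (k + 2) t - (2 * k + 1) * t * Tq n (k + 1) t + ((n : ℝ) ^ 2 - k ^ 2) * Tq n k t = 0 := by
  refine ode_succ (Y := Tq n) _ (fun k t ht => Tq_deriv n k ht) ?_ k
  intro t ht
  exact ode_base (Z := Sq n 0) (Z' := Sq n 1) (n : ℝ) (fun t ht => Tq_deriv n 1 ht) (fun t ht => Sq_deriv n 0 ht)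
    (fun t ht => Tq_one n ht) (fun t ht => Sq_one n ht) ht

lemma Sq_ode (k : ℕ) : ∀ t ∈ Set.Ioo (-1 : ℝ) 1,
      (1 - t ^ 2) * Sq n (k + 2) t - (2 * k + 1) * t * Sq n (k + 1) t + ((n : ℝ) ^ 2 - k ^ 2) * Sq n k t = 0 := by
  refine ode_succ (Y := Sq n) _ (fun k t ht => Sq_deriv n k ht) ?_ k
  intro t ht
  have := ode_base (Y := Sq n 0) (Y' := Sq n 1) (Z := Tq n 0) (Z' := Tq n 1) (-(n : ℝ)) (fun t ht => Sq_deriv n 1 ht) (fun t ht => Tq_deriv n 0 ht)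
    (fun t ht => by rw [Sq_one n ht]; ring) (fun t ht => by rw [Tq_one n ht]; ring) ht
  linarith

lemma M_formula (k : ℕ) : ∀ t ∈ Set.Ioo (-1 : ℝ) 1,
    Tq n (k + 1) t ^ 2 + Sq n (k + 1) t ^ 2
      = ∑ m ∈ Finset.range (k + 1), bco ((n : ℝ) ^ 2) k m * ((1 - t ^ 2)⁻¹) ^ (k + 1 + m) := by
  induction k with
  | zero =>
    intro t ht
    have hw := w_pos ht
    have hsq : Real.sqrt (1 - t ^ 2) ^ 2 = 1 - t ^ 2 := Real.sq_sqrt hw.le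
    simp only [zero_add, Tq_one n ht, Sq_one n ht, Finset.sum_range_one, bco]
    rw [neg_sq, div_pow, div_pow, hsq, Tq_zero, Sq_zero, ← add_div, mul_pow, mul_pow, ← mul_add,
      Real.sin_sq_add_cos_sq]
    simp [div_eq_mul_inv]
  | succ k ih =>
    intro t ht
    have hw := w_pos ht
    set u : ℝ → ℝ := fun t => (1 - t ^ 2)⁻¹ with hu
    have hud : ∀ t ∈ Set.Ioo (-1 : ℝ) 1, HasDerivAt u (2 * t * u t ^ 2) t := by
      intro t ht
      have : HasDerivAt (fun t : ℝ => 1 - t ^ 2) (-(2 * t)) t := by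
        simpa using (hasDerivAt_pow 2 t).const_sub 1
      have := this.inv (w_pos ht).ne'
      refine this.congr_deriv ?_
      have := (w_pos ht).ne'
      simp only [hu]; field_simp
    have hpow : ∀ j : ℕ, ∀ t ∈ Set.Ioo (-1 : ℝ) 1,
        HasDerivAt (fun t => u t ^ (j + 1)) (2 * (j + 1) * t * u t ^ (j + 2)) t := by
      intro j t ht
      refine ((hud t ht).pow (j + 1)).congr_deriv ?_
      push_cast; ring
    set A : ℝ → ℝ := fun t => Tq n (k + 1) t ^ 2 + Sq n (k + 1) t ^ 2 with hA
    set A1 : ℝ → ℝ := fun t => 2 * (Tq n (k + 1) t * Tq n (k + 2) t + Sq n (k + 1) t * Sq n (k + 2) t)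
    have hAd : ∀ t ∈ Set.Ioo (-1 : ℝ) 1, HasDerivAt A (A1 t) t := by
      intro t ht
      refine (((Tq_deriv n (k + 1) ht).pow 2).add ((Sq_deriv n (k + 1) ht).pow 2)).congr_deriv ?_
      simp [A1]; ring
    have hA1d : HasDerivAt A1 (2 * (Tq n (k + 2) t ^ 2 + Sq n (k + 2) t ^ 2
        + Tq n (k + 1) t * Tq n (k + 3) t + Sq n (k + 1) t * Sq n (k + 3) t)) t := by
      refine ((((Tq_deriv n (k + 1) ht).mul (Tq_deriv n (k + 2) ht)).add
        ((Sq_deriv n (k + 1) ht).mul (Sq_deriv n (k + 2) ht))).const_mul 2).congr_deriv ?_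
      ring
    set b := bco ((n : ℝ) ^ 2) k with hb
    have e1 : ∀ t ∈ Set.Ioo (-1 : ℝ) 1, A1 t = ∑ m ∈ Finset.range (k + 1),
        b m * (2 * (k + m + 1) * t * u t ^ (k + m + 2)) := by
      intro t ht
      have h1 : HasDerivAt (fun t => ∑ m ∈ Finset.range (k + 1), b m * u t ^ (k + 1 + m))
          (∑ m ∈ Finset.range (k + 1), b m * (2 * (k + m + 1) * t * u t ^ (k + m + 2))) t := by
        apply HasDerivAt.fun_sum
        intro m _
        have := (hpow (k + m) t ht).const_mul (b m)
        rw [show k + 1 + m = k + m + 1 by ring]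
        refine this.congr_deriv ?_
        push_cast; ring
      refine (hAd t ht).unique (h1.congr_of_eventuallyEq ?_)
      filter_upwards [isOpen_Ioo.mem_nhds ht] with s hs
      exact ih s hs
    have e2 : 2 * (Tq n (k + 2) t ^ 2 + Sq n (k + 2) t ^ 2
        + Tq n (k + 1) t * Tq n (k + 3) t + Sq n (k + 1) t * Sq n (k + 3) t)
        = ∑ m ∈ Finset.range (k + 1), b m * (2 * (k + m + 1) * u t ^ (k + m + 2)
          + 2 * (k + m + 1) * t * (2 * (k + m + 2) * t * u t ^ (k + m + 3))) := by
      have h1 : HasDerivAt (fun t => ∑ m ∈ Finset.range (k + 1),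
          b m * (2 * (k + m + 1) * t * u t ^ (k + m + 2)))
          (∑ m ∈ Finset.range (k + 1), b m * (2 * (k + m + 1) * u t ^ (k + m + 2)
          + 2 * (k + m + 1) * t * (2 * (k + m + 2) * t * u t ^ (k + m + 3)))) t := by
        apply HasDerivAt.fun_sum
        intro m _
        have hl : HasDerivAt (fun t : ℝ => 2 * ((k : ℝ) + m + 1) * t) (2 * ((k : ℝ) + m + 1)) t := by
          simpa using (hasDerivAt_id t).const_mul (2 * ((k : ℝ) + m + 1))
        have := (hl.mul (hpow (k + m + 1) t ht)).const_mul (b m)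
        refine this.congr_deriv ?_
        push_cast; ring
      refine hA1d.unique (h1.congr_of_eventuallyEq ?_)
      filter_upwards [isOpen_Ioo.mem_nhds ht] with s hs
      exact e1 s hs
    have e0 := ih t ht
    have e1 := e1 t ht
    have o1 := Tq_ode n (k + 1) t ht
    have o2 := Sq_ode n (k + 1) t ht
    have huw : u t * (1 - t ^ 2) = 1 := by simp only [hu]; field_simp
    have o1' : Tq n (k + 3) t = u t * ((2 * (k + 1 : ℕ) + 1) * t * Tq n (k + 2) t - ((n : ℝ) ^ 2 - (k + 1 : ℕ) ^ 2) * Tq n (k + 1) t) := by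
      linear_combination u t * o1 - Tq n (k + 3) t * huw
    have o2' : Sq n (k + 3) t = u t * ((2 * (k + 1 : ℕ) + 1) * t * Sq n (k + 2) t - ((n : ℝ) ^ 2 - (k + 1 : ℕ) ^ 2) * Sq n (k + 1) t) := by
      linear_combination u t * o2 - Sq n (k + 3) t * huw
    have key : Tq n (k + 2) t ^ 2 + Sq n (k + 2) t ^ 2
        = (∑ m ∈ Finset.range (k + 1), b m * (2 * (k + m + 1) * u t ^ (k + m + 2)
          + 2 * (k + m + 1) * t * (2 * (k + m + 2) * t * u t ^ (k + m + 3)))) / 2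
          - (2 * (k + 1) + 1) * t * u t * (∑ m ∈ Finset.range (k + 1),
        b m * (2 * (k + m + 1) * t * u t ^ (k + m + 2))) / 2
          + ((n : ℝ) ^ 2 - (k + 1) ^ 2) * u t * ∑ m ∈ Finset.range (k + 1), b m * u t ^ (k + 1 + m) := by
      rw [← e2, ← e1, ← e0, o1', o2']
      simp only [A1]
      push_cast
      ring
    rw [show k + 1 + 1 = k + 2 by ring, key]
    have huu : u t * t ^ 2 = u t - 1 := by linarith
    have key2 : ∀ m : ℕ, b m * (2 * (k + m + 1) * u t ^ (k + m + 2)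
          + 2 * (k + m + 1) * t * (2 * (k + m + 2) * t * u t ^ (k + m + 3))) / 2
          - (2 * (k + 1) + 1) * t * u t * (b m * (2 * (k + m + 1) * t * u t ^ (k + m + 2))) / 2
          + ((n : ℝ) ^ 2 - (k + 1) ^ 2) * u t * (b m * u t ^ (k + 1 + m))
          = (k + 1 + m) * (2 * m + 1) * b m * u t ^ (k + 2 + (m + 1))
            + ((n : ℝ) ^ 2 - m ^ 2 - (k + m + 1) ^ 2) * b m * u t ^ (k + 2 + m) := by
      intro m
      have a1 : u t ^ (k + m + 3) = u t ^ (k + m) * u t ^ 3 := by ring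
      have a2 : u t ^ (k + m + 2) = u t ^ (k + m) * u t ^ 2 := by ring
      have a3 : u t ^ (k + 1 + m) = u t ^ (k + m) * u t := by ring
      have a4 : u t ^ (k + 2 + (m + 1)) = u t ^ (k + m) * u t ^ 3 := by ring
      have a5 : u t ^ (k + 2 + m) = u t ^ (k + m) * u t ^ 2 := by ring
      rw [a1, a2, a3, a4, a5]
      linear_combination (u t ^ (k + m) * u t ^ 2 * b m * (k + m + 1) * (2 * (k + m + 2) - (2 * k + 3))) * huu
    rw [Finset.sum_div, Finset.mul_sum, Finset.mul_sum, Finset.sum_div, ← Finset.sum_sub_distrib,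
      ← Finset.sum_add_distrib, Finset.sum_congr rfl (fun m _ => key2 m), Finset.sum_add_distrib]
    have hz : ∑ m ∈ Finset.range (k + 1), ((n : ℝ) ^ 2 - m ^ 2 - (k + m + 1) ^ 2) * b m * u t ^ (k + 2 + m)
      = ∑ m ∈ Finset.range (k + 2), ((n : ℝ) ^ 2 - m ^ 2 - (k + m + 1) ^ 2) * b m * u t ^ (k + 2 + m) := by
      rw [Finset.sum_range_succ _ (k + 1), hb, bco_zero _ k (k + 1) (by omega)]
      simp
    rw [hz, Finset.sum_range_succ' _ (k + 1), Finset.sum_range_succ' _ (k + 1), ← add_assoc,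
      ← Finset.sum_add_distrib]
    congr 1
    · apply Finset.sum_congr rfl
      intro m _
      simp only [bco]
      push_cast
      ring
    · simp only [bco]
      push_cast
      ring

end seqs

lemma chebM_eq (n k : ℕ) (t : ℝ) : chebM n k t = Tq n k t ^ 2 + Sq n k t ^ 2 := rfl
lemma rolle_step {f f' : ℝ → ℝ} (hf : ∀ t ∈ Set.Ioo (-1 : ℝ) 1, HasDerivAt f (f' t) t)
    (Z : Finset ℝ) (hZ : ∀ z ∈ Z, z ∈ Set.Ioo (-1 : ℝ) 1 ∧ f z = 0) :
    ∃ Z' : Finset ℝ, (∀ z ∈ Z', z ∈ Set.Ioo (-1 : ℝ) 1 ∧ f' z = 0) ∧ Disjoint Z' Z ∧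
      Z.card ≤ Z'.card + 1 := by
  have h : ∀ p : ℝ × ℝ, ∃ c, p.1 ∈ Z → p.2 ∈ Z → p.1 < p.2 → p.1 < c ∧ c < p.2 ∧ f' c = 0 := by
    rintro ⟨x, y⟩
    by_cases hh : x ∈ Z ∧ y ∈ Z ∧ x < y
    · obtain ⟨hx, hy, hxy⟩ := hh
      have hsub : ∀ t ∈ Set.Icc x y, t ∈ Set.Ioo (-1 : ℝ) 1 := fun t ht =>
        ⟨lt_of_lt_of_le (hZ x hx).1.1 ht.1, lt_of_le_of_lt ht.2 (hZ y hy).1.2⟩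
      obtain ⟨c, hc, hc'⟩ := exists_hasDerivAt_eq_zero (f := f) (f' := f') hxy
        (fun t ht => (hf t (hsub t ht)).continuousAt.continuousWithinAt)
        (by rw [(hZ x hx).2, (hZ y hy).2])
        (fun t ht => hf t (hsub t ⟨ht.1.le, ht.2.le⟩))
      exact ⟨c, fun _ _ _ => ⟨hc.1, hc.2, hc'⟩⟩
    · exact ⟨0, fun a b c => absurd ⟨a, b, c⟩ hh⟩
  choose c hc using h
  classical
  set W := ((Z ×ˢ Z).filter (fun p => p.1 < p.2)).image c with hW
  have hWp : ∀ w ∈ W, w ∈ Set.Ioo (-1 : ℝ) 1 ∧ f' w = 0 := by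
    intro w hw
    simp only [hW, Finset.mem_image, Finset.mem_filter, Finset.mem_product] at hw
    obtain ⟨p, ⟨⟨h1, h2⟩, h3⟩, rfl⟩ := hw
    obtain ⟨a, b, d⟩ := hc p h1 h2 h3
    exact ⟨⟨(hZ _ h1).1.1.trans a, b.trans (hZ _ h2).1.2⟩, d⟩
  refine ⟨W \ Z, fun z hz => hWp z (Finset.mem_sdiff.1 hz).1, Finset.sdiff_disjoint, ?_⟩
  apply Finset.card_le_sdiff_of_interleaved
  intro x hx y hy hxy _
  refine ⟨c (x, y), ?_, (hc (x, y) hx hy hxy).1, (hc (x, y) hx hy hxy).2.1⟩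
  simp only [hW, Finset.mem_image, Finset.mem_filter, Finset.mem_product]
  exact ⟨(x, y), ⟨⟨hx, hy⟩, hxy⟩, rfl⟩

lemma rolle_iter {g : ℕ → ℝ → ℝ} (hg : ∀ j, ∀ t ∈ Set.Ioo (-1 : ℝ) 1, HasDerivAt (g j) (g (j + 1) t) t)
    (j i : ℕ) (N : ℕ) (Z : Finset ℝ) (hZ : ∀ z ∈ Z, z ∈ Set.Ioo (-1 : ℝ) 1 ∧ g j z = 0)
    (hN : N + i ≤ Z.card) :
    ∃ Z' : Finset ℝ, (∀ z ∈ Z', z ∈ Set.Ioo (-1 : ℝ) 1 ∧ g (j + i) z = 0) ∧ N ≤ Z'.card := by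
  induction i generalizing N with
  | zero => exact ⟨Z, hZ, hN⟩
  | succ i ih =>
    obtain ⟨Z1, h1, h2⟩ := ih (N + 1) (by omega)
    obtain ⟨Z2, h3, _, h4⟩ := rolle_step (hg (j + i)) Z1 h1
    exact ⟨Z2, h3, by omega⟩

/-- if `g 1` has `N` zeros and `g k` a double zero, then `g e` has a zero, `e = N + 1` -/
lemma rolle_double {g : ℕ → ℝ → ℝ} (hg : ∀ j, ∀ t ∈ Set.Ioo (-1 : ℝ) 1, HasDerivAt (g j) (g (j + 1) t) t)
    (k N : ℕ) (hk : 1 ≤ k) (hkN : k ≤ N + 1) (Z : Finset ℝ) (hZ : ∀ z ∈ Z, z ∈ Set.Ioo (-1 : ℝ) 1 ∧ g 1 z = 0)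
    (hN : N ≤ Z.card) (x : ℝ) (hx : x ∈ Set.Ioo (-1 : ℝ) 1) (h0 : g k x = 0) (h1 : g (k + 1) x = 0) :
    ∃ z ∈ Set.Ioo (-1 : ℝ) 1, g (N + 1) z = 0 := by
  rcases eq_or_lt_of_le hkN with h | h
  · exact ⟨x, hx, h ▸ h0⟩
  obtain ⟨Z1, a1, a2⟩ := rolle_iter hg 1 (k - 1) (N + 1 - k) Z hZ (by omega)
  rw [show 1 + (k - 1) = k by omega] at a1
  classical
  obtain ⟨Z2, b1, b2, b3⟩ := rolle_step (hg k) (insert x Z1) (by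
    intro z hz
    rcases Finset.mem_insert.1 hz with rfl | hz
    · exact ⟨hx, h0⟩
    · exact a1 z hz)
  have hxn : x ∉ Z2 := fun hh => Finset.disjoint_left.1 b2 hh (Finset.mem_insert_self _ _)
  have hcard : (insert x Z2).card = Z2.card + 1 := Finset.card_insert_of_notMem hxn
  have hc2 : Z1.card ≤ (insert x Z1).card := Finset.card_le_card (Finset.subset_insert _ _)
  obtain ⟨Z3, c1, c2⟩ := rolle_iter hg (k + 1) (N - k) 1 (insert x Z2) (by
    intro z hz
    rcases Finset.mem_insert.1 hz with rfl | hz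
    · exact ⟨hx, h1⟩
    · exact b1 z hz) (by omega)
  rw [show k + 1 + (N - k) = N + 1 by omega] at c1
  obtain ⟨z, hz⟩ := Finset.card_pos.1 (by omega : 0 < Z3.card)
  exact ⟨z, c1 z hz⟩

/-- alternating signs give zeros -/
lemma alt_zeros {h : ℝ → ℝ} (hc : Continuous h) (N : ℕ) (e : ℕ → ℝ)
    (he : ∀ i < N, e i < e (i + 1)) (hs : ∀ i ≤ N, 0 < (-1 : ℝ) ^ i * h (e i)) :
    ∃ Z : Finset ℝ, (∀ z ∈ Z, e 0 < z ∧ z < e N ∧ h z = 0) ∧ Z.card = N := by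
  induction N with
  | zero => exact ⟨∅, by simp, rfl⟩
  | succ N ih =>
    obtain ⟨Z, hZ, hcard⟩ := ih (fun i hi => he i (by omega)) (fun i hi => hs i (by omega))
    have hlt := he N (by omega)
    have h0 : e 0 ≤ e N := by
      clear ih hZ hs hlt
      have : ∀ j ≤ N, e 0 ≤ e j := by
        intro j hj
        induction j with
        | zero => exact le_rfl
        | succ j ihj => exact (ihj (by omega)).trans (he j (by omega)).le
      exact this N le_rfl
    have s1 := hs N (by omega)
    have s2 := hs (N + 1) le_rfl
    have hc' : Continuous (fun t => (-1 : ℝ) ^ N * h t) := by fun_prop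
    obtain ⟨z, hz, hz0⟩ := intermediate_value_Ioo' hlt.le hc'.continuousOn
      (show (0 : ℝ) ∈ Set.Ioo _ _ from ⟨by rw [pow_succ] at s2; linarith, s1⟩)
    have hz0 : h z = 0 := by
      rcases mul_eq_zero.1 hz0 with h | h
      · exact absurd h (pow_ne_zero _ (by norm_num))
      · exact h
    have hzn : z ∉ Z := fun hh => by linarith [(hZ z hh).2.1, hz.1]
    classical
    refine ⟨insert z Z, ?_, by rw [Finset.card_insert_of_notMem hzn, hcard]⟩
    intro w hw
    rcases Finset.mem_insert.1 hw with rfl | hw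
    · exact ⟨lt_of_le_of_lt h0 hz.1, hz.2, hz0⟩
    · exact ⟨(hZ w hw).1, (hZ w hw).2.1.trans hlt, (hZ w hw).2.2⟩
lemma poly_deriv (p : Polynomial ℝ) (j : ℕ) (t : ℝ) :
    HasDerivAt (fun t => (Polynomial.derivative^[j] p).eval t)
      ((Polynomial.derivative^[j + 1] p).eval t) t := by
  rw [Function.iterate_succ_apply']
  exact Polynomial.hasDerivAt _ t

lemma Tq_poly (n j : ℕ) : ∀ t ∈ Set.Ioo (-1 : ℝ) 1,
    Tq n j t = (Polynomial.derivative^[j] (Polynomial.Chebyshev.T ℝ n)).eval t := by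
  induction j with
  | zero =>
    intro t ht
    have := Polynomial.Chebyshev.T_real_cos (Real.arccos t) n
    rw [Real.cos_arccos ht.1.le ht.2.le] at this
    rw [Tq_zero]
    simpa using this.symm
  | succ j ih =>
    intro t ht
    refine (Tq_deriv n j ht).unique ((poly_deriv _ j t).congr_of_eventuallyEq ?_)
    filter_upwards [isOpen_Ioo.mem_nhds ht] with s hs
    exact ih s hs

lemma Tq_top (n : ℕ) {t : ℝ} (ht : t ∈ Set.Ioo (-1 : ℝ) 1) : Tq n (n + 1) t = 0 := by
  rw [Tq_poly n _ t ht, Polynomial.iterate_derivative_eq_zero]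
  · simp
  · rw [Polynomial.Chebyshev.natDegree_T]; simp

lemma Sq_top (n : ℕ) (hn : 1 ≤ n) {t : ℝ} (ht : t ∈ Set.Ioo (-1 : ℝ) 1) : Sq n (n + 1) t ≠ 0 := by
  have h := M_formula n n t ht
  intro h0
  rw [Tq_top n ht, h0, Finset.sum_range_succ, Finset.sum_eq_zero] at h
  · have h1 := bco_diag_pos ((n : ℝ) ^ 2) (by positivity) n
    have h2 := w_pos ht
    have : 0 < bco ((n : ℝ) ^ 2) n n * (1 - t ^ 2)⁻¹ ^ (n + 1 + n) := by positivity
    linarith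
  · intro m hm
    rw [bco_top n hn m (Finset.mem_range.1 hm)]; simp

section tangent

variable (n : ℕ) (hn : 1 ≤ n) (p : Polynomial ℝ) (α : ℝ)

noncomputable def Gd (θ : ℝ) : ℝ :=
  n * Real.sin (n * θ - α) - Real.sin θ * p.derivative.eval (Real.cos θ)

lemma Gd_cont : Continuous (Gd n p α) := by
  unfold Gd
  have : Continuous (fun θ => p.derivative.eval (Real.cos θ)) :=
    p.derivative.continuous.comp Real.continuous_cos
  fun_prop

include hn in
lemma exists_xi (hp : ∀ t ∈ Set.Icc (-1 : ℝ) 1, |p.eval t| < 1) (j : ℕ) :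
    ∃ ξ, (α + j * Real.pi) / n < ξ ∧ ξ < (α + (j + 1) * Real.pi) / n ∧
      0 < (-1 : ℝ) ^ j * Gd n p α ξ := by
  have hn0 : (0 : ℝ) < n := by exact_mod_cast hn
  set G : ℝ → ℝ := fun θ => p.eval (Real.cos θ) - Real.cos (n * θ - α) with hG
  have hGd : ∀ θ, HasDerivAt G (Gd n p α θ) θ := by
    intro θ
    have h1 := (p.hasDerivAt (Real.cos θ)).comp θ (Real.hasDerivAt_cos θ)
    have h2 : HasDerivAt (fun θ : ℝ => n * θ - α) n θ := by
      simpa using ((hasDerivAt_id θ).const_mul (n : ℝ)).sub_const α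
    refine (h1.sub h2.cos).congr_deriv ?_
    simp only [Gd]; ring
  have hlt : (α + j * Real.pi) / n < (α + (j + 1) * Real.pi) / n := by
    apply div_lt_div_of_pos_right _ hn0
    nlinarith [Real.pi_pos]
  obtain ⟨ξ, hξ, he⟩ := exists_hasDerivAt_eq_slope G (Gd n p α) hlt
    (fun t _ => (hGd t).continuousAt.continuousWithinAt) (fun t _ => hGd t)
  refine ⟨ξ, hξ.1, hξ.2, ?_⟩
  rw [he, ← mul_div_assoc]
  apply div_pos _ (by linarith)
  have c1 : Real.cos (n * ((α + j * Real.pi) / n) - α) = (-1) ^ j := by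
    rw [mul_div_cancel₀ _ hn0.ne', add_sub_cancel_left, Real.cos_nat_mul_pi]
  have c2 : Real.cos (n * ((α + (j + 1) * Real.pi) / n) - α) = (-1) ^ (j + 1) := by
    rw [mul_div_cancel₀ _ hn0.ne', add_sub_cancel_left]
    exact_mod_cast Real.cos_nat_mul_pi (j + 1)
  have d1 := hp _ (Real.cos_mem_Icc ((α + j * Real.pi) / n))
  have d2 := hp _ (Real.cos_mem_Icc ((α + (j + 1) * Real.pi) / n))
  simp only [hG, c1, c2]
  rw [abs_lt] at d1 d2
  rcases neg_one_pow_eq_or ℝ j with h | h <;> rw [pow_succ, h] <;> linarith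

noncomputable def gs (j : ℕ) (t : ℝ) : ℝ :=
  (Polynomial.derivative^[j] p).eval t - (Real.cos α * Tq n j t + Real.sin α * Sq n j t)

lemma gs_deriv (j : ℕ) : ∀ t ∈ Set.Ioo (-1 : ℝ) 1,
    HasDerivAt (gs n p α j) (gs n p α (j + 1) t) t := fun t ht =>
  (poly_deriv p j t).sub (((Tq_deriv n j ht).const_mul _).add ((Sq_deriv n j ht).const_mul _))

lemma gs_one {θ : ℝ} (h0 : 0 < θ) (h1 : θ < Real.pi) (hz : Gd n p α θ = 0) :
    Real.cos θ ∈ Set.Ioo (-1 : ℝ) 1 ∧ gs n p α 1 (Real.cos θ) = 0 := by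
  have hs := Real.sin_pos_of_pos_of_lt_pi h0 h1
  have hmem : Real.cos θ ∈ Set.Ioo (-1 : ℝ) 1 := by
    constructor <;> nlinarith [Real.sin_sq_add_cos_sq θ]
  refine ⟨hmem, ?_⟩
  have hsq : Real.sqrt (1 - Real.cos θ ^ 2) = Real.sin θ := by
    rw [← Real.sin_sq, Real.sqrt_sq hs.le]
  simp only [gs, Tq_one n hmem, Sq_one n hmem, Tq_zero, Sq_zero, Real.arccos_cos h0.le h1.le, hsq,
    Function.iterate_one]
  simp only [Gd, Real.sin_sub] at hz
  field_simp
  linarith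

lemma gs_zeros (Z : Finset ℝ) (hZ : ∀ z ∈ Z, 0 < z ∧ z < Real.pi ∧ Gd n p α z = 0) :
    ∃ Z' : Finset ℝ, (∀ z ∈ Z', z ∈ Set.Ioo (-1 : ℝ) 1 ∧ gs n p α 1 z = 0) ∧ Z'.card = Z.card := by
  classical
  refine ⟨Z.image Real.cos, ?_, ?_⟩
  · intro z hz
    obtain ⟨θ, hθ, rfl⟩ := Finset.mem_image.1 hz
    obtain ⟨a, b, c⟩ := hZ θ hθ
    exact gs_one n p α a b c
  · apply Finset.card_image_of_injOn
    intro a ha b hb hab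
    exact Real.injOn_cos ⟨(hZ a ha).1.le, (hZ a ha).2.1.le⟩ ⟨(hZ b hb).1.le, (hZ b hb).2.1.le⟩ hab

include hn in
lemma no_tangent_pos (hdeg : p.natDegree ≤ n) (hp : ∀ t ∈ Set.Icc (-1 : ℝ) 1, |p.eval t| < 1)
    (hα0 : 0 < α) (hαπ : α < Real.pi) (k : ℕ) (hk : 1 ≤ k) (hkn : k ≤ n) (x : ℝ)
    (hx : x ∈ Set.Ioo (-1 : ℝ) 1) (h0 : gs n p α k x = 0) (h1 : gs n p α (k + 1) x = 0) : False := by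
  have hn0 : (0 : ℝ) < n := by exact_mod_cast hn
  have hsα := Real.sin_pos_of_pos_of_lt_pi hα0 hαπ
  choose ξ hξ1 hξ2 hξ3 using exists_xi n hn p α hp
  set e : ℕ → ℝ := fun i => if i = 0 then 0 else if i = n then Real.pi else ξ (i - 1) with he
  obtain ⟨Z, hZ, hcard⟩ := alt_zeros (h := fun θ => - Gd n p α θ) (Gd_cont n p α).neg n e (by
    intro i hi
    simp only [he]
    rcases i with _ | i
    · rcases eq_or_ne 1 n with h | h
      · simp [h]
        rw [if_neg (by omega)]; exact Real.pi_pos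
      · simp [h]
        have := hξ1 0
        have h2 : 0 < (α + (0 : ℕ) * Real.pi) / n := by simp; positivity
        linarith
    · rw [if_neg (by omega), if_neg (by omega), if_neg (by omega)]
      simp only [Nat.add_sub_cancel]
      split_ifs with h
      · have := hξ2 i
        have h3 : (α + (i + 1) * Real.pi) / n < Real.pi := by
          rw [div_lt_iff₀ hn0, ← h]; push_cast; linarith
        linarith
      · have := hξ2 i
        have h3 := hξ1 (i + 1)
        push_cast at h3
        linarith) (by
    intro i hi
    simp only [he]
    rcases i with _ | i
    · simp [Gd]; positivity
    · rw [if_neg (by omega)]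
      split_ifs with h
      · have hs : Real.sin (n * Real.pi - α) = - ((-1) ^ n * Real.sin α) := Real.sin_nat_mul_pi_sub α n
        simp only [Gd, Real.sin_pi, hs, h]
        rcases neg_one_pow_eq_or ℝ n with h | h <;> rw [h] <;> simp <;> positivity
      · simp only [Nat.add_sub_cancel]
        have := hξ3 i
        rw [pow_succ]; linarith)
  have e0 : e 0 = 0 := by simp [he]
  have en : e n = Real.pi := by simp only [he]; rw [if_neg (by omega)]; simp
  obtain ⟨Z', hZ', hcard'⟩ := gs_zeros n p α Z (by
    intro z hz
    obtain ⟨a, b, c⟩ := hZ z hz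
    exact ⟨by linarith, by linarith, by linarith⟩)
  obtain ⟨z, hz, hz0⟩ := rolle_double (gs_deriv n p α) k n hk (by omega) Z' hZ' (by omega) x hx h0 h1
  rw [gs, Polynomial.iterate_derivative_eq_zero (by omega), Tq_top n hz] at hz0
  simp at hz0
  rcases hz0 with h | h
  · linarith
  · exact Sq_top n hn hz h

include hn in
lemma no_tangent_zero (hdeg : p.natDegree ≤ n) (hp : ∀ t ∈ Set.Icc (-1 : ℝ) 1, |p.eval t| < 1)
    (k : ℕ) (hk : 1 ≤ k) (hkn : k ≤ n) (x : ℝ)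
    (hx : x ∈ Set.Ioo (-1 : ℝ) 1) (h0 : gs n p 0 k x = 0) (h1 : gs n p 0 (k + 1) x = 0) : False := by
  have hn0 : (0 : ℝ) < n := by exact_mod_cast hn
  choose ξ hξ1 hξ2 hξ3 using exists_xi n hn p 0 hp
  obtain ⟨Z, hZ, hcard⟩ := alt_zeros (Gd_cont n p 0) (n - 1) ξ (by
    intro i hi
    have := hξ2 i
    have h3 := hξ1 (i + 1)
    push_cast at h3
    linarith) (fun i _ => hξ3 i)
  have hξ0 : 0 < ξ 0 := by simpa using hξ1 0
  have hle : ∀ j < n, ξ j < Real.pi := by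
    intro j hj
    refine (hξ2 j).trans_le ?_
    rw [div_le_iff₀ hn0]
    have : (j : ℝ) + 1 ≤ n := by exact_mod_cast hj
    nlinarith [Real.pi_pos]
  obtain ⟨Z', hZ', hcard'⟩ := gs_zeros n p 0 Z (by
    intro z hz
    obtain ⟨a, b, c⟩ := hZ z hz
    exact ⟨by linarith, b.trans (hle _ (by omega)), c⟩)
  set q := p - Polynomial.Chebyshev.T ℝ n with hq
  have hgq : ∀ j, ∀ t ∈ Set.Ioo (-1 : ℝ) 1, gs n p 0 j t = (Polynomial.derivative^[j] q).eval t := by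
    intro j t ht
    rw [gs, Tq_poly n j t ht, hq, Polynomial.iterate_derivative_sub]
    simp
  have hqdeg : q.natDegree ≤ n := by
    refine (Polynomial.natDegree_sub_le _ _).trans (max_le hdeg ?_)
    rw [Polynomial.Chebyshev.natDegree_T]; simp
  obtain ⟨z, hz, hz0⟩ := rolle_double (gs_deriv n p 0) k (n - 1) hk (by omega) Z' hZ' (by omega) x hx h0 h1
  rw [show n - 1 + 1 = n by omega, hgq n z hz] at hz0
  have hd0 : (Polynomial.derivative^[n] q).natDegree = 0 := by
    have := Polynomial.natDegree_iterate_derivative q n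
    omega
  rw [Polynomial.eq_C_of_natDegree_eq_zero hd0, Polynomial.eval_C, Polynomial.coeff_iterate_derivative] at hz0
  have hcn : q.coeff n = 0 := by
    simp only [zero_add, Nat.descFactorial_self] at hz0
    rcases smul_eq_zero.1 hz0 with h | h
    · exact absurd h (Nat.factorial_ne_zero n)
    · exact h
  have hqlt : q.natDegree ≤ n - 1 := by
    by_contra hc
    have : q.natDegree = n := by omega
    have h2 : q.leadingCoeff = 0 := by rw [Polynomial.leadingCoeff, this, hcn]
    rw [Polynomial.leadingCoeff_eq_zero] at h2
    rw [h2] at this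
    simp at this
    omega
  have hq' : Polynomial.derivative q = 0 := by
    by_cases hc : q.natDegree = 0
    · rw [Polynomial.eq_C_of_natDegree_eq_zero hc, Polynomial.derivative_C]
    · have hlt := Polynomial.natDegree_derivative_lt hc
      apply Polynomial.eq_zero_of_natDegree_lt_card_of_eval_eq_zero' _ Z'
      · intro i hi
        have := hgq 1 i (hZ' i hi).1
        rw [(hZ' i hi).2] at this
        simpa using this.symm
      · omega
  have hpos := hξ3 0
  have hξπ := hle 0 (by omega)
  have hs := Real.sin_pos_of_pos_of_lt_pi hξ0 hξπ
  have hmem : Real.cos (ξ 0) ∈ Set.Ioo (-1 : ℝ) 1 := by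
    constructor <;> nlinarith [Real.sin_sq_add_cos_sq (ξ 0)]
  have hg1 := hgq 1 _ hmem
  have hsq : Real.sqrt (1 - Real.cos (ξ 0) ^ 2) = Real.sin (ξ 0) := by
    rw [← Real.sin_sq, Real.sqrt_sq hs.le]
  simp only [Function.iterate_one, hq', gs, Tq_one n hmem, Sq_zero, Real.arccos_cos hξ0.le hξπ.le, hsq] at hg1
  simp only [pow_zero, one_mul, Gd, sub_zero] at hpos
  simp at hg1
  field_simp at hg1
  linarith

end tangent
lemma exists_angle (c s : ℝ) (h : c ^ 2 + s ^ 2 = 1) (hs : 0 < s ∨ (s = 0 ∧ c = 1)) :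
    ∃ α, 0 ≤ α ∧ α < Real.pi ∧ Real.cos α = c ∧ Real.sin α = s := by
  have hc : c ^ 2 ≤ 1 := by nlinarith
  have hs0 : 0 ≤ s := by rcases hs with h | h; exacts [h.le, h.1.ge]
  have hc1 : -1 < c := by
    rcases hs with h1 | h1
    · nlinarith
    · linarith
  have hc2 : c ≤ 1 := by nlinarith
  refine ⟨Real.arccos c, Real.arccos_nonneg c, ?_, Real.cos_arccos hc1.le hc2, ?_⟩
  · refine lt_of_le_of_ne (Real.arccos_le_pi c) fun h => ?_
    rw [Real.arccos_eq_pi] at h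
    linarith
  · rw [Real.sin_arccos, show 1 - c ^ 2 = s ^ 2 by linarith, Real.sqrt_sq hs0]

lemma no_touch (n : ℕ) (hn : 1 ≤ n) (p : Polynomial ℝ) (hdeg : p.natDegree ≤ n)
    (hp : ∀ t ∈ Set.Icc (-1 : ℝ) 1, |p.eval t| < 1)
    (k : ℕ) (hk : 1 ≤ k) (hkn : k ≤ n) (x : ℝ) (hx : x ∈ Set.Ioo (-1 : ℝ) 1) (c s : ℝ)
    (hcs : c ^ 2 + s ^ 2 = 1)
    (h0 : (Polynomial.derivative^[k] p).eval x = c * Tq n k x + s * Sq n k x)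
    (h1 : (Polynomial.derivative^[k + 1] p).eval x = c * Tq n (k + 1) x + s * Sq n (k + 1) x) :
    False := by
  have main : ∀ (p : Polynomial ℝ) (c s : ℝ), p.natDegree ≤ n →
      (∀ t ∈ Set.Icc (-1 : ℝ) 1, |p.eval t| < 1) → c ^ 2 + s ^ 2 = 1 →
      (Polynomial.derivative^[k] p).eval x = c * Tq n k x + s * Sq n k x →
      (Polynomial.derivative^[k + 1] p).eval x = c * Tq n (k + 1) x + s * Sq n (k + 1) x →
      (0 < s ∨ (s = 0 ∧ c = 1)) → False := by
    intro p c s hdeg hp hcs h0 h1 hh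
    obtain ⟨α, a0, a1, rfl, rfl⟩ := exists_angle c s hcs hh
    rcases a0.eq_or_lt with rfl | a0
    · exact no_tangent_zero n hn p hdeg hp k hk hkn x hx (by rw [gs, h0]; ring) (by rw [gs, h1]; ring)
    · exact no_tangent_pos n hn p α hdeg hp a0 a1 k hk hkn x hx (by rw [gs, h0]; ring)
        (by rw [gs, h1]; ring)
  by_cases hh : 0 < s ∨ (s = 0 ∧ c = 1)
  · exact main p c s hdeg hp hcs h0 h1 hh
  · refine main (-p) (-c) (-s) (by simpa using hdeg) (by simpa using hp) (by linarith)
      (by rw [Polynomial.iterate_derivative_neg, Polynomial.eval_neg, h0]; ring)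
      (by rw [Polynomial.iterate_derivative_neg, Polynomial.eval_neg, h1]; ring) ?_
    push Not at hh
    rcases hh.1.lt_or_eq with h | h
    · left; linarith
    · right
      have h2 := hh.2 h
      refine ⟨by linarith, ?_⟩
      rw [h] at hcs
      have : (c - 1) * (c + 1) = 0 := by linarith
      rcases mul_eq_zero.1 this with h3 | h3
      · exact absurd (by linarith) h2
      · linarith

theorem schaeffer_duffin (n k : ℕ) (hk1 : 1 ≤ k) (hkn : k ≤ n) (p : Polynomial ℝ)
    (hdeg : p.natDegree ≤ n) (hp : ∀ t ∈ Set.Icc (-1 : ℝ) 1, |p.eval t| ≤ 1) :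
    ∀ x0 ∈ Set.Ioo (-1 : ℝ) 1, (Polynomial.derivative^[k] p).eval x0 ^ 2 ≤ chebM n k x0 := by
  intro x0 hx0
  by_contra hcon
  push Not at hcon
  obtain ⟨k, rfl⟩ : ∃ j, k = j + 1 := ⟨k - 1, by omega⟩
  have hn : 1 ≤ n := by omega
  set b := bco ((n : ℝ) ^ 2) k with hb
  have hb0 : ∀ m, 0 ≤ b m := bco_nonneg n hn k hkn
  have hbk : 0 < b k := bco_diag_pos _ (by positivity) k
  set V : ℝ → ℝ := fun t => ∑ m ∈ Finset.range (k + 1), b m * (1 - t ^ 2) ^ (k - m) with hV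
  have hVc : Continuous V := by simp only [hV]; fun_prop
  have hVpos : ∀ t ∈ Set.Icc (-1 : ℝ) 1, 0 < V t := by
    intro t ht
    have hw : 0 ≤ 1 - t ^ 2 := by nlinarith [ht.1, ht.2]
    simp only [hV, Finset.sum_range_succ]
    have : 0 ≤ ∑ m ∈ Finset.range k, b m * (1 - t ^ 2) ^ (k - m) :=
      Finset.sum_nonneg fun m _ => mul_nonneg (hb0 m) (pow_nonneg hw _)
    simp
    linarith
  have hM : ∀ t ∈ Set.Ioo (-1 : ℝ) 1, chebM n (k + 1) t * (1 - t ^ 2) ^ (2 * k + 1) = V t := by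
    intro t ht
    have hw := w_pos ht
    rw [chebM_eq, M_formula n k t ht, Finset.sum_mul]
    apply Finset.sum_congr rfl
    intro m hm
    have hm := Finset.mem_range.1 hm
    rw [show 2 * k + 1 = (k + 1 + m) + (k - m) by omega, pow_add _ (k + 1 + m), inv_pow]
    field_simp
    rfl
  set f : ℝ → ℝ := fun t => (Polynomial.derivative^[k + 1] p).eval t with hf
  have hfc : Continuous f := Polynomial.continuous _
  set R : ℝ → ℝ := fun t => f t ^ 2 * (1 - t ^ 2) ^ (2 * k + 1) / V t with hR
  have hRc : ContinuousOn R (Set.Icc (-1) 1) := by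
    apply ContinuousOn.div _ hVc.continuousOn (fun t ht => (hVpos t ht).ne')
    fun_prop
  have hRM : ∀ t ∈ Set.Ioo (-1 : ℝ) 1, 0 < chebM n (k + 1) t ∧ f t ^ 2 = R t * chebM n (k + 1) t := by
    intro t ht
    have hv := hVpos t ⟨ht.1.le, ht.2.le⟩
    have hw := pow_pos (w_pos ht) (2 * k + 1)
    have h := hM t ht
    refine ⟨pos_of_mul_pos_left (h ▸ hv) hw.le, ?_⟩
    simp only [hR]
    rw [div_mul_eq_mul_div, eq_div_iff hv.ne', ← h]
    ring
  obtain ⟨x, hx, hmax⟩ := isCompact_Icc.exists_isMaxOn ⟨0, by norm_num⟩ hRc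
  have hR0 : 1 < R x0 := by
    obtain ⟨h1, h2⟩ := hRM x0 hx0
    rw [show (Polynomial.derivative^[k + 1] p).eval x0 = f x0 from rfl, h2] at hcon
    by_contra hc
    push Not at hc
    nlinarith
  have hRx : 1 < R x := hR0.trans_le (hmax ⟨hx0.1.le, hx0.2.le⟩)
  have hx' : x ∈ Set.Ioo (-1 : ℝ) 1 := by
    have hne : 1 - x ^ 2 ≠ 0 := by
      intro h
      simp only [hR, h] at hRx
      norm_num at hRx
    constructor
    · refine lt_of_le_of_ne hx.1 fun h => hne (by rw [← h]; norm_num)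
    · refine lt_of_le_of_ne hx.2 fun h => hne (by rw [h]; norm_num)
  set l : ℝ := (Real.sqrt (R x))⁻¹ with hl
  have hsq : 1 < Real.sqrt (R x) := by
    rw [Real.lt_sqrt (by norm_num)]; simpa using hRx
  have hl0 : 0 < l := by positivity
  have hl1 : l < 1 := inv_lt_one_of_one_lt₀ hsq
  have hl2 : l ^ 2 * R x = 1 := by
    rw [hl, inv_pow, Real.sq_sqrt (by linarith)]
    field_simp
  have hle : ∀ t ∈ Set.Ioo (-1 : ℝ) 1, (l * f t) ^ 2 ≤ chebM n (k + 1) t := by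
    intro t ht
    obtain ⟨h1, h2⟩ := hRM t ht
    have h3 : R t ≤ R x := hmax ⟨ht.1.le, ht.2.le⟩
    rw [mul_pow, h2, ← mul_assoc]
    have : l ^ 2 * R t ≤ 1 := by
      rw [← hl2]; exact mul_le_mul_of_nonneg_left h3 (by positivity)
    nlinarith
  have heq : (l * f x) ^ 2 = chebM n (k + 1) x := by
    rw [mul_pow, (hRM x hx').2, ← mul_assoc, hl2, one_mul]
  have hMx := (hRM x hx').1
  set f1 : ℝ := (Polynomial.derivative^[k + 2] p).eval x with hf1
  have hder : 2 * (Tq n (k + 1) x * Tq n (k + 2) x + Sq n (k + 1) x * Sq n (k + 2) x)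
      - 2 * (l * f x) * (l * f1) = 0 := by
    have hd : HasDerivAt (fun t => Tq n (k + 1) t ^ 2 + Sq n (k + 1) t ^ 2 - (l * f t) ^ 2)
        (2 * (Tq n (k + 1) x * Tq n (k + 2) x + Sq n (k + 1) x * Sq n (k + 2) x)
      - 2 * (l * f x) * (l * f1)) x := by
      refine ((((Tq_deriv n (k + 1) hx').pow 2).add ((Sq_deriv n (k + 1) hx').pow 2)).sub
        (((poly_deriv p (k + 1) x).const_mul l).pow 2)).congr_deriv ?_
      simp only [hf, hf1]
      push_cast
      ring
    refine IsLocalMin.hasDerivAt_eq_zero ?_ hd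
    filter_upwards [isOpen_Ioo.mem_nhds hx'] with t ht
    have h1 := hle t ht
    rw [chebM_eq] at h1 heq
    rw [heq]
    linarith
  have hq0 : l * f x ≠ 0 := by
    intro h; rw [h] at heq; norm_num at heq; linarith
  rw [chebM_eq] at heq
  refine no_touch n hn (Polynomial.C l * p) ((Polynomial.natDegree_C_mul_le _ _).trans hdeg) ?_ (k + 1) hk1 hkn x hx'
    (Tq n (k + 1) x / (l * f x)) (Sq n (k + 1) x / (l * f x)) ?_ ?_ ?_
  · intro t ht
    rw [Polynomial.eval_mul, Polynomial.eval_C, abs_mul, abs_of_pos hl0]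
    have := hp t ht
    have h2 := abs_nonneg (p.eval t)
    nlinarith
  · rw [div_pow, div_pow, ← add_div, ← heq, div_self (pow_ne_zero 2 hq0)]
  · rw [Polynomial.iterate_derivative_C_mul, Polynomial.eval_mul, Polynomial.eval_C]
    change l * f x = _
    rw [div_mul_eq_mul_div, div_mul_eq_mul_div, ← add_div, eq_div_iff hq0]
    linarith
  · rw [Polynomial.iterate_derivative_C_mul, Polynomial.eval_mul, Polynomial.eval_C]
    change l * f1 = _
    rw [div_mul_eq_mul_div, div_mul_eq_mul_div, ← add_div, eq_div_iff hq0]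
    linarith
lemma upd_mem_aux {k : ℕ} {E : Type*} [NormedAddCommGroup E] (y : Fin k → E) (i j : Fin k)
    (hij : i ≠ j) (p q : E) :
    ∑ l, Function.update (Function.update y i p) j q l = p + q + (∑ l, y l - y i - y j) := by
  have h1 : ∀ (z : Fin k → E) (j : Fin k) (q : E), ∑ l, Function.update z j q l = q + (∑ l, z l - z j) := by
    intro z j q
    rw [Finset.sum_update_of_mem (Finset.mem_univ j), Finset.sdiff_singleton_eq_erase,
      Finset.sum_erase_eq_sub (Finset.mem_univ j)]
  rw [h1, h1, Function.update_of_ne hij.symm]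
  abel

lemma banach_fin {k : ℕ} (hk : 1 ≤ k) {E : Type*} [NormedAddCommGroup E] [InnerProductSpace ℝ E]
    [FiniteDimensional ℝ E] (A : ContinuousMultilinearMap ℝ (fun _ : Fin k => E) ℝ)
    (hsym : ∀ (v : Fin k → E) (σ : Equiv.Perm (Fin k)), A (v ∘ σ) = A v) (C : ℝ)
    (hC : ∀ y, ‖y‖ = 1 → |A (fun _ => y)| ≤ C) (v : Fin k → E) (hv : ∀ i, ‖v i‖ = 1) :
    |A v| ≤ C := by
  set K : Set (Fin k → E) := Set.pi Set.univ (fun _ => sphere (0 : E) 1) with hK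
  have memK : ∀ y, y ∈ K ↔ ∀ i, ‖y i‖ = 1 := by intro y; simp [hK]
  have hKc : IsCompact K := isCompact_univ_pi fun _ => isCompact_sphere 0 1
  have hAc : Continuous (fun y : Fin k → E => |A y|) := A.cont.abs
  obtain ⟨y0, hy0, hmax0⟩ := hKc.exists_isMaxOn ⟨v, (memK v).2 hv⟩ hAc.continuousOn
  set M := |A y0| with hM
  have hM0 : 0 ≤ M := abs_nonneg _
  have hmax : ∀ y ∈ K, |A y| ≤ M := fun y hy => hmax0 hy
  have hEc : IsCompact (K ∩ {y | |A y| = M}) :=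
    hKc.inter_right (isClosed_eq hAc continuous_const)
  have hPhi : Continuous (fun y : Fin k → E => ‖∑ l, y l‖ ^ 2) := by fun_prop
  obtain ⟨y, ⟨hyK, hyM⟩, hy⟩ := hEc.exists_isMaxOn ⟨y0, hy0, rfl⟩ hPhi.continuousOn
  have hyM : |A y| = M := hyM
  have hyn := (memK y).1 hyK
  have claim : ∀ i j, i ≠ j → y i = y j := by
    intro i j hij
    set a := y i with ha
    set b := y j with hb
    have na : ‖a‖ = 1 := hyn i
    have nb : ‖b‖ = 1 := hyn j
    set w := ∑ l, y l - a - b with hw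
    set B : E → E → ℝ := fun p q => A (Function.update (Function.update y i p) j q) with hB
    have hUy : Function.update (Function.update y i a) j b = y := by
      simp [ha, hb]
    have hBab : |B a b| = M := by simp only [hB, hUy]; exact hyM
    have hBs : ∀ p q, B p q = B q p := by
      intro p q
      simp only [hB]
      rw [← hsym _ (Equiv.swap i j)]
      congr 1
      funext l
      simp only [Function.comp]
      rcases eq_or_ne l i with rfl | h1
      · simp [Function.update_of_ne hij]
      · rcases eq_or_ne l j with rfl | h2
        · simp [Function.update_of_ne hij]
        · rw [Equiv.swap_apply_of_ne_of_ne h1 h2]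
          simp [Function.update_of_ne h1, Function.update_of_ne h2]
    have hBr : ∀ p q q', B p (q + q') = B p q + B p q' := fun p q q' => A.map_update_add _ _ _ _
    have hBm : ∀ p (c : ℝ) q, B p (c • q) = c * B p q := fun p c q => A.map_update_smul _ _ _ _
    have hBl : ∀ p p' q, B (p + p') q = B p q + B p' q := fun p p' q => by
      rw [hBs, hBr, hBs q, hBs q]
    have hBml : ∀ (c : ℝ) p q, B (c • p) q = c * B p q := fun c p q => by
      rw [hBs, hBm, hBs q]
    have hUK : ∀ p q, ‖p‖ = 1 → ‖q‖ = 1 → Function.update (Function.update y i p) j q ∈ K := by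
      intro p q hp hq
      rw [memK]
      intro l
      rcases eq_or_ne l j with rfl | h2
      · simpa using hq
      · rw [Function.update_of_ne h2]
        rcases eq_or_ne l i with rfl | h1
        · simpa using hp
        · rw [Function.update_of_ne h1]; exact hyn l
    have hPM : ∀ p q, ‖p‖ = 1 → ‖q‖ = 1 → |B p q| = M → ‖p + q + w‖ ^ 2 ≤ ‖a + b + w‖ ^ 2 := by
      intro p q hp hq h
      have this : ‖∑ l, Function.update (Function.update y i p) j q l‖ ^ 2 ≤ ‖∑ l, y l‖ ^ 2 :=
        hy (a := Function.update (Function.update y i p) j q) ⟨hUK p q hp hq, h⟩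
      rw [upd_mem_aux y i j hij] at this
      have h2 : a + b + w = ∑ l, y l := by rw [hw]; abel
      rw [h2]
      exact this
    have hBpp : ∀ p, |B p p| ≤ M * ‖p‖ ^ 2 := by
      intro p
      rcases eq_or_ne p 0 with rfl | hp
      · have : B 0 0 = 0 := by simpa using hBm 0 0 0
        simp [this]
      · have hp' : 0 < ‖p‖ := norm_pos_iff.2 hp
        have hn : ‖(‖p‖⁻¹ • p)‖ = 1 := norm_smul_inv_norm hp
        have h1 : |B (‖p‖⁻¹ • p) (‖p‖⁻¹ • p)| ≤ M := hmax _ (hUK _ _ hn hn)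
        rw [hBm, hBml, ← mul_assoc, abs_mul, abs_of_pos (by positivity)] at h1
        have := mul_le_mul_of_nonneg_right h1 (by positivity : 0 ≤ ‖p‖ ^ 2)
        calc |B p p| = ‖p‖⁻¹ * ‖p‖⁻¹ * |B p p| * ‖p‖ ^ 2 := by field_simp
          _ ≤ _ := this
    have hneg : ∀ p q, B (-p) q = - B p q := fun p q => by
      have := hBml (-1) p q; simpa using this
    have hneg' : ∀ p q, B p (-q) = - B p q := fun p q => by
      have := hBm p (-1) q; simpa using this
    have f1 := hPM (-a) (-b) (by simpa) (by simpa) (by rw [hneg, hneg', neg_neg]; exact hBab)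
    have f2 := hPM (-a) b (by simpa) nb (by rw [hneg, abs_neg]; exact hBab)
    have f3 := hPM a (-b) na (by simpa) (by rw [hneg', abs_neg]; exact hBab)
    have ipar : ‖a - b‖ ^ 2 = 4 - ‖a + b‖ ^ 2 := by
      rw [norm_add_sq_real, norm_sub_sq_real, na, nb]; ring
    have fpol : 4 * B a b = B (a + b) (a + b) - B (a + -b) (a + -b) := by
      rw [hBl, hBr, hBr, hBl, hBr, hBr, hneg, hneg, hneg', hneg', hBs b a]; ring
    have hge : M * ‖a + b‖ ^ 2 ≤ |B (a + b) (a + b)| := by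
      have h1 := hBpp (a + -b)
      rw [← sub_eq_add_neg, ipar] at h1
      have h2 : |4 * B a b| = 4 * M := by rw [abs_mul, hBab]; norm_num
      rw [fpol] at h2
      have h3 := abs_sub (B (a + b) (a + b)) (B (a + -b) (a + -b))
      rw [← sub_eq_add_neg] at h2 h3
      linarith
    rcases eq_or_ne (a + b) 0 with hr | hr
    · exfalso
      have hba : b = -a := by rw [eq_neg_iff_add_eq_zero, add_comm]; exact hr
      rw [hba, add_neg_cancel, zero_add] at f2 f3
      rw [neg_neg] at f3
      have k1 : ‖-a + -a + w‖ ^ 2 = 4 - 4 * inner ℝ a w + ‖w‖ ^ 2 := by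
        rw [← two_smul ℝ (-a), norm_add_sq_real, norm_smul, norm_neg, na, inner_smul_left, inner_neg_left]
        simp; ring
      have k2 : ‖a + a + w‖ ^ 2 = 4 + 4 * inner ℝ a w + ‖w‖ ^ 2 := by
        rw [← two_smul ℝ a, norm_add_sq_real, norm_smul, na, inner_smul_left]
        simp; ring
      rw [k1] at f2
      rw [k2] at f3
      linarith
    · set r := ‖a + b‖ with hrdef
      have hr0 : 0 < r := norm_pos_iff.2 hr
      have hz : ‖(r⁻¹ • (a + b))‖ = 1 := norm_smul_inv_norm hr
      have hBz : |B (r⁻¹ • (a + b)) (r⁻¹ • (a + b))| = M := by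
        rw [hBm, hBml, ← mul_assoc, abs_mul, abs_of_pos (by positivity),
          le_antisymm (hBpp (a + b)) hge]
        rw [← hrdef]
        field_simp
      have f4 := hPM _ _ hz hz hBz
      have g1 : ‖(-a) + (-b) + w‖ ^ 2 = r ^ 2 - 2 * inner ℝ (a + b) w + ‖w‖ ^ 2 := by
        rw [← neg_add, norm_add_sq_real, norm_neg, inner_neg_left]; ring
      have g2 : ‖a + b + w‖ ^ 2 = r ^ 2 + 2 * inner ℝ (a + b) w + ‖w‖ ^ 2 := norm_add_sq_real _ _
      have g3 : ‖(r⁻¹ • (a + b)) + (r⁻¹ • (a + b)) + w‖ ^ 2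
          = 4 + 4 * r⁻¹ * inner ℝ (a + b) w + ‖w‖ ^ 2 := by
        rw [← two_smul ℝ (r⁻¹ • (a + b)), norm_add_sq_real, norm_smul, hz, inner_smul_left, inner_smul_left]
        simp; ring
      rw [g1, g2] at f1
      rw [g2, g3] at f4
      have hs : 0 ≤ inner ℝ (a + b) w := by linarith
      have hr2 : r ≤ 2 := by
        have := norm_add_le a b
        rw [na, nb] at this; linarith
      have hri : 1 ≤ 2 * r⁻¹ := by
        rw [← div_eq_mul_inv, le_div_iff₀ hr0]; linarith
      have h5 : ‖a - b‖ ^ 2 ≤ 0 := by rw [ipar]; nlinarith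
      have h6 : ‖a - b‖ = 0 := by nlinarith [norm_nonneg (a - b)]
      exact sub_eq_zero.1 (norm_eq_zero.1 h6)
  have hconst : y = fun _ => y ⟨0, hk⟩ := by
    funext l
    by_cases h : l = ⟨0, hk⟩
    · rw [h]
    · exact claim _ _ h
  calc |A v| ≤ M := hmax v ((memK v).2 hv)
    _ = |A y| := hyM.symm
    _ ≤ C := by rw [hconst]; exact hC _ (hyn _)

lemma banach_sym {k : ℕ} (hk : 1 ≤ k) {E : Type*} [NormedAddCommGroup E] [InnerProductSpace ℝ E]
    (A : ContinuousMultilinearMap ℝ (fun _ : Fin k => E) ℝ)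
    (hsym : ∀ (v : Fin k → E) (σ : Equiv.Perm (Fin k)), A (v ∘ σ) = A v) (C : ℝ)
    (hC : ∀ y, ‖y‖ = 1 → |A (fun _ => y)| ≤ C) (v : Fin k → E) :
    ‖A v‖ ≤ C * ∏ i, ‖v i‖ := by
  have unit : ∀ v : Fin k → E, (∀ i, ‖v i‖ = 1) → |A v| ≤ C := by
    intro v hv
    set W := Submodule.span ℝ (Set.range v) with hW
    haveI : FiniteDimensional ℝ W := FiniteDimensional.span_of_finite ℝ (Set.finite_range v)
    have := banach_fin hk (E := W) (A.compContinuousLinearMap (fun _ => W.subtypeL))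
      (fun u σ => by
        simp only [ContinuousMultilinearMap.compContinuousLinearMap_apply]
        exact hsym (fun i => (u i : E)) σ) C
      (fun y hy => by
        simp only [ContinuousMultilinearMap.compContinuousLinearMap_apply]
        exact hC (y : E) hy)
      (fun i => ⟨v i, Submodule.subset_span ⟨i, rfl⟩⟩) hv
    simpa [ContinuousMultilinearMap.compContinuousLinearMap_apply] using this
  by_cases h : ∃ i, v i = 0
  · obtain ⟨i, hi⟩ := h
    rw [A.map_coord_zero i hi, Finset.prod_eq_zero (Finset.mem_univ i) (by simp [hi])]
    simp
  · push Not at h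
    have hv : v = fun i => ‖v i‖ • (‖v i‖⁻¹ • v i) := by
      funext i
      rw [smul_smul, mul_inv_cancel₀ (norm_ne_zero_iff.2 (h i)), one_smul]
    have h1 := unit (fun i => ‖v i‖⁻¹ • v i) (fun i => norm_smul_inv_norm (h i))
    have h2 : A v = (∏ i, ‖v i‖) * A (fun i => ‖v i‖⁻¹ • v i) := by
      conv_lhs => rw [hv]
      rw [A.map_smul_univ]; rfl
    rw [h2, norm_mul, Real.norm_of_nonneg (Finset.prod_nonneg fun i _ => norm_nonneg _), mul_comm]
    exact mul_le_mul_of_nonneg_right h1 (Finset.prod_nonneg fun i _ => norm_nonneg _)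

lemma line_poly_one {j : ℕ} {H : Type*} [NormedAddCommGroup H] [NormedSpace ℝ H]
    (L : ContinuousMultilinearMap ℝ (fun _ : Fin j => H) ℝ) (c z : H) :
    ∃ p : Polynomial ℝ, p.natDegree ≤ j ∧ ∀ t : ℝ, p.eval t = L (fun _ => c + t • z) := by
  refine ⟨∑ s : Finset (Fin j), Polynomial.C (L (s.piecewise (fun _ => z) (fun _ => c))) *
    Polynomial.X ^ s.card, ?_, ?_⟩
  · apply Polynomial.natDegree_sum_le_of_forall_le
    intro s _
    refine (Polynomial.natDegree_C_mul_X_pow_le _ _).trans ?_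
    simpa using Finset.card_le_univ s
  · intro t
    have h1 : (fun _ : Fin j => c + t • z) = (fun _ => t • z) + (fun _ => c) := by
      funext i; simp [add_comm]
    rw [h1, L.map_add_univ, Polynomial.eval_finsetSum]
    refine Finset.sum_congr rfl fun s _ => ?_
    have h2 : s.piecewise (fun _ : Fin j => t • z) (fun _ => c)
        = s.piecewise (fun i => t • (s.piecewise (fun _ : Fin j => z) (fun _ => c)) i)
          (s.piecewise (fun _ : Fin j => z) (fun _ => c)) := by
      funext i
      by_cases hi : i ∈ s <;> simp [hi]
    rw [h2, L.map_piecewise_smul (fun _ => t), Finset.prod_const, smul_eq_mul,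
      Polynomial.eval_mul, Polynomial.eval_C, Polynomial.eval_pow, Polynomial.eval_X, mul_comm]

lemma line_poly {n : ℕ} {H : Type*} [NormedAddCommGroup H] [NormedSpace ℝ H] (P : H → ℝ)
    (hP : ∃ L : (j : Fin (n + 1)) → ContinuousMultilinearMap ℝ (fun _ : Fin (j : ℕ) => H) ℝ,
      ∀ x, P x = ∑ j, L j (fun _ => x)) (c z : H) :
    ∃ p : Polynomial ℝ, p.natDegree ≤ n ∧ ∀ t : ℝ, p.eval t = P (c + t • z) := by
  obtain ⟨L, hL⟩ := hP
  choose p hp1 hp2 using fun j => line_poly_one (L j) c z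
  refine ⟨∑ j, p j, ?_, ?_⟩
  · apply Polynomial.natDegree_sum_le_of_forall_le
    intro j _
    exact (hp1 j).trans (Nat.lt_succ_iff.1 j.2)
  · intro t
    rw [Polynomial.eval_finsetSum, hL]
    exact Finset.sum_congr rfl fun j _ => hp2 j t

lemma P_smooth {n : ℕ} {H : Type*} [NormedAddCommGroup H] [NormedSpace ℝ H] (P : H → ℝ)
    (hP : ∃ L : (j : Fin (n + 1)) → ContinuousMultilinearMap ℝ (fun _ : Fin (j : ℕ) => H) ℝ,
      ∀ x, P x = ∑ j, L j (fun _ => x)) : ContDiff ℝ (⊤ : WithTop ℕ∞) P := by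
  obtain ⟨L, hL⟩ := hP
  have : P = fun x => ∑ j, L j (fun _ => x) := funext hL
  rw [this]
  refine ContDiff.sum fun j _ => ?_
  exact (L j).contDiff.comp (contDiff_pi.2 fun _ => contDiff_id)

lemma iter_poly (p : Polynomial ℝ) (k : ℕ) :
    iteratedDeriv k (fun t => p.eval t) = fun t => (Polynomial.derivative^[k] p).eval t := by
  induction k with
  | zero => simp
  | succ k ih =>
    rw [iteratedDeriv_succ, ih]
    funext t
    exact (poly_deriv p k t).deriv

lemma line_deriv {H : Type*} [NormedAddCommGroup H] [NormedSpace ℝ H] (P : H → ℝ)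
    (hP : ContDiff ℝ (⊤ : WithTop ℕ∞) P) (c z : H) (p : Polynomial ℝ)
    (hp : ∀ t : ℝ, p.eval t = P (c + t • z)) (k : ℕ) (t : ℝ) :
    (Polynomial.derivative^[k] p).eval t = iteratedFDeriv ℝ k P (c + t • z) (fun _ => z) := by
  have h1 := congrFun (iter_poly p k) t
  rw [← h1, iteratedDeriv_eq_iteratedFDeriv]
  set g : ℝ →L[ℝ] H := (ContinuousLinearMap.id ℝ ℝ).smulRight z with hg
  have h2 : (fun t => p.eval t) = (fun y => P (c + y)) ∘ g := by
    funext t; simp [hp, hg]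
  have hs : ContDiff ℝ (⊤ : WithTop ℕ∞) (fun y => P (c + y)) := hP.comp (contDiff_const.add contDiff_id)
  rw [h2, g.iteratedFDeriv_comp_right hs t (i := k) le_top, iteratedFDeriv_comp_add_left]
  simp [ContinuousMultilinearMap.compContinuousLinearMap_apply, hg]

lemma unit_bound {H : Type*} [NormedAddCommGroup H] [InnerProductSpace ℝ H]
    (n k : ℕ) (hk1 : 1 ≤ k) (hkn : k ≤ n) (P : H → ℝ)
    (hP : ∃ L : (j : Fin (n + 1)) → ContinuousMultilinearMap ℝ (fun _ : Fin (j : ℕ) => H) ℝ,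
      ∀ x, P x = ∑ j, L j (fun _ => x))
    (hPnorm : ∀ x : H, ‖x‖ ≤ 1 → |P x| ≤ 1)
    (x : H) (hx : ‖x‖ < 1) (y : H) (hy : ‖y‖ = 1) :
    (iteratedFDeriv ℝ k P x (fun _ => y)) ^ 2 ≤ chebM n k ‖x‖ := by
  set a : ℝ := inner ℝ x y with ha
  set c : H := x - a • y with hc
  have hcy : inner ℝ c y = 0 := by
    rw [hc, inner_sub_left, inner_smul_left, real_inner_self_eq_norm_sq, hy, ← ha]; simp
  have hpy : ∀ s : ℝ, ‖c + s • y‖ ^ 2 = ‖c‖ ^ 2 + s ^ 2 := by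
    intro s
    rw [norm_add_sq_real, inner_smul_right, hcy, norm_smul, hy]; simp
  have hxc : c + a • y = x := by rw [hc]; abel
  have hx2 : ‖x‖ ^ 2 = ‖c‖ ^ 2 + a ^ 2 := by rw [← hpy, hxc]
  have hx1 : ‖x‖ ^ 2 < 1 := by nlinarith [norm_nonneg x]
  have hd : 0 < 1 - ‖c‖ ^ 2 := by nlinarith [sq_nonneg a]
  set r := Real.sqrt (1 - ‖c‖ ^ 2) with hr
  have hr0 : 0 < r := Real.sqrt_pos.2 hd
  have hr2 : r ^ 2 = 1 - ‖c‖ ^ 2 := Real.sq_sqrt hd.le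
  have hr1 : r ^ 2 ≤ 1 := by rw [hr2]; nlinarith [sq_nonneg ‖c‖]
  set t0 := a / r with ht0
  have ht0r : t0 * r = a := by rw [ht0]; field_simp
  have ht0sq : t0 ^ 2 * r ^ 2 = a ^ 2 := by rw [← ht0r]; ring
  have hw : (1 - t0 ^ 2) * r ^ 2 = 1 - ‖x‖ ^ 2 := by rw [hx2]; linarith
  have hux : 0 < 1 - ‖x‖ ^ 2 := by linarith
  have hwp : 0 < 1 - t0 ^ 2 := by
    by_contra h
    push Not at h
    nlinarith [sq_nonneg r]
  have htm : t0 ∈ Set.Ioo (-1 : ℝ) 1 := by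
    constructor <;> nlinarith
  obtain ⟨p, hp1, hp2⟩ := line_poly P hP c (r • y)
  have hbd : ∀ t ∈ Set.Icc (-1 : ℝ) 1, |p.eval t| ≤ 1 := by
    intro t ht
    rw [hp2]
    apply hPnorm
    have h1 : ‖c + t • r • y‖ ^ 2 ≤ 1 := by
      rw [smul_smul, hpy, mul_pow, hr2]
      have : t ^ 2 ≤ 1 := by nlinarith [ht.1, ht.2]
      nlinarith
    nlinarith [norm_nonneg (c + t • r • y)]
  have hSD := schaeffer_duffin n k hk1 hkn p hp1 hbd t0 htm
  rw [line_deriv P (P_smooth P hP) c (r • y) p hp2 k t0, smul_smul, ht0r, hxc] at hSD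
  have hsm : iteratedFDeriv ℝ k P x (fun _ => r • y) = r ^ k * iteratedFDeriv ℝ k P x (fun _ => y) := by
    have := (iteratedFDeriv ℝ k P x).map_smul_univ (fun _ => r) (fun _ => y)
    simpa using this
  rw [hsm] at hSD
  obtain ⟨k', rfl⟩ : ∃ k', k = k' + 1 := ⟨k - 1, by omega⟩
  have hxm : ‖x‖ ∈ Set.Ioo (-1 : ℝ) 1 := ⟨by linarith [norm_nonneg x], hx⟩
  rw [chebM_eq, M_formula n k' t0 htm] at hSD
  rw [chebM_eq, M_formula n k' _ hxm]
  set u := (1 - ‖x‖ ^ 2)⁻¹ with hu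
  have hu0 : 0 < u := inv_pos.2 hux
  have htu : (1 - t0 ^ 2)⁻¹ = r ^ 2 * u := by
    rw [hu, ← hw]; field_simp
  rw [htu] at hSD
  have hle : ∑ m ∈ Finset.range (k' + 1), bco ((n:ℝ)^2) k' m * (r ^ 2 * u) ^ (k' + 1 + m)
      ≤ (r ^ (k' + 1)) ^ 2 * ∑ m ∈ Finset.range (k' + 1), bco ((n:ℝ)^2) k' m * u ^ (k' + 1 + m) := by
    rw [Finset.mul_sum]
    refine Finset.sum_le_sum fun m _ => ?_
    have hb := bco_nonneg n (by omega) k' hkn m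
    have h1 : (r ^ 2) ^ m ≤ 1 := pow_le_one₀ (sq_nonneg r) hr1
    calc bco ((n:ℝ)^2) k' m * (r ^ 2 * u) ^ (k' + 1 + m)
        = (r ^ 2) ^ m * ((r ^ (k' + 1)) ^ 2 * (bco ((n:ℝ)^2) k' m * u ^ (k' + 1 + m))) := by ring
      _ ≤ 1 * ((r ^ (k' + 1)) ^ 2 * (bco ((n:ℝ)^2) k' m * u ^ (k' + 1 + m))) := by
          apply mul_le_mul_of_nonneg_right h1; positivity
      _ = _ := one_mul _
  have := hSD.trans hle
  rw [mul_pow] at this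
  exact le_of_mul_le_mul_left this (by positivity)

/-- Schaeffer–Duffin type Bernstein inequality on a real Hilbert space:
if `P` is a continuous polynomial of degree at most `n` with `‖P‖ ≤ 1` and `1 ≤ k ≤ n`,
then `‖D^k P(x)‖² = ‖D̂^k P(x)‖² ≤ M_k(‖x‖)` for every `‖x‖ < 1`. -/
theorem bernstein_schaeffer_duffin_hilbert
    {H : Type*} [NormedAddCommGroup H] [InnerProductSpace ℝ H] [CompleteSpace H]
    (n k : ℕ) (hk1 : 1 ≤ k) (hkn : k ≤ n) (P : H → ℝ)
    (hP : ∃ L : (j : Fin (n + 1)) → ContinuousMultilinearMap ℝ (fun _ : Fin (j : ℕ) => H) ℝ,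
      ∀ x, P x = ∑ j, L j (fun _ => x))
    (hPnorm : ∀ x : H, ‖x‖ ≤ 1 → |P x| ≤ 1)
    (x : H) (hx : ‖x‖ < 1) :
    ‖iteratedFDeriv ℝ k P x‖ ^ 2
        = (sSup ((fun y => ‖iteratedFDeriv ℝ k P x (fun _ => y)‖) '' closedBall (0 : H) 1)) ^ 2 ∧
      (sSup ((fun y => ‖iteratedFDeriv ℝ k P x (fun _ => y)‖) '' closedBall (0 : H) 1)) ^ 2
        ≤ chebM n k ‖x‖ := by
  have hsmooth := P_smooth P hP
  set A := iteratedFDeriv ℝ k P x with hA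
  have hM0 : 0 ≤ chebM n k ‖x‖ := by rw [chebM_eq]; positivity
  have hunit : ∀ y : H, ‖y‖ = 1 → ‖A (fun _ => y)‖ ^ 2 ≤ chebM n k ‖x‖ := by
    intro y hy
    rw [Real.norm_eq_abs, sq_abs]
    exact unit_bound n k hk1 hkn P hP hPnorm x hx y hy
  have hball : ∀ y : H, ‖y‖ ≤ 1 → ‖A (fun _ => y)‖ ≤ Real.sqrt (chebM n k ‖x‖) := by
    intro y hy
    have h1 := banach_sym (k := k) hk1 A
      (fun v σ => ContDiffAt.iteratedFDeriv_comp_perm hsmooth.contDiffAt v σ)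
      (Real.sqrt (chebM n k ‖x‖)) (fun y hy => Real.le_sqrt_of_sq_le (hunit y hy)) (fun _ => y)
    refine h1.trans (mul_le_of_le_one_right (Real.sqrt_nonneg _) ?_)
    exact Finset.prod_le_one (fun _ _ => norm_nonneg _) fun _ _ => hy
  set S := (fun y => ‖A (fun _ => y)‖) '' closedBall (0 : H) 1 with hS
  have hSne : S.Nonempty := ⟨_, 0, by simp, rfl⟩
  have hSb : BddAbove S := by
    refine ⟨Real.sqrt (chebM n k ‖x‖), ?_⟩
    rintro _ ⟨y, hy, rfl⟩
    exact hball y (by simpa using hy)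
  have hS1 : sSup S ≤ Real.sqrt (chebM n k ‖x‖) := by
    refine csSup_le hSne ?_
    rintro _ ⟨y, hy, rfl⟩
    exact hball y (by simpa using hy)
  have hS0 : 0 ≤ sSup S := by
    refine Real.sSup_nonneg ?_
    rintro _ ⟨y, hy, rfl⟩
    exact norm_nonneg _
  have hS2 : sSup S ≤ ‖A‖ := by
    refine csSup_le hSne ?_
    rintro _ ⟨y, hy, rfl⟩
    have hy : ‖y‖ ≤ 1 := by simpa using hy
    refine (A.le_opNorm _).trans (mul_le_of_le_one_right (norm_nonneg _) ?_)
    exact Finset.prod_le_one (fun _ _ => norm_nonneg _) fun _ _ => hy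
  have hS3 : ‖A‖ ≤ sSup S := by
    refine A.opNorm_le_bound hS0 fun v => ?_
    refine banach_sym hk1 A
      (fun v σ => ContDiffAt.iteratedFDeriv_comp_perm hsmooth.contDiffAt v σ) _ ?_ v
    intro y hy
    exact le_csSup hSb ⟨y, by simp [hy], rfl⟩
  refine ⟨by rw [le_antisymm hS3 hS2], ?_⟩
  calc (sSup S) ^ 2 ≤ (Real.sqrt (chebM n k ‖x‖)) ^ 2 := pow_le_pow_left₀ hS0 hS1 2
    _ = _ := Real.sq_sqrt hM0
end

section
/- Let X be a real Banach space, let 1 ≤ k ≤ n, and let P be a continuous polynomial of degree at most n−k on X such that |P(x)|² ≤ M_k(‖x‖) for every x ∈ X with ‖x‖ < 1, where M_k(t) = (T_n^{(k)}(t))² + (S_n^{(k)}(t))². Then |P(x)| ≤ T_n^{(k)}(1) = n²(n²−1²)⋯(n²−(k−1)²)/(1·3⋯(2k−1)) for every x ∈ X with ‖x‖ ≤ 1. -/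
open Metric

/-- `T_n^{(k)}(1)`: the `k`-th derivative of the `n`-th Chebyshev polynomial of the
first kind, evaluated at `1`. -/
noncomputable def chebTDerivOne (n k : ℕ) : ℝ :=
  (Polynomial.derivative^[k] (Polynomial.Chebyshev.T ℝ (n : ℤ))).eval 1

noncomputable def sdA (n k : ℕ) : ℝ → ℝ :=
  iteratedDeriv k (fun s : ℝ => Real.cos (n * Real.arccos s))

noncomputable def sdB (n k : ℕ) : ℝ → ℝ :=
  iteratedDeriv k (fun s : ℝ => Real.sin (n * Real.arccos s))

lemma sd_contA (n : ℕ) {x : ℝ} (h1 : -1 < x) (h2 : x < 1) :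
    ContDiffAt ℝ ⊤ (fun s : ℝ => Real.cos (n * Real.arccos s)) x :=
  Real.contDiff_cos.contDiffAt.comp x
    (contDiffAt_const.mul (Real.contDiffAt_arccos h1.ne' h2.ne))

lemma sd_contB (n : ℕ) {x : ℝ} (h1 : -1 < x) (h2 : x < 1) :
    ContDiffAt ℝ ⊤ (fun s : ℝ => Real.sin (n * Real.arccos s)) x :=
  Real.contDiff_sin.contDiffAt.comp x
    (contDiffAt_const.mul (Real.contDiffAt_arccos h1.ne' h2.ne))

lemma sd_hasDeriv_aux {f : ℝ → ℝ} {x : ℝ} (k : ℕ) (hf : ContDiffAt ℝ ⊤ f x) :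
    HasDerivAt (iteratedDeriv k f) (iteratedDeriv (k+1) f x) x := by
  rw [iteratedDeriv_succ]
  apply DifferentiableAt.hasDerivAt
  have := (hf.of_le (m := ((k+1 : ℕ) : WithTop ℕ∞)) le_top)
  have h2 := (contDiffWithinAt_univ.2 this).differentiableWithinAt_iteratedDerivWithin (m := k)
    (by exact_mod_cast Nat.lt_succ_self k) (by simp [uniqueDiffOn_univ])
  simpa [iteratedDerivWithin_univ, differentiableWithinAt_univ] using h2

lemma sdA_hasDeriv (n k : ℕ) {x : ℝ} (h1 : -1 < x) (h2 : x < 1) :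
    HasDerivAt (sdA n k) (sdA n (k+1) x) x := sd_hasDeriv_aux k (sd_contA n h1 h2)

lemma sdB_hasDeriv (n k : ℕ) {x : ℝ} (h1 : -1 < x) (h2 : x < 1) :
    HasDerivAt (sdB n k) (sdB n (k+1) x) x := sd_hasDeriv_aux k (sd_contB n h1 h2)

lemma sdA_one (n : ℕ) {x : ℝ} (h1 : -1 < x) (h2 : x < 1) :
    √(1 - x^2) * sdA n 1 x = n * sdB n 0 x := by
  have h := sdA_hasDeriv n 0 h1 h2
  have h' : HasDerivAt (sdA n 0) (-Real.sin (n * Real.arccos x) * (n * -(1 / √(1 - x ^ 2)))) x := by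
    have := ((Real.hasDerivAt_arccos h1.ne' h2.ne).const_mul (n:ℝ)).cos
    simpa [sdA] using this
  rw [h.unique h']
  have : 0 < √(1 - x^2) := Real.sqrt_pos.2 (by nlinarith)
  simp only [sdB, iteratedDeriv_zero]
  field_simp

lemma sdB_one (n : ℕ) {x : ℝ} (h1 : -1 < x) (h2 : x < 1) :
    √(1 - x^2) * sdB n 1 x = - (n * sdA n 0 x) := by
  have h := sdB_hasDeriv n 0 h1 h2
  have h' : HasDerivAt (sdB n 0) (Real.cos (n * Real.arccos x) * (n * -(1 / √(1 - x ^ 2)))) x := by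
    have := ((Real.hasDerivAt_arccos h1.ne' h2.ne).const_mul (n:ℝ)).sin
    simpa [sdB] using this
  rw [h.unique h']
  have : 0 < √(1 - x^2) := Real.sqrt_pos.2 (by nlinarith)
  simp only [sdA, iteratedDeriv_zero]
  field_simp

lemma sd_nhds {x : ℝ} (h1 : -1 < x) (h2 : x < 1) : ∀ᶠ y in nhds x, -1 < y ∧ y < 1 :=
  (Ioo_mem_nhds h1 h2)

lemma sd_sqrt_deriv {x : ℝ} (h1 : -1 < x) (h2 : x < 1) :
    HasDerivAt (fun x : ℝ => √(1 - x^2)) (-x / √(1 - x^2)) x := by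
  have h : (0:ℝ) < 1 - x^2 := by nlinarith
  have h3 : HasDerivAt (fun x : ℝ => 1 - x^2) (-(2 * x)) x := by
    simpa using ((hasDerivAt_id x).pow 2).const_sub 1
  have := h3.sqrt h.ne'
  convert this using 1
  field_simp

lemma sd_ode_zero {a b : ℕ → ℝ → ℝ} {c d : ℝ}
    (ha : ∀ k x, -1 < x → x < 1 → HasDerivAt (a k) (a (k+1) x) x)
    (hb : ∀ k x, -1 < x → x < 1 → HasDerivAt (b k) (b (k+1) x) x)
    (hab : ∀ x, -1 < x → x < 1 → √(1 - x^2) * a 1 x = c * b 0 x)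
    (hba : ∀ x, -1 < x → x < 1 → √(1 - x^2) * b 1 x = d * a 0 x)
    {x : ℝ} (h1 : -1 < x) (h2 : x < 1) :
    (1 - x^2) * a 2 x = x * a 1 x + c * d * a 0 x := by
  have e1 := (sd_sqrt_deriv h1 h2).mul (ha 1 x h1 h2)
  have e2 := (hb 0 x h1 h2).const_mul c
  have e3 : (fun x => c * b 0 x) =ᶠ[nhds x] ((fun x : ℝ => √(1 - x^2)) * a 1) := by
    filter_upwards [sd_nhds h1 h2] with y hy
    exact (hab y hy.1 hy.2).symm
  have e4 := (e1.congr_of_eventuallyEq e3).unique e2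
  have h : (0:ℝ) < 1 - x^2 := by nlinarith
  have hr : 0 < √(1 - x^2) := Real.sqrt_pos.2 h
  have hs := Real.sq_sqrt h.le
  have hB := hba x h1 h2
  simp only [zero_add, Nat.reduceAdd] at e4 hB
  set r := √(1 - x^2)
  have e5 : -x * a 1 x + r^2 * a 2 x = c * (r * b 1 x) := by
    have : r * (-x / r * a 1 x + r * a 2 x) = r * (c * b 1 x) := by rw [e4]
    have h6 : r * (-x / r * a 1 x) = -x * a 1 x := by field_simp
    linarith
  rw [← hs]
  rw [hB] at e5
  linarith

lemma sd_ode {a : ℕ → ℝ → ℝ} {N : ℝ}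
    (ha : ∀ k x, -1 < x → x < 1 → HasDerivAt (a k) (a (k+1) x) x)
    (h0 : ∀ x, -1 < x → x < 1 → (1 - x^2) * a 2 x = x * a 1 x - N * a 0 x) (k : ℕ) :
    ∀ x, -1 < x → x < 1 →
      (1 - x^2) * a (k+2) x = (2*k+1) * x * a (k+1) x - (N - k^2) * a k x := by
  induction k with
  | zero => intro x h1 h2; simpa using h0 x h1 h2
  | succ k ih =>
    intro x h1 h2
    have e1 := (((hasDerivAt_id x).pow 2).const_sub 1).mul (ha (k+2) x h1 h2)
    have e2 := (((hasDerivAt_id x).const_mul (2*k+1 : ℝ)).mul (ha (k+1) x h1 h2)).sub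
      ((ha k x h1 h2).const_mul (N - k^2))
    have e4 := (e1.congr_of_eventuallyEq ?_).unique e2
    · simp at e4
      push_cast
      rw [show k + 1 + 2 = k + 2 + 1 by ring]
      rw [show k + 1 + 1 = k + 2 by ring] at e4 ⊢
      linear_combination e4
    · filter_upwards [sd_nhds h1 h2] with y hy
      have := ih y hy.1 hy.2
      simp at this ⊢
      linarith

lemma sdA_ode (n k : ℕ) {x : ℝ} (h1 : -1 < x) (h2 : x < 1) :
    (1 - x^2) * sdA n (k+2) x = (2*k+1) * x * sdA n (k+1) x - ((n:ℝ)^2 - k^2) * sdA n k x := by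
  refine sd_ode (fun k x => sdA_hasDeriv n k) ?_ k x h1 h2
  intro x h1 h2
  have := sd_ode_zero (a := sdA n) (b := sdB n) (c := n) (d := -n) (fun k x => sdA_hasDeriv n k)
    (fun k x => sdB_hasDeriv n k) (fun x => sdA_one n)
    (fun x h1 h2 => by rw [sdB_one n h1 h2]; ring) h1 h2
  rw [this]; ring

lemma sdB_ode (n k : ℕ) {x : ℝ} (h1 : -1 < x) (h2 : x < 1) :
    (1 - x^2) * sdB n (k+2) x = (2*k+1) * x * sdB n (k+1) x - ((n:ℝ)^2 - k^2) * sdB n k x := by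
  refine sd_ode (fun k x => sdB_hasDeriv n k) ?_ k x h1 h2
  intro x h1 h2
  have := sd_ode_zero (a := sdB n) (b := sdA n) (c := -n) (d := n) (fun k x => sdB_hasDeriv n k)
    (fun k x => sdA_hasDeriv n k)
    (fun x h1 h2 => by rw [sdB_one n h1 h2]; ring) (fun x => sdA_one n) h1 h2
  rw [this]; ring

lemma sd_zero_sq (n : ℕ) (x : ℝ) : sdA n 0 x ^ 2 + sdB n 0 x ^ 2 = 1 := by
  simp [sdA, sdB]

/-- Wronskian sign. -/
lemma sd_wronsk (n k : ℕ) (hk : k ≤ n) (hn : 1 ≤ n) {x : ℝ} (h1 : -1 < x) (h2 : x < 1) :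
    sdA n k x * sdB n (k+1) x - sdA n (k+1) x * sdB n k x < 0 := by
  have h : (0:ℝ) < 1 - x^2 := by nlinarith
  induction k with
  | zero =>
    have hr : 0 < √(1 - x^2) := Real.sqrt_pos.2 h
    have ea := sdA_one n h1 h2
    have eb := sdB_one n h1 h2
    have ez := sd_zero_sq n x
    have hn' : (0:ℝ) < n := by exact_mod_cast hn
    have : √(1 - x^2) * (sdA n 0 x * sdB n 1 x - sdA n 1 x * sdB n 0 x) = -n := by
      linear_combination sdA n 0 x * eb - sdB n 0 x * ea - n * ez
    by_contra hc
    push Not at hc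
    have := mul_nonneg hr.le hc
    simp only [zero_add] at this
    linarith
  | succ k ih =>
    have ih := ih (by omega)
    have ea := sdA_ode n k h1 h2
    have eb := sdB_ode n k h1 h2
    have hkn : (0:ℝ) < (n:ℝ)^2 - k^2 := by
      have : (k:ℝ) + 1 ≤ n := by exact_mod_cast hk
      have : (0:ℝ) ≤ k := Nat.cast_nonneg k
      nlinarith
    have key : (1 - x^2) * (sdA n (k+1) x * sdB n (k+2) x - sdA n (k+2) x * sdB n (k+1) x)
        = ((n:ℝ)^2 - k^2) * (sdA n k x * sdB n (k+1) x - sdA n (k+1) x * sdB n k x) := by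
      linear_combination sdA n (k+1) x * eb - sdB n (k+1) x * ea
    have := mul_neg_of_pos_of_neg hkn ih
    rw [← key] at this
    exact neg_of_mul_neg_right this h.le

lemma sd_w_deriv {x : ℝ} (h1 : -1 < x) (h2 : x < 1) (j : ℕ) :
    HasDerivAt (fun x : ℝ => ((1 - x^2)⁻¹)^j) (j * (2 * x) * ((1 - x^2)⁻¹)^(j+1)) x := by
  have h : (0:ℝ) < 1 - x^2 := by nlinarith
  have h3 : HasDerivAt (fun x : ℝ => 1 - x^2) (-(2 * x)) x := by
    simpa using ((hasDerivAt_id x).pow 2).const_sub 1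
  have := (h3.fun_inv h.ne').fun_pow j
  refine this.congr_deriv ?_
  rcases j with _ | j
  · simp
  · simp only [Nat.add_sub_cancel, inv_pow]
    field_simp
    ring

lemma sdM_deriv (n k : ℕ) {x : ℝ} (h1 : -1 < x) (h2 : x < 1) :
    HasDerivAt (chebM n k) (2 * (sdA n k x * sdA n (k+1) x + sdB n k x * sdB n (k+1) x)) x := by
  have := ((sdA_hasDeriv n k h1 h2).fun_pow 2).fun_add ((sdB_hasDeriv n k h1 h2).fun_pow 2)
  refine this.congr_deriv ?_
  simp; ring

lemma sdM_eq (n k : ℕ) (x : ℝ) : chebM n k x = sdA n k x ^ 2 + sdB n k x ^ 2 := rfl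

lemma sdM_expand (n k : ℕ) (hk : 1 ≤ k) (hkn : k ≤ n) :
    ∃ b : ℕ → ℝ, (∀ m < k, 0 ≤ b m) ∧ ∀ x : ℝ, -1 < x → x < 1 →
      chebM n k x = ∑ m ∈ Finset.range k, b m * ((1 - x^2)⁻¹)^(k+m) := by
  induction k, hk using Nat.le_induction with
  | base =>
    refine ⟨fun _ => (n:ℝ)^2, fun _ _ => by positivity, fun x h1 h2 => ?_⟩
    have h : (0:ℝ) < 1 - x^2 := by nlinarith
    have hs := Real.sq_sqrt h.le
    have ea := sdA_one n h1 h2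
    have eb := sdB_one n h1 h2
    have ez := sd_zero_sq n x
    have : (1 - x^2) * chebM n 1 x = n^2 := by
      rw [← hs, sdM_eq]
      calc _ = (√(1 - x^2) * sdA n 1 x)^2 + (√(1 - x^2) * sdB n 1 x)^2 := by ring
        _ = n^2 * (sdA n 0 x ^ 2 + sdB n 0 x ^ 2) := by rw [ea, eb]; ring
        _ = _ := by rw [ez]; ring
    simp only [Finset.sum_range_one, add_zero, pow_one]
    rw [← this]; field_simp
  | succ k hk ih =>
    obtain ⟨b, hb, hM⟩ := ih (by omega)
    have hkn' : (0:ℝ) < (n:ℝ)^2 - k^2 := by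
      have : (k:ℝ) + 1 ≤ n := by exact_mod_cast hkn
      have : (0:ℝ) ≤ k := Nat.cast_nonneg k
      nlinarith
    set b' : ℕ → ℝ := fun m => ((n:ℝ)^2 - k^2) * (k + m) / (k - m) * b m with hb'
    have hrel : ∀ m < k, b' m * (k - m) = ((n:ℝ)^2 - k^2) * (k + m) * b m := by
      intro m hm
      have : (m:ℝ) < k := by exact_mod_cast hm
      have : (k:ℝ) - m ≠ 0 := by linarith
      simp only [hb']; field_simp
    have hb'0 : ∀ m < k, 0 ≤ b' m := by
      intro m hm
      have : (m:ℝ) < k := by exact_mod_cast hm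
      have : 0 < (k:ℝ) - m := by linarith
      have := hb m hm
      simp only [hb']; positivity
    set G : ℝ → ℝ := fun x => ∑ m ∈ Finset.range k, b' m * ((1 - x^2)⁻¹)^(k+1+m) with hG
    set H : ℝ → ℝ := fun x => (chebM n (k+1) x - G x) * (1 - x^2)^(2*k+1) with hH
    have hHd : ∀ x, -1 < x → x < 1 → HasDerivAt H 0 x := by
      intro x h1 h2
      have h : (0:ℝ) < 1 - x^2 := by nlinarith
      have dG : HasDerivAt G (∑ m ∈ Finset.range k,
          b' m * (((k+1+m : ℕ) : ℝ) * (2 * x) * ((1 - x^2)⁻¹)^(k+1+m+1))) x :=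
        HasDerivAt.fun_sum fun m _ => (sd_w_deriv h1 h2 _).const_mul _
      have dK : HasDerivAt (fun x => ∑ m ∈ Finset.range k, b m * ((1 - x^2)⁻¹)^(k+m))
          (∑ m ∈ Finset.range k,
          b m * (((k+m : ℕ) : ℝ) * (2 * x) * ((1 - x^2)⁻¹)^(k+m+1))) x :=
        HasDerivAt.fun_sum fun m _ => (sd_w_deriv h1 h2 _).const_mul _
      have e3 : chebM n k =ᶠ[nhds x] (fun x => ∑ m ∈ Finset.range k, b m * ((1 - x^2)⁻¹)^(k+m)) := by
        filter_upwards [sd_nhds h1 h2] with y hy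
        exact hM y hy.1 hy.2
      have dM := (sdM_deriv n k h1 h2).unique (dK.congr_of_eventuallyEq e3)
      have h3 : HasDerivAt (fun x : ℝ => 1 - x^2) (-(2 * x)) x := by
        simpa using ((hasDerivAt_id x).pow 2).const_sub 1
      have dH := ((sdM_deriv n (k+1) h1 h2).fun_sub dG).fun_mul (h3.fun_pow (2*k+1))
      refine dH.congr_deriv ?_
      have ea := sdA_ode n k h1 h2
      have eb := sdB_ode n k h1 h2
      have key : (1 - x^2) * (∑ m ∈ Finset.range k,
          b' m * (((k+1+m : ℕ) : ℝ) * (2 * x) * ((1 - x^2)⁻¹)^(k+1+m+1)))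
          = 2 * (2*k+1) * x * G x - ((n:ℝ)^2 - k^2) * (∑ m ∈ Finset.range k,
          b m * (((k+m : ℕ) : ℝ) * (2 * x) * ((1 - x^2)⁻¹)^(k+m+1))) := by
        simp only [hG, Finset.mul_sum]
        rw [← Finset.sum_sub_distrib]
        refine Finset.sum_congr rfl fun m hm => ?_
        have hr := hrel m (Finset.mem_range.1 hm)
        have hw : (1 - x^2) * ((1 - x^2)⁻¹)^(k+1+m+1) = ((1 - x^2)⁻¹)^(k+m+1) := by
          rw [show k+1+m+1 = (k+m+1)+1 by ring, pow_succ' (_⁻¹), mul_inv_cancel_left₀ h.ne']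
        rw [show k+1+m = k+m+1 by ring] at *
        push_cast
        linear_combination (b' m * ((k+m+1 : ℝ) * (2 * x))) * hw - 2 * x * ((1 - x^2)⁻¹)^(k+m+1) * hr
      simp only [Nat.add_sub_cancel, sdM_eq] at *
      rw [← dM] at key
      generalize (∑ m ∈ Finset.range k,
          b' m * (((k+1+m : ℕ) : ℝ) * (2 * x) * ((1 - x^2)⁻¹)^(k+1+m+1))) = Z at key ⊢
      push_cast
      rw [pow_succ]
      linear_combination ((1 - x^2)^(2*k)) * (2 * sdA n (k+1) x * ea + 2 * sdB n (k+1) x * eb - key)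
    have hHc : ∀ x, -1 < x → x < 1 → H x = H 0 := by
      intro x h1 h2
      refine isOpen_Ioo.is_const_of_deriv_eq_zero (s := Set.Ioo (-1:ℝ) 1) isPreconnected_Ioo
        (fun y hy => (hHd y hy.1 hy.2).differentiableAt.differentiableWithinAt)
        (fun y hy => (hHd y hy.1 hy.2).deriv) ⟨h1, h2⟩ (by norm_num)
    have hc : 0 ≤ H 0 := by
      have hcont : Filter.Tendsto (fun x : ℝ => - ∑ m ∈ Finset.range k, b' m * (1 - x^2)^(k-m))
          (nhdsWithin 1 (Set.Iio 1)) (nhds 0) := by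
        have : Continuous (fun x : ℝ => - ∑ m ∈ Finset.range k, b' m * (1 - x^2)^(k-m)) := by
          fun_prop
        have h := this.tendsto 1
        refine (h.mono_left nhdsWithin_le_nhds).congr' Filter.EventuallyEq.rfl |>.trans_eq ?_
        congr 1
        rw [neg_eq_zero]
        refine Finset.sum_eq_zero fun m hm => ?_
        have := Finset.mem_range.1 hm
        rw [show (1:ℝ) - 1^2 = 0 by norm_num, zero_pow (by omega), mul_zero]
      refine le_of_tendsto hcont ?_
      filter_upwards [Ioo_mem_nhdsLT (show (-1:ℝ) < 1 by norm_num)] with x hx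
      have h : (0:ℝ) < 1 - x^2 := by nlinarith [hx.1, hx.2]
      rw [← hHc x hx.1 hx.2]
      have hGx : G x * (1 - x^2)^(2*k+1) = ∑ m ∈ Finset.range k, b' m * (1 - x^2)^(k-m) := by
        simp only [hG, Finset.sum_mul]
        refine Finset.sum_congr rfl fun m hm => ?_
        have := Finset.mem_range.1 hm
        rw [show 2*k+1 = (k+1+m) + (k-m) by omega, pow_add _ (k+1+m), inv_pow, mul_assoc, ← mul_assoc _ (_ ^ (k+1+m)),
          inv_mul_cancel₀ (pow_pos h _).ne', one_mul]
      have hM0 : 0 ≤ chebM n (k+1) x := by rw [sdM_eq]; positivity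
      have := mul_nonneg hM0 (pow_pos h (2*k+1)).le
      simp only [hH]
      rw [sub_mul, hGx]
      linarith
    refine ⟨fun m => if m = k then H 0 else b' m, ?_, ?_⟩
    · intro m hm
      by_cases hmk : m = k
      · simp [hmk, hc]
      · simp only [hmk, if_false]; exact hb'0 m (by omega)
    · intro x h1 h2
      have h : (0:ℝ) < 1 - x^2 := by nlinarith
      rw [Finset.sum_range_succ]
      have e : ∑ m ∈ Finset.range k, (if m = k then H 0 else b' m) * ((1 - x^2)⁻¹)^(k+1+m) = G x := by
        refine Finset.sum_congr rfl fun m hm => ?_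
        have := Finset.mem_range.1 hm
        rw [if_neg (by omega)]
      rw [e]
      simp only [if_true]
      rw [← hHc x h1 h2, show k+1+k = 2*k+1 by ring, inv_pow]
      simp only [hH]
      field_simp
      ring

lemma sdM_mono (n k : ℕ) (hk : 1 ≤ k) (hkn : k ≤ n) {s t : ℝ} (hst : |s| ≤ |t|) (ht : |t| < 1) :
    chebM n k s ≤ chebM n k t := by
  obtain ⟨b, hb, hM⟩ := sdM_expand n k hk hkn
  have hs := lt_of_le_of_lt hst ht
  rw [hM s (abs_lt.1 hs).1 (abs_lt.1 hs).2, hM t (abs_lt.1 ht).1 (abs_lt.1 ht).2]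
  have h2 : s^2 ≤ t^2 := sq_le_sq.2 hst
  have h3 : t^2 < 1 := (sq_lt_one_iff_abs_lt_one t).2 ht
  refine Finset.sum_le_sum fun m hm => ?_
  have hb := hb m (Finset.mem_range.1 hm)
  have : 0 < 1 - t^2 := by linarith
  have : 0 < 1 - s^2 := by linarith
  gcongr

lemma sdA_poly (n k : ℕ) {x : ℝ} (h1 : -1 < x) (h2 : x < 1) :
    sdA n k x = (Polynomial.derivative^[k] (Polynomial.Chebyshev.T ℝ (n : ℤ))).eval x := by
  induction k generalizing x with
  | zero =>
    have := Polynomial.Chebyshev.T_real_cos (Real.arccos x) (n:ℤ)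
    rw [Real.cos_arccos h1.le h2.le] at this
    simp [sdA, this]
  | succ k ih =>
    have e : sdA n k =ᶠ[nhds x]
        (fun x => (Polynomial.derivative^[k] (Polynomial.Chebyshev.T ℝ (n : ℤ))).eval x) := by
      filter_upwards [sd_nhds h1 h2] with y hy
      exact ih hy.1 hy.2
    rw [Function.iterate_succ_apply']
    exact (sdA_hasDeriv n k h1 h2).unique ((Polynomial.hasDerivAt _ x).congr_of_eventuallyEq e)

lemma sd_nodes_base (m : ℕ) :
    ∃ x : ℕ → ℝ, (∀ i ≤ m, -1 < x i ∧ x i < 1 ∧ sdB (m+1) 1 (x i) = 0 ∧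
      0 < (-1)^i * sdA (m+1) 1 (x i)) ∧ ∀ i < m, x (i+1) < x i := by
  have hpi := Real.pi_pos
  have hN : (0:ℝ) < ((m+1 : ℕ) : ℝ) := by positivity
  set th : ℕ → ℝ := fun i => (2*i+1) * Real.pi / (2 * ((m+1 : ℕ) : ℝ)) with hth
  have hth0 : ∀ i, 0 < th i := fun i => by simp only [hth]; positivity
  have hthpi : ∀ i ≤ m, th i < Real.pi := by
    intro i hi
    simp only [hth]
    rw [div_lt_iff₀ (by positivity)]
    have : (i:ℝ) ≤ m := by exact_mod_cast hi
    push_cast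
    nlinarith
  refine ⟨fun i => Real.cos (th i), fun i hi => ?_, fun i hi => ?_⟩
  · have hs : 0 < Real.sin (th i) := Real.sin_pos_of_pos_of_lt_pi (hth0 i) (hthpi i hi)
    have hsq := Real.sin_sq_add_cos_sq (th i)
    have habs : |Real.cos (th i)| < 1 := by
      rw [← sq_lt_one_iff_abs_lt_one]; nlinarith
    obtain ⟨h1, h2⟩ := abs_lt.1 habs
    have hr : √(1 - Real.cos (th i) ^ 2) = Real.sin (th i) := by
      rw [← Real.sin_sq, Real.sqrt_sq hs.le]
    have hac : ((m+1 : ℕ) : ℝ) * Real.arccos (Real.cos (th i)) = i * Real.pi + Real.pi / 2 := by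
      rw [Real.arccos_cos (hth0 i).le (hthpi i hi).le]
      simp only [hth]; field_simp
    have ea := sdA_one (m+1) h1 h2
    have eb := sdB_one (m+1) h1 h2
    have a0 : sdA (m+1) 0 (Real.cos (th i)) = 0 := by
      simp only [sdA, iteratedDeriv_zero]
      rw [hac, Real.cos_add_pi_div_two, Real.sin_nat_mul_pi, neg_zero]
    have b0 : sdB (m+1) 0 (Real.cos (th i)) = (-1)^i := by
      simp only [sdB, iteratedDeriv_zero]
      rw [hac, Real.sin_add_pi_div_two, Real.cos_nat_mul_pi]
    rw [hr, b0] at ea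
    rw [hr, a0, mul_zero, neg_zero] at eb
    refine ⟨h1, h2, (mul_eq_zero.1 eb).resolve_left hs.ne', ?_⟩
    have h1i : ((-1:ℝ)^i) * (-1)^i = 1 := by rw [← mul_pow]; norm_num
    have : Real.sin (th i) * ((-1)^i * sdA (m+1) 1 (Real.cos (th i))) = ((m+1 : ℕ) : ℝ) := by
      linear_combination (-1)^i * ea + ((m+1 : ℕ) : ℝ) * h1i
    rw [← this] at hN
    exact pos_of_mul_pos_right hN hs.le
  · refine Real.cos_lt_cos_of_nonneg_of_le_pi (hth0 i).le (hthpi (i+1) hi).le ?_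
    simp only [hth]
    gcongr
    simp

lemma sd_max {g g' : ℝ → ℝ} {a b : ℝ} (hab : a < b)
    (hg : ∀ x ∈ Set.Icc a b, HasDerivAt g (g' x) x) (ha : g a = 0) (hb : g b = 0)
    (hb' : g' b < 0) : ∃ y, a < y ∧ y < b ∧ 0 < g y ∧ g' y = 0 := by
  obtain ⟨y, hy, hmax⟩ := isCompact_Icc.exists_isMaxOn (Set.nonempty_Icc.2 hab.le)
    (fun x hx => (hg x hx).continuousAt.continuousWithinAt)
  have hpos : 0 < g y := by
    have hd := hg b (Set.right_mem_Icc.2 hab.le)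
    have h1 : ∀ᶠ z in nhdsWithin b (Set.Iio b), slope g b z < 0 :=
      (((hasDerivAt_iff_tendsto_slope.1 hd).mono_left
        (nhdsWithin_mono b (fun z hz => ne_of_lt hz))).eventually_lt_const hb')
    obtain ⟨z, hz, hz2⟩ := (h1.and (Ioo_mem_nhdsLT hab)).exists
    have hz3 : 0 < g z := by
      rw [slope_def_field, hb, sub_zero] at hz
      by_contra hc
      push Not at hc
      have := div_nonneg_of_nonpos hc (by linarith [hz2.2] : z - b ≤ 0)
      linarith
    exact lt_of_lt_of_le hz3 (hmax ⟨hz2.1.le, hz2.2.le⟩)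
  have hya : y ≠ a := fun h => by rw [h, ha] at hpos; exact lt_irrefl _ hpos
  have hyb : y ≠ b := fun h => by rw [h, hb] at hpos; exact lt_irrefl _ hpos
  have h1 : a < y := lt_of_le_of_ne hy.1 hya.symm
  have h2 : y < b := lt_of_le_of_ne hy.2 hyb
  exact ⟨y, h1, h2, hpos, (hmax.isLocalMax (Icc_mem_nhds h1 h2)).hasDerivAt_eq_zero (hg y hy)⟩

lemma sd_nodes (n k : ℕ) (hk : 1 ≤ k) : ∀ m, n = k + m →
    ∃ x : ℕ → ℝ, (∀ i ≤ m, -1 < x i ∧ x i < 1 ∧ sdB n k (x i) = 0 ∧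
      0 < (-1)^i * sdA n k (x i)) ∧ ∀ i < m, x (i+1) < x i := by
  induction k, hk using Nat.le_induction with
  | base => intro m hm; rw [add_comm] at hm; rw [hm]; exact sd_nodes_base m
  | succ k hk ih =>
    intro m hm
    obtain ⟨x, hx, hxx⟩ := ih (m+1) (by omega)
    have : ∀ i, ∃ y, i ≤ m → x (i+1) < y ∧ y < x i ∧ sdB n (k+1) y = 0 ∧
        0 < (-1)^i * sdA n (k+1) y := by
      intro i
      by_cases hi : i ≤ m
      swap
      · exact ⟨0, fun h => absurd h hi⟩
      obtain ⟨a1, a2, a3, a4⟩ := hx i (by omega)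
      obtain ⟨b1, b2, b3, b4⟩ := hx (i+1) (by omega)
      have h1i : ((-1:ℝ)^i) * (-1)^i = 1 := by rw [← mul_pow]; norm_num
      have hw := sd_wronsk n k (by omega) (by omega) a1 a2
      rw [a3, mul_zero, sub_zero] at hw
      obtain ⟨y, y1, y2, y3, y4⟩ := sd_max (g := fun z => (-1)^i * sdB n k z)
        (g' := fun z => (-1)^i * sdB n (k+1) z) (hxx i (by omega))
        (fun z hz => (sdB_hasDeriv n k (by linarith [hz.1]) (by linarith [hz.2])).const_mul _)
        (by simp [b3]) (by simp [a3])
        (by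
          have : ((-1)^i * sdA n k (x i)) * ((-1)^i * sdB n (k+1) (x i)) < 0 := by
            calc _ = (((-1:ℝ)^i) * (-1)^i) * (sdA n k (x i) * sdB n (k+1) (x i)) := by ring
              _ < 0 := by rw [h1i, one_mul]; exact hw
          exact neg_of_mul_neg_right this a4.le)
      have hy0 : sdB n (k+1) y = 0 := (mul_eq_zero.1 y4).resolve_left (by simp)
      refine ⟨y, fun _ => ⟨y1, y2, hy0, ?_⟩⟩
      have hwy := sd_wronsk n k (by omega) (by omega) (x := y) (by linarith) (by linarith)
      rw [hy0, mul_zero, zero_sub] at hwy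
      have : 0 < ((-1)^i * sdB n k y) * ((-1)^i * sdA n (k+1) y) := by
        calc 0 < sdA n (k+1) y * sdB n k y := by linarith
          _ = (((-1:ℝ)^i) * (-1)^i) * (sdA n (k+1) y * sdB n k y) := by rw [h1i, one_mul]
          _ = _ := by ring
      exact pos_of_mul_pos_right this y3.le
    choose y hy using this
    refine ⟨y, fun i hi => ?_, fun i hi => ?_⟩
    · obtain ⟨c1, c2, c3, c4⟩ := hy i hi
      exact ⟨by linarith [(hx (i+1) (by omega)).1], by linarith [(hx i (by omega)).2.1], c3, c4⟩
    · exact (hy (i+1) hi).2.1.trans (hy i (by omega)).1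

lemma sd_anti {m : ℕ} {x : ℕ → ℝ} (h : ∀ i < m, x (i+1) < x i) {i j : ℕ} (hij : i < j) (hj : j ≤ m) :
    x j < x i := by
  induction j, hij using Nat.le_induction with
  | base => exact h i (by omega)
  | succ j hij ih => exact (h j (by omega)).trans (ih (by omega))

lemma sd_basis_sign {m : ℕ} {x : ℕ → ℝ} (h : ∀ i < m, x (i+1) < x i) {i : ℕ} (hi : i ≤ m) {t : ℝ}
    (ht : x 0 ≤ t) : 0 ≤ (-1)^i * (Lagrange.basis (Finset.range (m+1)) x i).eval t := by
  have e : (-1:ℝ)^i = ∏ j ∈ (Finset.range (m+1)).erase i, (if j < i then (-1:ℝ) else 1) := by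
    rw [Finset.prod_ite, Finset.prod_const, Finset.prod_const_one, mul_one]
    congr 1
    have : ((Finset.range (m+1)).erase i).filter (fun j => j < i) = Finset.range i := by
      ext j; simp; omega
    rw [this, Finset.card_range]
  rw [e, Lagrange.basis, Polynomial.eval_prod, ← Finset.prod_mul_distrib]
  refine Finset.prod_nonneg fun j hj => ?_
  have hjm : j ≤ m := by simp at hj; omega
  have hji : j ≠ i := (Finset.mem_erase.1 hj).1
  have htj : 0 ≤ t - x j := by
    rcases Nat.eq_zero_or_pos j with rfl | h0
    · linarith
    · linarith [sd_anti h h0 hjm]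
  simp only [Lagrange.basisDivisor, Polynomial.eval_mul, Polynomial.eval_C, Polynomial.eval_sub,
    Polynomial.eval_X]
  split_ifs with hlt
  · have : 0 < x j - x i := by linarith [sd_anti h hlt hi]
    have e2 : (-1) * ((x i - x j)⁻¹ * (t - x j)) = (x j - x i)⁻¹ * (t - x j) := by
      rw [← neg_sub (x j), inv_neg]; ring
    rw [e2]; positivity
  · have : 0 < x i - x j := by linarith [sd_anti h (show i < j by omega) hjm]
    positivity

lemma sd_one_dim (n k m : ℕ) (hk : 1 ≤ k) (hn : n = k + m) (p : Polynomial ℝ) (hp : p.degree < (m+1 : ℕ))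
    (hpM : ∀ t : ℝ, |t| < 1 → p.eval t ^ 2 ≤ chebM n k t) (t : ℝ) (ht0 : 0 ≤ t) (ht1 : t ≤ 1) :
    |p.eval t| ≤ chebTDerivOne n k := by
  obtain ⟨x, hx, hxx⟩ := sd_nodes n k hk m hn
  set Q := Polynomial.derivative^[k] (Polynomial.Chebyshev.T ℝ (n : ℤ)) with hQ
  have hQ1 : ∀ s : ℝ, |s| ≤ 1 → |Q.eval s| ≤ chebTDerivOne n k := fun s hs =>
    Polynomial.Chebyshev.abs_iterate_derivative_T_real_le n k hs
  have hMx : ∀ i ≤ m, chebM n k (x i) = Q.eval (x i) ^ 2 := by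
    intro i hi
    obtain ⟨a1, a2, a3, a4⟩ := hx i hi
    rw [sdM_eq, a3, sdA_poly n k a1 a2]; simp [hQ]
  rcases lt_or_ge t (x 0) with hlt | hge
  · obtain ⟨a1, a2, a3, a4⟩ := hx 0 (by omega)
    have hx0 : |x 0| < 1 := abs_lt.2 ⟨a1, a2⟩
    have h1 : p.eval t ^ 2 ≤ Q.eval (x 0) ^ 2 := by
      rw [← hMx 0 (by omega)]
      refine (hpM t (abs_lt.2 ⟨by linarith, by linarith⟩)).trans (sdM_mono n k hk (by omega) ?_ hx0)
      rw [abs_of_nonneg ht0, abs_of_nonneg (by linarith)]; exact hlt.le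
    exact (sq_le_sq.1 h1).trans (hQ1 _ hx0.le)
  · have hinj : Set.InjOn x (Finset.range (m+1) : Finset ℕ) := by
      intro i hi j hj hij
      simp at hi hj
      rcases lt_trichotomy i j with h | h | h
      · have := sd_anti hxx h (by omega); linarith
      · exact h
      · have := sd_anti hxx h (by omega); linarith
    have hQd : Q.degree < (m+1 : ℕ) := by
      have h1 := Polynomial.natDegree_iterate_derivative (Polynomial.Chebyshev.T ℝ (n : ℤ)) k
      have h2 : (Polynomial.Chebyshev.T ℝ (n : ℤ)).natDegree = n := by simp
      rw [← hQ, h2] at h1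
      refine lt_of_le_of_lt Polynomial.degree_le_natDegree ?_
      exact_mod_cast (by omega : Q.natDegree < m + 1)
    have ev : ∀ f : Polynomial ℝ, f.degree < (m+1 : ℕ) → f.eval t = ∑ i ∈ Finset.range (m+1),
        f.eval (x i) * (Lagrange.basis (Finset.range (m+1)) x i).eval t := by
      intro f hf
      conv_lhs => rw [Lagrange.eq_interpolate (f := f) hinj (by simpa using hf)]
      simp [Lagrange.interpolate_apply, Polynomial.eval_finsetSum]
    have : |p.eval t| ≤ Q.eval t := by
      rw [ev p hp, ev Q hQd]
      refine (Finset.abs_sum_le_sum_abs _ _).trans (Finset.sum_le_sum fun i hi => ?_)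
      have him : i ≤ m := by simp at hi; omega
      obtain ⟨a1, a2, a3, a4⟩ := hx i him
      have hb := sd_basis_sign hxx him hge
      have h1 : |p.eval (x i)| ≤ |Q.eval (x i)| := by
        rw [← sq_le_sq, ← hMx i him]; exact hpM _ (abs_lt.2 ⟨a1, a2⟩)
      rw [sdA_poly n k a1 a2] at a4
      have hs : |(-1:ℝ)^i| = 1 := by simp
      have e1 : |Q.eval (x i)| = (-1)^i * Q.eval (x i) := by
        rw [← abs_of_pos a4, abs_mul, hs, one_mul]
      set B := (Lagrange.basis (Finset.range (m+1)) x i).eval t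
      have e2 : |B| = (-1)^i * B := by
        rw [← abs_of_nonneg hb, abs_mul, hs, one_mul]
      have h1i : ((-1:ℝ)^i) * (-1)^i = 1 := by rw [← mul_pow]; norm_num
      calc |p.eval (x i) * B| = |p.eval (x i)| * |B| := abs_mul _ _
        _ ≤ |Q.eval (x i)| * |B| := by gcongr
        _ = (((-1:ℝ)^i) * (-1)^i) * (Q.eval (x i) * B) := by rw [e1, e2]; ring
        _ = _ := by rw [h1i, one_mul]
    exact this.trans ((le_abs_self _).trans (hQ1 t (abs_le.2 ⟨by linarith, ht1⟩)))

lemma sd_formula (n k : ℕ) : chebTDerivOne n k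
        = (∏ i ∈ Finset.range k, ((n : ℝ) ^ 2 - (i : ℝ) ^ 2)) /
            (∏ i ∈ Finset.range k, (2 * (i : ℝ) + 1)) := by
  rw [eq_div_iff (Finset.prod_pos fun i _ => by positivity).ne']
  induction k with
  | zero => simp [chebTDerivOne]
  | succ k ih =>
    have := Polynomial.Chebyshev.iterate_derivative_T_eval_one_recurrence (R := ℝ) n k
    rw [Finset.prod_range_succ, Finset.prod_range_succ, ← ih]
    simp only [chebTDerivOne] at *
    push_cast at this
    linear_combination (∏ i ∈ Finset.range k, (2 * (i : ℝ) + 1)) * this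

/-- Schaeffer–Duffin comparison theorem on a real Banach space: if `P` is a continuous
polynomial of degree at most `n - k` with `|P(x)|² ≤ M_k(‖x‖)` for all `‖x‖ < 1`, then
`|P(x)| ≤ T_n^{(k)}(1) = n²(n²-1²)⋯(n²-(k-1)²)/(1·3⋯(2k-1))` for all `‖x‖ ≤ 1`. -/
theorem schaeffer_duffin_comparison_banach
    {X : Type*} [NormedAddCommGroup X] [NormedSpace ℝ X] [CompleteSpace X]
    (n k : ℕ) (hk1 : 1 ≤ k) (hkn : k ≤ n) (P : X → ℝ)
    (hP : ∃ L : (j : Fin (n - k + 1)) → ContinuousMultilinearMap ℝ (fun _ : Fin (j : ℕ) => X) ℝ,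
      ∀ x, P x = ∑ j, L j (fun _ => x))
    (hPM : ∀ x : X, ‖x‖ < 1 → |P x| ^ 2 ≤ chebM n k ‖x‖) :
    (∀ x : X, ‖x‖ ≤ 1 → |P x| ≤ chebTDerivOne n k) ∧
      chebTDerivOne n k
        = (∏ i ∈ Finset.range k, ((n : ℝ) ^ 2 - (i : ℝ) ^ 2)) /
            (∏ i ∈ Finset.range k, (2 * (i : ℝ) + 1)) := by
  refine ⟨?_, sd_formula n k⟩
  obtain ⟨L, hL⟩ := hP
  intro x hx
  have main : ∀ u : X, (∀ t : ℝ, |t| < 1 → chebM n k ‖t • u‖ ≤ chebM n k t) → ‖u‖ ≤ 1 →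
      ∀ t : ℝ, 0 ≤ t → t ≤ 1 → |P (t • u)| ≤ chebTDerivOne n k := by
    intro u hu hu1 t ht0 ht1
    set p : Polynomial ℝ := ∑ j : Fin (n - k + 1),
      Polynomial.C (L j (fun _ => u)) * Polynomial.X ^ (j : ℕ) with hp
    have hev : ∀ s : ℝ, p.eval s = P (s • u) := by
      intro s
      rw [hL, hp, Polynomial.eval_finsetSum]
      refine Finset.sum_congr rfl fun j _ => ?_
      have := (L j).map_smul_univ (fun _ => s) (fun _ => u)
      rw [this]
      rw [Polynomial.eval_mul, Polynomial.eval_C, Polynomial.eval_pow, Polynomial.eval_X,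
        Finset.prod_const, Finset.card_univ, Fintype.card_fin, smul_eq_mul, mul_comm]
    rw [← hev]
    refine sd_one_dim n k (n - k) hk1 (by omega) p ?_ ?_ t ht0 ht1
    · refine (Polynomial.degree_sum_le _ _).trans_lt ?_
      refine (Finset.sup_lt_iff (WithBot.bot_lt_coe _)).2 fun j _ => ?_
      exact (Polynomial.degree_C_mul_X_pow_le _ _).trans_lt (by exact_mod_cast j.2)
    · intro s hs
      rw [hev, ← sq_abs]
      refine (hPM _ ?_).trans (hu s hs)
      rw [norm_smul, Real.norm_eq_abs]
      exact lt_of_le_of_lt (mul_le_of_le_one_right (abs_nonneg s) hu1) hs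
  have := main (‖x‖⁻¹ • x) ?_ ?_ ‖x‖ (norm_nonneg x) hx
  · rcases eq_or_ne x 0 with rfl | h0
    · simpa using this
    · rwa [smul_smul, mul_inv_cancel₀ (norm_ne_zero_iff.2 h0), one_smul] at this
  · intro t ht
    refine sdM_mono n k hk1 hkn ?_ ht
    rw [abs_norm, norm_smul, norm_smul, norm_inv, norm_norm, Real.norm_eq_abs]
    exact mul_le_of_le_one_right (abs_nonneg t) (inv_mul_le_one)
  · rw [norm_smul, norm_inv, norm_norm]
    exact inv_mul_le_one
end

section
/- (V. A. Markov's theorem on real Hilbert spaces.) Let H be a real Hilbert space, let P be a continuous polynomial of degree at most n on H with ‖P‖ ≤ 1, and let 1 ≤ k ≤ n. Then for every x ∈ H with ‖x‖ ≤ 1, ‖D^k P(x)‖ = ‖D̂^k P(x)‖ ≤ T_n^{(k)}(1) = n²(n²−1²)⋯(n²−(k−1)²)/(1·3⋯(2k−1)). -/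
open Metric

section MHHelpers

open Polynomial


lemma mh_nn_mul {p q : ℝ[X]} (hp : ∀ i, 0 ≤ p.coeff i) (hq : ∀ i, 0 ≤ q.coeff i) (i : ℕ) :
    0 ≤ (p * q).coeff i := by
  rw [coeff_mul]
  exact Finset.sum_nonneg fun x _ => mul_nonneg (hp _) (hq _)

lemma mh_nn_prod {ι : Type*} (s : Finset ι) (f : ι → ℝ[X])
    (h : ∀ x ∈ s, ∀ i, 0 ≤ (f x).coeff i) : ∀ i, 0 ≤ (∏ x ∈ s, f x).coeff i := by
  classical
  induction s using Finset.induction_on with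
  | empty => intro i; simp only [Finset.prod_empty, coeff_one]; split_ifs <;> norm_num
  | insert a s ha ih =>
    rw [Finset.prod_insert ha]
    exact mh_nn_mul (h a (by simp)) (ih fun x hx => h x (by simp [hx]))

lemma mh_nn_lin {z : ℝ} (hz : z ≤ 0) (i : ℕ) : 0 ≤ (X - C z : ℝ[X]).coeff i := by
  rw [coeff_sub, coeff_X, coeff_C]
  split_ifs <;> linarith

lemma mh_sign (N : ℕ) (z : ℕ → ℝ) (hanti : ∀ i j, i < j → j < N → z j < z i) (j : ℕ) (hj : j < N) :
    0 ≤ (-1) ^ j * ∏ i ∈ (Finset.range N).erase j, (z j - z i)⁻¹ := by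
  have h1 : ((-1 : ℝ)) ^ j = ∏ i ∈ (Finset.range N).erase j, (if i < j then (-1 : ℝ) else 1) := by
    rw [Finset.prod_ite, Finset.prod_const, Finset.prod_const_one, mul_one]
    congr 1
    have : ((Finset.range N).erase j).filter (· < j) = Finset.range j := by
      ext i; simp; omega
    rw [this, Finset.card_range]
  rw [h1, ← Finset.prod_mul_distrib]
  refine Finset.prod_nonneg fun i hi => ?_
  simp only [Finset.mem_erase, Finset.mem_range] at hi
  split_ifs with h
  · have := hanti i j h hj
    have : (z j - z i)⁻¹ < 0 := inv_lt_zero.2 (by linarith)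
    linarith
  · have := hanti j i (by omega) hi.2
    have : 0 < (z j - z i)⁻¹ := inv_pos.2 (by linarith)
    linarith

lemma mh_interp (N : ℕ) (z : ℕ → ℝ) (hz : ∀ j < N, z j ≤ 0)
    (hanti : ∀ i j, i < j → j < N → z j < z i) (d : ℝ[X]) (hd : d.natDegree ≤ N)
    (hlead : 0 ≤ d.coeff N) (hs : ∀ j < N, 0 ≤ (-1) ^ j * d.eval (z j)) (i : ℕ) :
    0 ≤ d.coeff i := by
  set W : ℝ[X] := ∏ j ∈ Finset.range N, (X - C (z j)) with hW
  have hWm : W.Monic := monic_prod_of_monic _ _ fun j _ => monic_X_sub_C _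
  have hWd : W.natDegree = N := by
    rw [hW, natDegree_prod_of_monic _ _ fun j _ => monic_X_sub_C _]; simp
  have hWN : W.coeff N = 1 := by
    have := hWm.coeff_natDegree; rwa [hWd] at this
  set e := d - C (d.coeff N) * W with he
  have hdeg : e.degree < ((Finset.range N).card : ℕ) := by
    rw [Finset.card_range, degree_lt_iff_coeff_zero]
    intro m hm
    rcases eq_or_lt_of_le hm with rfl | hm
    · simp [he, hWN]
    · rw [he, coeff_sub, coeff_C_mul, coeff_eq_zero_of_natDegree_lt (by omega),
        coeff_eq_zero_of_natDegree_lt (by omega : W.natDegree < m)]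
      simp
  have hinj : Set.InjOn z (Finset.range N : Finset ℕ) := by
    intro a ha b hb hab
    simp only [Finset.coe_range, Set.mem_Iio] at ha hb
    rcases lt_trichotomy a b with h | h | h
    · have := hanti a b h hb; linarith
    · exact h
    · have := hanti b a h ha; linarith
  have hev : ∀ j < N, e.eval (z j) = d.eval (z j) := by
    intro j hj
    have : W.eval (z j) = 0 := by
      rw [hW, eval_prod]
      exact Finset.prod_eq_zero (Finset.mem_range.2 hj) (by simp)
    simp [he, this]
  have hint := Lagrange.eq_interpolate hinj hdeg
  have hde : d = e + C (d.coeff N) * W := by rw [he]; ring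
  rw [hde, coeff_add, coeff_C_mul]
  refine add_nonneg ?_ (mul_nonneg hlead
    (mh_nn_prod _ _ (fun j hj => mh_nn_lin (hz j (Finset.mem_range.1 hj))) i))
  rw [hint, Lagrange.interpolate_apply, finsetSum_coeff]
  refine Finset.sum_nonneg fun j hj => ?_
  have hj' := Finset.mem_range.1 hj
  rw [hev j hj']
  have : C (d.eval (z j)) * Lagrange.basis (Finset.range N) z j
      = C (((-1) ^ j * d.eval (z j)) * ((-1) ^ j * ∏ i ∈ (Finset.range N).erase j, (z j - z i)⁻¹))
        * ∏ i ∈ (Finset.range N).erase j, (X - C (z i)) := by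
    have h1 : ((-1 : ℝ)) ^ j * (-1) ^ j = 1 := by rw [← mul_pow]; simp
    rw [Lagrange.basis]
    simp only [Lagrange.basisDivisor]
    rw [Finset.prod_mul_distrib, ← map_prod, ← mul_assoc, ← map_mul]
    congr 2
    linear_combination (- eval (z j) d * ∏ i ∈ (Finset.range N).erase j, (z j - z i)⁻¹) * h1
  rw [this, coeff_C_mul]
  refine mul_nonneg (mul_nonneg (hs j hj') (mh_sign N z hanti j hj')) ?_
  exact mh_nn_prod _ _ (fun k hk => mh_nn_lin (hz k
    (Finset.mem_range.1 (Finset.mem_of_mem_erase hk)))) i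

/-- evaluation version -/
lemma mh_interp_eval (N : ℕ) (z : ℕ → ℝ) (x : ℝ) (hz : ∀ j < N, z j ≤ x)
    (hanti : ∀ i j, i < j → j < N → z j < z i) (d : ℝ[X]) (hd : d.degree < N)
    (hs : ∀ j < N, 0 ≤ (-1) ^ j * d.eval (z j)) : 0 ≤ d.eval x := by
  have hN : N ≠ 0 ∨ d = 0 := by
    by_contra! h
    obtain ⟨rfl, h⟩ := h
    simp at hd; exact h hd
  rcases hN with hN | rfl
  swap
  · simp
  have hnat : (taylor x d).natDegree < N := by
    rw [natDegree_taylor]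
    by_cases h0 : d = 0
    · rw [h0, natDegree_zero]; exact Nat.pos_of_ne_zero hN
    · exact (natDegree_lt_iff_degree_lt h0).2 hd
  have := mh_interp N (fun j => z j - x) (fun j hj => by have := hz j hj; simpa using this)
    (fun i j h h' => by have := hanti i j h h'; simpa using this) (taylor x d) hnat.le
    (by rw [coeff_eq_zero_of_natDegree_lt hnat])
    (fun j hj => by rw [taylor_eval]; simpa using hs j hj) 0
  simpa [taylor_coeff_zero] using this

/-- `U` extremal property -/
lemma mh_U (n : ℕ) (hn : 1 ≤ n) (r : ℝ[X]) (hr : r.degree < n) 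
    (hb : ∀ θ : ℝ, |Real.sin θ * r.eval (Real.cos θ)| ≤ 1) (x : ℝ) (hx : 1 ≤ x) :
    |r.eval x| ≤ (Chebyshev.U ℝ ((n : ℤ) - 1)).eval x := by
  set U := Chebyshev.U ℝ ((n : ℤ) - 1) with hU
  have hn0 : (0 : ℝ) < n := by exact_mod_cast hn
  have hUd : U.degree < n := by
    obtain ⟨m, rfl⟩ : ∃ m, n = m + 1 := ⟨n - 1, by omega⟩
    rw [hU]
    have : ((m + 1 : ℕ) : ℤ) - 1 = (m : ℤ) := by push_cast; ring
    rw [this, Chebyshev.degree_U_natCast]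
    exact_mod_cast Nat.lt_succ_self m
  set φ : ℕ → ℝ := fun j => (2 * j + 1) * Real.pi / (2 * n) with hφ
  have hφ0 : ∀ j, 0 < φ j := fun j => by rw [hφ]; positivity
  have hφ1 : ∀ j < n, φ j < Real.pi := fun j hj => by
    have : (j : ℝ) + 1 ≤ n := by exact_mod_cast hj
    simp only [hφ]
    rw [div_lt_iff₀ (by positivity)]
    nlinarith [Real.pi_pos]
  have hφm : ∀ i j, i < j → φ i < φ j := fun i j h => by
    have : (i : ℝ) < j := by exact_mod_cast h
    simp only [hφ]
    gcongr
  have hsin : ∀ j < n, 0 < Real.sin (φ j) := fun j hj =>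
    Real.sin_pos_of_pos_of_lt_pi (hφ0 j) (hφ1 j hj)
  have hUe : ∀ j, (-1) ^ j * (U.eval (Real.cos (φ j)) * Real.sin (φ j)) = 1 := fun j => by
    rw [hU, Chebyshev.U_real_cos]
    have : (((n : ℤ) - 1 : ℤ) + 1 : ℝ) * φ j = Real.pi / 2 + j * Real.pi := by
      simp only [hφ]; push_cast; field_simp; ring
    rw [this, Real.sin_add_nat_mul_pi, Real.sin_pi_div_two, mul_one, ← mul_pow]; simp
  have key : ∀ e : ℝ, |e| = 1 → 0 ≤ (U - C e * r).eval x := by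
    intro e he
    refine mh_interp_eval n (fun j => Real.cos (φ j)) x
      (fun j _ => (Real.cos_le_one _).trans hx) ?_ _ ?_ ?_
    · intro i j hij hj
      exact Real.cos_lt_cos_of_nonneg_of_le_pi (hφ0 i).le (hφ1 j hj).le (hφm i j hij)
    · refine (degree_sub_le _ _).trans_lt (max_lt hUd ?_)
      rw [degree_C_mul (by intro h; simp [h] at he)]; exact hr
    · intro j hj
      have h1 := hb (φ j)
      have h2 : |(-1) ^ j * (e * (Real.sin (φ j) * r.eval (Real.cos (φ j))))| ≤ 1 := by
        rw [abs_mul, abs_neg_one_pow, abs_mul, he]; simpa using h1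
      have h3 := le_of_abs_le h2
      have h4 := hUe j
      have : 0 ≤ Real.sin (φ j) * ((-1) ^ j * eval (Real.cos (φ j)) (U - C e * r)) := by
        simp only [eval_sub, eval_mul, eval_C]
        nlinarith
      exact nonneg_of_mul_nonneg_right this (hsin j hj)
  have h1 := key 1 (by simp)
  have h2 := key (-1) (by simp)
  simp only [eval_sub, eval_mul, eval_C] at h1 h2
  rw [abs_le]; constructor <;> linarith

noncomputable def mhP (n : ℕ) (a : ℕ → ℕ → ℝ) (s t : ℝ) : ℝ :=
  ∑ i ∈ Finset.range (n + 1), ∑ j ∈ Finset.range (2 * (n + 1)), a i j * s ^ i * t ^ j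

noncomputable def mhQ (n : ℕ) (a : ℕ → ℕ → ℝ) (c s : ℝ) (o : ℕ) : ℝ[X] :=
  ∑ i ∈ Finset.range (n + 1), ∑ l ∈ Finset.range (n + 1),
    C (a i (2 * l + o)) * ((C c * X) ^ i * (C (s ^ 2) * (1 - X ^ 2)) ^ l)

noncomputable def mhB (n : ℕ) (a : ℕ → ℕ → ℝ) (k : ℕ) : ℝ :=
  ∑ i ∈ Finset.range (n + 1), a i k

noncomputable def mhE (n : ℕ) (a : ℕ → ℕ → ℝ) (o : ℕ) : ℝ[X] :=
  ∑ l ∈ Finset.range (n + 1), C (mhB n a (2 * l + o)) * X ^ l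

lemma mh_sum_two (f : ℕ → ℝ) (N : ℕ) : ∑ j ∈ Finset.range (2 * N), f j
    = ∑ l ∈ Finset.range N, f (2 * l) + ∑ l ∈ Finset.range N, f (2 * l + 1) := by
  induction N with
  | zero => simp
  | succ N ih =>
    rw [show 2 * (N + 1) = 2 * N + 1 + 1 by ring, Finset.sum_range_succ, Finset.sum_range_succ, ih,
      Finset.sum_range_succ, Finset.sum_range_succ]
    ring

lemma mhP_split (n : ℕ) (a : ℕ → ℕ → ℝ) (c s θ : ℝ) :
    mhP n a (c * Real.cos θ) (s * Real.sin θ) = (mhQ n a c s 0).eval (Real.cos θ)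
      + Real.sin θ * (s * (mhQ n a c s 1).eval (Real.cos θ)) := by
  have h : 1 - Real.cos θ ^ 2 = Real.sin θ ^ 2 := by rw [Real.sin_sq]
  simp only [mhP, mhQ, eval_finsetSum, eval_mul, eval_pow, eval_C, eval_X, eval_sub, eval_one, h,
    Finset.mul_sum, mh_sum_two, Finset.sum_add_distrib]
  congr 1
  · refine Finset.sum_congr rfl fun i _ => Finset.sum_congr rfl fun l _ => ?_
    rw [add_zero, pow_mul, mul_pow s]; ring
  · refine Finset.sum_congr rfl fun i _ => Finset.sum_congr rfl fun l _ => ?_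
    rw [pow_succ, pow_mul, mul_pow s]; ring

lemma mhQ_eval (n : ℕ) (a : ℕ → ℕ → ℝ) (c s : ℝ) (o : ℕ) (hc : c ≠ 0) (hcs : c ^ 2 + s ^ 2 = 1) :
    (mhQ n a c s o).eval (1 / c) = (mhE n a o).eval (-(1 / c - c) ^ 2) := by
  have h1 : c * (1 / c) = 1 := by field_simp
  have h2 : s ^ 2 * (1 - (1 / c) ^ 2) = -(1 / c - c) ^ 2 := by
    have : s ^ 2 = 1 - c ^ 2 := by linarith
    rw [this]; field_simp; ring
  simp only [mhQ, mhE, mhB, eval_finsetSum, eval_mul, eval_pow, eval_C, eval_X, eval_sub, eval_one,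
    h1, h2, one_pow, one_mul, Finset.sum_mul]
  rw [Finset.sum_comm]

lemma mhQ_natDegree (n : ℕ) (a : ℕ → ℕ → ℝ) (c s : ℝ) (o : ℕ) (ha : ∀ i j, n < i + j → a i j = 0) :
    (mhQ n a c s o).natDegree ≤ n - o := by
  refine natDegree_sum_le_of_forall_le _ _ fun i _ => natDegree_sum_le_of_forall_le _ _ fun l _ => ?_
  by_cases h : n < i + (2 * l + o)
  · rw [ha _ _ h]; simp
  · have h1 : ((C c * X) ^ i : ℝ[X]).natDegree ≤ i := by
      compute_degree
    have h2 : ((C (s ^ 2) * (1 - X ^ 2)) ^ l : ℝ[X]).natDegree ≤ l * 2 := by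
      refine natDegree_pow_le_of_le l ?_
      compute_degree
    refine (natDegree_C_mul_le _ _).trans ((natDegree_mul_le_of_le h1 h2).trans (by omega))

lemma mhE_coeff (n : ℕ) (a : ℕ → ℕ → ℝ) (o l : ℕ) (ha : ∀ i j, n < i + j → a i j = 0) :
    (mhE n a o).coeff l = mhB n a (2 * l + o) := by
  simp only [mhE, finsetSum_coeff, coeff_C_mul, coeff_X_pow, mul_ite, mul_one, mul_zero]
  rw [Finset.sum_ite_eq]
  split_ifs with h
  · rfl
  · simp only [Finset.mem_range, not_lt] at h
    exact (Finset.sum_eq_zero fun i _ => ha _ _ (by omega)).symm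

def mhBdd (n : ℕ) (a : ℕ → ℕ → ℝ) : Prop :=
  (∀ i j, n < i + j → a i j = 0) ∧ ∀ s t, |s| + |t| ≤ 1 → |mhP n a s t| ≤ 1

lemma mhBdd_circle {n : ℕ} {a : ℕ → ℕ → ℝ} (h : mhBdd n a) {c s : ℝ} (hcs : c ^ 2 + s ^ 2 = 1)
    (θ : ℝ) : |mhP n a (c * Real.cos θ) (s * Real.sin θ)| ≤ 1 := by
  refine h.2 _ _ ?_
  have h2 := Real.cos_sq_add_sin_sq θ
  rw [abs_mul, abs_mul]
  nlinarith [sq_nonneg (|c| - |Real.cos θ|), sq_nonneg (|s| - |Real.sin θ|), sq_abs c, sq_abs s,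
    sq_abs (Real.cos θ), sq_abs (Real.sin θ)]

lemma mh_even_bound {n : ℕ} {a : ℕ → ℕ → ℝ} (h : mhBdd n a) {c s : ℝ} (hc : 0 < c)
    (hcs : c ^ 2 + s ^ 2 = 1) :
    |(mhE n a 0).eval (-(1 / c - c) ^ 2)| ≤ (Chebyshev.T ℝ n).eval (1 / c) := by
  rw [← mhQ_eval n a c s 0 hc.ne' hcs]
  have hc1 : 1 ≤ 1 / c := by rw [le_div_iff₀ hc]; nlinarith [sq_nonneg s]
  have hd : (mhQ n a c s 0).degree ≤ n := by
    exact degree_le_of_natDegree_le (mhQ_natDegree n a c s 0 h.1)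
  have hb : ∀ x ∈ Set.Icc (-1 : ℝ) 1, |(mhQ n a c s 0).eval x| ≤ 1 := by
    intro x hx
    rw [← Real.cos_arccos hx.1 hx.2]
    have h1 := mhBdd_circle h hcs (Real.arccos x)
    have h2 := mhBdd_circle h hcs (-Real.arccos x)
    rw [mhP_split] at h1 h2
    rw [Real.cos_neg, Real.sin_neg] at h2
    rw [abs_le] at *
    constructor <;> linarith
  rw [abs_le']
  constructor
  · exact Chebyshev.eval_iterate_derivative_le_of_forall_abs_le_one (k := 0) hc1 hd hb
  · have := Chebyshev.eval_iterate_derivative_le_of_forall_abs_le_one (P := -mhQ n a c s 0) (k := 0)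
      hc1 (by rwa [degree_neg]) (fun x hx => by rw [eval_neg, abs_neg]; exact hb x hx)
    simpa using this

lemma mh_odd_bound {n : ℕ} (hn : 1 ≤ n) {a : ℕ → ℕ → ℝ} (h : mhBdd n a) {c s : ℝ} (hc : 0 < c)
    (hcs : c ^ 2 + s ^ 2 = 1) :
    |s * (mhE n a 1).eval (-(1 / c - c) ^ 2)| ≤ (Chebyshev.U ℝ ((n : ℤ) - 1)).eval (1 / c) := by
  rw [← mhQ_eval n a c s 1 hc.ne' hcs]
  have hc1 : 1 ≤ 1 / c := by rw [le_div_iff₀ hc]; nlinarith [sq_nonneg s]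
  have hd : (C s * mhQ n a c s 1).degree < n := by
    have := (natDegree_C_mul_le s _).trans (mhQ_natDegree n a c s 1 h.1)
    refine (degree_le_of_natDegree_le this).trans_lt ?_
    exact_mod_cast (by omega : n - 1 < n)
  have := mh_U n hn (C s * mhQ n a c s 1) hd (fun θ => ?_) (1 / c) hc1
  · simpa using this
  · have h1 := mhBdd_circle h hcs θ
    have h2 := mhBdd_circle h hcs (-θ)
    rw [mhP_split] at h1 h2
    rw [Real.cos_neg, Real.sin_neg] at h2
    rw [eval_mul, eval_C]
    rw [abs_le] at *
    constructor <;> linarith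

lemma mh_cheb_split {n : ℕ} {a : ℕ → ℕ → ℝ}
    (hT : ∀ s t, mhP n a s t = (Chebyshev.T ℝ n).eval (s + t)) (ψ θ : ℝ) :
    (mhQ n a (Real.cos ψ) (Real.sin ψ) 0).eval (Real.cos θ)
      + Real.sin θ * (Real.sin ψ * (mhQ n a (Real.cos ψ) (Real.sin ψ) 1).eval (Real.cos θ))
      = Real.cos (n * θ) * Real.cos (n * ψ) + Real.sin (n * θ) * Real.sin (n * ψ) := by
  rw [← mhP_split, hT, mul_comm (Real.cos ψ), mul_comm (Real.sin ψ), ← Real.cos_sub,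
    Chebyshev.T_real_cos, ← Real.cos_sub]
  push_cast
  ring_nf

lemma mh_cheb_even {n : ℕ} {a : ℕ → ℕ → ℝ}
    (hT : ∀ s t, mhP n a s t = (Chebyshev.T ℝ n).eval (s + t)) (ψ : ℝ) (hc : 0 < Real.cos ψ) :
    (mhE n a 0).eval (-(1 / Real.cos ψ - Real.cos ψ) ^ 2)
      = Real.cos (n * ψ) * (Chebyshev.T ℝ n).eval (1 / Real.cos ψ) := by
  rw [← mhQ_eval n a _ (Real.sin ψ) 0 hc.ne' (Real.cos_sq_add_sin_sq ψ)]
  have : mhQ n a (Real.cos ψ) (Real.sin ψ) 0 = C (Real.cos (n * ψ)) * Chebyshev.T ℝ n := by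
    refine eq_of_infinite_eval_eq _ _ ((Set.Icc_infinite (by norm_num : (-1 : ℝ) < 1)).mono ?_)
    intro x hx
    simp only [Set.mem_ofPred_eq]
    rw [← Real.cos_arccos hx.1 hx.2]
    have h1 := mh_cheb_split hT ψ (Real.arccos x)
    have h2 := mh_cheb_split hT ψ (-Real.arccos x)
    simp only [Real.cos_neg, Real.sin_neg, mul_neg] at h2
    rw [eval_mul, eval_C, Chebyshev.T_real_cos]
    push_cast
    linarith
  rw [this, eval_mul, eval_C]

lemma mh_cheb_odd {n : ℕ} {a : ℕ → ℕ → ℝ}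
    (hT : ∀ s t, mhP n a s t = (Chebyshev.T ℝ n).eval (s + t)) (ψ : ℝ) (hc : 0 < Real.cos ψ) :
    Real.sin ψ * (mhE n a 1).eval (-(1 / Real.cos ψ - Real.cos ψ) ^ 2)
      = Real.sin (n * ψ) * (Chebyshev.U ℝ ((n : ℤ) - 1)).eval (1 / Real.cos ψ) := by
  rw [← mhQ_eval n a _ (Real.sin ψ) 1 hc.ne' (Real.cos_sq_add_sin_sq ψ)]
  have : C (Real.sin ψ) * mhQ n a (Real.cos ψ) (Real.sin ψ) 1
      = C (Real.sin (n * ψ)) * Chebyshev.U ℝ ((n : ℤ) - 1) := by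
    refine eq_of_infinite_eval_eq _ _ ((Set.Ioo_infinite (by norm_num : (-1 : ℝ) < 1)).mono ?_)
    intro x hx
    simp only [Set.mem_ofPred_eq]
    have hs : 0 < Real.sin (Real.arccos x) := by
      rw [Real.sin_arccos]; apply Real.sqrt_pos.2; nlinarith [hx.1, hx.2]
    rw [← Real.cos_arccos hx.1.le hx.2.le]
    have h1 := mh_cheb_split hT ψ (Real.arccos x)
    have h2 := mh_cheb_split hT ψ (-Real.arccos x)
    simp only [Real.cos_neg, Real.sin_neg, mul_neg] at h2
    have h3 := Chebyshev.U_real_cos (Real.arccos x) ((n : ℤ) - 1)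
    rw [eval_mul, eval_C, eval_mul, eval_C]
    push_cast at h3
    rw [sub_add_cancel] at h3
    refine mul_left_cancel₀ hs.ne' ?_
    linear_combination (h1 - h2) / 2 - Real.sin (n * ψ) * h3
  have h := congrArg (eval (1 / Real.cos ψ)) this
  simpa only [eval_mul, eval_C] using h

lemma mhB_sub (n : ℕ) (a a' : ℕ → ℕ → ℝ) (k : ℕ) (e : ℝ) :
    mhB n (fun i j => a i j - e * a' i j) k = mhB n a k - e * mhB n a' k := by
  simp [mhB, Finset.mul_sum]

lemma mhE_sub (n : ℕ) (a a' : ℕ → ℕ → ℝ) (o : ℕ) (e : ℝ) :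
    mhE n (fun i j => a i j - e * a' i j) o = mhE n a o - C e * mhE n a' o := by
  simp only [mhE, mhB_sub, Finset.mul_sum, ← Finset.sum_sub_distrib]
  refine Finset.sum_congr rfl fun l _ => ?_
  simp only [map_sub, map_mul]; ring

lemma mhB_top (n : ℕ) (a : ℕ → ℕ → ℝ) (ha : ∀ i j, n < i + j → a i j = 0) :
    mhB n a n = a 0 n := by
  rw [mhB, Finset.sum_eq_single 0]
  · intro i _ hi; exact ha _ _ (by omega)
  · simp

lemma mhP_zero (n : ℕ) (a : ℕ → ℕ → ℝ) (t : ℝ) :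
    mhP n a 0 t = (∑ j ∈ Finset.range (2 * (n + 1)), C (a 0 j) * X ^ j : ℝ[X]).eval t := by
  rw [mhP, Finset.sum_eq_single 0]
  · simp [eval_finsetSum]
  · intro i _ hi; simp [hi]
  · simp

lemma mhP_zero_deg (n : ℕ) (a : ℕ → ℕ → ℝ) (ha : ∀ i j, n < i + j → a i j = 0) :
    (∑ j ∈ Finset.range (2 * (n + 1)), C (a 0 j) * X ^ j : ℝ[X]).natDegree ≤ n := by
  refine natDegree_sum_le_of_forall_le _ _ fun j _ => ?_
  by_cases h : n < 0 + j
  · rw [ha _ _ h]; simp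
  · exact (natDegree_C_mul_X_pow_le _ _).trans (by omega)

lemma mhP_zero_coeff (n : ℕ) (a : ℕ → ℕ → ℝ) :
    (∑ j ∈ Finset.range (2 * (n + 1)), C (a 0 j) * X ^ j : ℝ[X]).coeff n = a 0 n := by
  simp only [finsetSum_coeff, coeff_C_mul, coeff_X_pow, mul_ite, mul_one, mul_zero]
  rw [Finset.sum_ite_eq, if_pos (by simp; omega)]

lemma mh_top_bound {n : ℕ} {a : ℕ → ℕ → ℝ} (h : mhBdd n a) : |mhB n a n| ≤ 2 ^ (n - 1) := by
  rw [mhB_top n a h.1, ← mhP_zero_coeff n a]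
  have hd := degree_le_of_natDegree_le (mhP_zero_deg n a h.1)
  have hb : ∀ x ∈ Set.Icc (-1 : ℝ) 1,
      |(∑ j ∈ Finset.range (2 * (n + 1)), C (a 0 j) * X ^ j : ℝ[X]).eval x| ≤ 1 := by
    intro x hx
    rw [← mhP_zero]
    exact h.2 _ _ (by simpa using abs_le.2 hx)
  rw [abs_le']
  refine ⟨Chebyshev.coeff_le_of_forall_abs_le_one hd hb, ?_⟩
  rw [← coeff_neg]
  exact Chebyshev.coeff_le_of_forall_abs_le_one (by rwa [degree_neg])
    (fun x hx => by rw [eval_neg, abs_neg]; exact hb x hx)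

lemma mh_top_cheb {n : ℕ} {a : ℕ → ℕ → ℝ} (ha : ∀ i j, n < i + j → a i j = 0)
    (hT : ∀ s t, mhP n a s t = (Chebyshev.T ℝ n).eval (s + t)) : mhB n a n = 2 ^ (n - 1) := by
  rw [mhB_top n a ha, ← mhP_zero_coeff n a]
  have : (∑ j ∈ Finset.range (2 * (n + 1)), C (a 0 j) * X ^ j : ℝ[X]) = Chebyshev.T ℝ n := by
    refine Polynomial.funext fun t => ?_
    rw [← mhP_zero, hT, zero_add]
  rw [this]
  have h := Chebyshev.leadingCoeff_T ℝ (n : ℤ)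
  rw [leadingCoeff, Chebyshev.natDegree_T] at h
  simpa using h

lemma mhB_big {n : ℕ} {a : ℕ → ℕ → ℝ} (ha : ∀ i j, n < i + j → a i j = 0) {k : ℕ} (hk : n < k) :
    mhB n a k = 0 := Finset.sum_eq_zero fun i _ => ha _ _ (by omega)

/-- The two-variable Markov inequality. -/
lemma mh_main {n : ℕ} (hn : 1 ≤ n) {a a' : ℕ → ℕ → ℝ} (ha : ∀ i j, n < i + j → a i j = 0)
    (hT : ∀ s t, mhP n a s t = (Chebyshev.T ℝ n).eval (s + t)) (h' : mhBdd n a') (k : ℕ) :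
    |mhB n a' k| ≤ mhB n a k := by
  suffices H : ∀ e : ℝ, |e| = 1 → 0 ≤ mhB n a k - e * mhB n a' k by
    have h1 := H 1 (by simp)
    have h2 := H (-1) (by simp)
    rw [abs_le]; constructor <;> linarith
  intro e he
  have hn0 : (0 : ℝ) < n := by exact_mod_cast hn
  set D : ℕ → ℕ → ℝ := fun i j => a i j - e * a' i j with hD
  have hD0 : ∀ i j, n < i + j → D i j = 0 := fun i j h => by simp [hD, ha i j h, h'.1 i j h]
  rw [← mhB_sub]
  have htop : ∀ m, n ≤ m → 0 ≤ mhB n D m := by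
    intro m hm
    rcases eq_or_lt_of_le hm with rfl | hm
    · rw [hD, mhB_sub, mh_top_cheb ha hT]
      have h1 : |e * mhB n a' n| ≤ 2 ^ (n - 1) := by
        rw [abs_mul, he, one_mul]; exact mh_top_bound h'
      linarith [le_of_abs_le h1]
    · rw [mhB_big hD0 hm]
  have hmono : ∀ x y : ℝ, 0 ≤ x → x < y → y < Real.pi / 2 →
      -(1 / Real.cos y - Real.cos y) ^ 2 < -(1 / Real.cos x - Real.cos x) ^ 2 := by
    intro x y hx hxy hy
    have hcy : 0 < Real.cos y := Real.cos_pos_of_mem_Ioo ⟨by linarith, hy⟩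
    have hlt : Real.cos y < Real.cos x :=
      Real.cos_lt_cos_of_nonneg_of_le_pi hx (by linarith [Real.pi_pos]) hxy
    have h1 : 1 / Real.cos x < 1 / Real.cos y := one_div_lt_one_div_of_lt hcy hlt
    have h2 : 1 ≤ 1 / Real.cos x := by
      rw [le_div_iff₀ (hcy.trans hlt), one_mul]; exact Real.cos_le_one x
    have h3 := Real.cos_le_one x
    have : (1 / Real.cos x - Real.cos x) ^ 2 < (1 / Real.cos y - Real.cos y) ^ 2 := by
      apply pow_lt_pow_left₀ _ _ (by norm_num) <;> linarith
    linarith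
  rcases Nat.even_or_odd' k with ⟨l, rfl | rfl⟩
  · -- even
    have hθ : ∀ j < (n + 1) / 2, (j : ℝ) * Real.pi / n < Real.pi / 2 := by
      intro j hj
      have : (2 * j : ℝ) < n := by exact_mod_cast (by omega : 2 * j < n)
      rw [div_lt_iff₀ hn0]; nlinarith [Real.pi_pos]
    have := mh_interp ((n + 1) / 2)
      (fun j => -(1 / Real.cos (j * Real.pi / n) - Real.cos (j * Real.pi / n)) ^ 2)
      (fun j _ => by simp only [Left.neg_nonpos_iff]; positivity)
      (fun i j hij hj => hmono _ _ (by positivity)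
        (by have : (i : ℝ) < j := by exact_mod_cast hij
            gcongr) (hθ j hj))
      (mhE n D 0) ?_ ?_ ?_ l
    · rwa [mhE_coeff n D 0 l hD0] at this
    · rw [natDegree_le_iff_coeff_eq_zero]
      intro N hN
      rw [mhE_coeff n D 0 N hD0, mhB_big hD0 (by omega)]
    · rw [mhE_coeff n D 0 _ hD0]; exact htop _ (by omega)
    · intro j hj
      set ψ := (j : ℝ) * Real.pi / n with hψ
      have hψ0 : 0 ≤ ψ := by positivity
      have hc : 0 < Real.cos ψ := Real.cos_pos_of_mem_Ioo ⟨by linarith [Real.pi_pos], hθ j hj⟩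
      rw [hD, mhE_sub, eval_sub, eval_mul, eval_C, mh_cheb_even hT ψ hc]
      have h1 := mh_even_bound h' hc (Real.cos_sq_add_sin_sq ψ)
      have h2 : Real.cos (n * ψ) = (-1) ^ j := by
        rw [hψ, mul_div_cancel₀ _ hn0.ne', Real.cos_nat_mul_pi]
      rw [h2]
      have h3 : |(-1) ^ j * (e * (mhE n a' 0).eval (-(1 / Real.cos ψ - Real.cos ψ) ^ 2))|
          ≤ (Chebyshev.T ℝ n).eval (1 / Real.cos ψ) := by
        rw [abs_mul, abs_neg_one_pow, abs_mul, he]; simpa using h1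
      have h4 : ((-1 : ℝ)) ^ j * (-1) ^ j = 1 := by rw [← mul_pow]; simp
      have := le_of_abs_le h3
      linear_combination this - (Chebyshev.T ℝ n).eval (1 / Real.cos ψ) * h4
  · -- odd
    have hθ : ∀ j < n / 2, (2 * (j : ℝ) + 1) * Real.pi / (2 * n) < Real.pi / 2 := by
      intro j hj
      have : (2 * j + 1 : ℝ) < n := by exact_mod_cast (by omega : 2 * j + 1 < n)
      rw [div_lt_iff₀ (by positivity)]; nlinarith [Real.pi_pos]
    have := mh_interp (n / 2)
      (fun j => -(1 / Real.cos ((2 * (j : ℝ) + 1) * Real.pi / (2 * n))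
        - Real.cos ((2 * (j : ℝ) + 1) * Real.pi / (2 * n))) ^ 2)
      (fun j _ => by simp only [Left.neg_nonpos_iff]; positivity)
      (fun i j hij hj => hmono _ _ (by positivity)
        (by have : (i : ℝ) < j := by exact_mod_cast hij
            gcongr) (hθ j hj))
      (mhE n D 1) ?_ ?_ ?_ l
    · rwa [mhE_coeff n D 1 l hD0] at this
    · rw [natDegree_le_iff_coeff_eq_zero]
      intro N hN
      rw [mhE_coeff n D 1 N hD0, mhB_big hD0 (by omega)]
    · rw [mhE_coeff n D 1 _ hD0]; exact htop _ (by omega)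
    · intro j hj
      set ψ := (2 * (j : ℝ) + 1) * Real.pi / (2 * n) with hψ
      have hψ0 : 0 < ψ := by positivity
      have hc : 0 < Real.cos ψ := Real.cos_pos_of_mem_Ioo ⟨by linarith [Real.pi_pos], hθ j hj⟩
      have hs : 0 < Real.sin ψ :=
        Real.sin_pos_of_pos_of_lt_pi hψ0 (by linarith [Real.pi_pos, hθ j hj])
      rw [hD, mhE_sub, eval_sub, eval_mul, eval_C]
      have h0 := mh_cheb_odd hT ψ hc
      have h1 := mh_odd_bound hn h' hc (Real.cos_sq_add_sin_sq ψ)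
      have h2 : Real.sin (n * ψ) = (-1) ^ j := by
        have : n * ψ = Real.pi / 2 + j * Real.pi := by
          rw [hψ]; field_simp; ring
        rw [this, Real.sin_add_nat_mul_pi, Real.sin_pi_div_two, mul_one]
      rw [h2] at h0
      have h3 : |(-1) ^ j * (e * (Real.sin ψ *
          (mhE n a' 1).eval (-(1 / Real.cos ψ - Real.cos ψ) ^ 2)))|
          ≤ (Chebyshev.U ℝ ((n : ℤ) - 1)).eval (1 / Real.cos ψ) := by
        rw [abs_mul, abs_neg_one_pow, abs_mul, he, one_mul, one_mul]; exact h1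
      have h4 : ((-1 : ℝ)) ^ j * (-1) ^ j = 1 := by rw [← mul_pow]; simp
      have := le_of_abs_le h3
      refine nonneg_of_mul_nonneg_right (a := Real.sin ψ) ?_ hs
      linear_combination this - (Chebyshev.U ℝ ((n : ℤ) - 1)).eval (1 / Real.cos ψ) * h4
        - (-1) ^ j * h0

def mhBiv (n : ℕ) (F : ℝ → ℝ → ℝ) : Prop :=
  ∃ a : ℕ → ℕ → ℝ, (∀ i j, n < i + j → a i j = 0) ∧ ∀ s t, mhP n a s t = F s t

lemma mhBiv_zero (n : ℕ) : mhBiv n (fun _ _ => 0) :=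
  ⟨fun _ _ => 0, fun _ _ _ => rfl, fun s t => by simp [mhP]⟩

lemma mhBiv_add {n : ℕ} {F G : ℝ → ℝ → ℝ} (hF : mhBiv n F) (hG : mhBiv n G) :
    mhBiv n (fun s t => F s t + G s t) := by
  obtain ⟨a, ha, hF⟩ := hF
  obtain ⟨b, hb, hG⟩ := hG
  refine ⟨fun i j => a i j + b i j, fun i j h => by simp [ha i j h, hb i j h], fun s t => ?_⟩
  show _ = F s t + G s t
  rw [← hF, ← hG]
  simp only [mhP, ← Finset.sum_add_distrib]
  refine Finset.sum_congr rfl fun i _ => Finset.sum_congr rfl fun j _ => by ring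

lemma mhBiv_sum {n : ℕ} {ι : Type*} (S : Finset ι) (F : ι → ℝ → ℝ → ℝ)
    (h : ∀ i ∈ S, mhBiv n (F i)) : mhBiv n (fun s t => ∑ i ∈ S, F i s t) := by
  classical
  induction S using Finset.induction_on with
  | empty => simpa using mhBiv_zero n
  | insert i S hi ih =>
    simp only [Finset.sum_insert hi]
    exact mhBiv_add (h i (Finset.mem_insert_self i S))
      (ih fun j hj => h j (Finset.mem_insert_of_mem hj))

lemma mhBiv_mono {n : ℕ} (c : ℝ) (p q : ℕ) (h : p + q ≤ n) :
    mhBiv n (fun s t => c * s ^ p * t ^ q) := by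
  refine ⟨fun i j => if i = p ∧ j = q then c else 0, fun i j hij => ?_, fun s t => ?_⟩
  · show (if i = p ∧ j = q then c else 0) = 0
    rw [if_neg]
    rintro ⟨rfl, rfl⟩
    omega
  · unfold mhP
    rw [Finset.sum_eq_single p, Finset.sum_eq_single q]
    · simp
    · intro j _ hj
      simp [hj]
    · intro hq
      simp at hq
      omega
    · intro i _ hi
      simp [hi]
    · intro hp
      simp at hp
      omega

lemma mhBiv_poly (n : ℕ) (p : ℝ[X]) (hp : p.natDegree ≤ n) :
    mhBiv n (fun s t => p.eval (s + t)) := by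
  have : (fun s t : ℝ => p.eval (s + t)) = fun s t => ∑ m ∈ Finset.range (n + 1),
      ∑ i ∈ Finset.range (m + 1), (p.coeff m * (m.choose i : ℝ)) * s ^ i * t ^ (m - i) := by
    funext s t
    rw [eval_eq_sum_range' (Nat.lt_succ_of_le hp)]
    refine Finset.sum_congr rfl fun m _ => ?_
    rw [add_pow, Finset.mul_sum]
    refine Finset.sum_congr rfl fun i _ => by ring
  rw [this]
  refine mhBiv_sum _ _ fun m hm => mhBiv_sum _ _ fun i hi => mhBiv_mono _ _ _ ?_
  simp at hm hi
  omega

lemma mhBiv_multi {H : Type*} [NormedAddCommGroup H] [NormedSpace ℝ H] {n j : ℕ} (hj : j ≤ n)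
    (L : ContinuousMultilinearMap ℝ (fun _ : Fin j => H) ℝ) (x y : H) :
    mhBiv n (fun s t => L (fun _ => s • x + t • y)) := by
  have : (fun s t : ℝ => L (fun _ => s • x + t • y)) = fun s t => ∑ S : Finset (Fin j),
      L (S.piecewise (fun _ => x) (fun _ => y)) * s ^ S.card * t ^ (j - S.card) := by
    funext s t
    have h1 : (fun _ : Fin j => s • x + t • y) = (fun _ => s • x) + (fun _ => t • y) := rfl
    rw [h1, ContinuousMultilinearMap.map_add_univ]
    refine Finset.sum_congr rfl fun S _ => ?_
    have h2 : S.piecewise (fun _ => s • x) (fun _ => t • y)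
        = fun i => (S.piecewise (fun _ => s) (fun _ => t) i : ℝ) •
          (S.piecewise (fun _ => x) (fun _ => y) i : H) := by
      funext i
      by_cases hi : i ∈ S <;> simp [hi]
    rw [h2, ContinuousMultilinearMap.map_smul_univ, Finset.prod_piecewise]
    simp [Finset.card_sdiff]
    ring
  rw [this]
  refine mhBiv_sum _ _ fun S _ => mhBiv_mono _ _ _ ?_
  have := S.card_le_univ
  simp at this
  omega

noncomputable def mhR (n : ℕ) (a : ℕ → ℕ → ℝ) : ℝ[X] :=
  ∑ j ∈ Finset.range (2 * (n + 1)), C (mhB n a j) * X ^ j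

lemma mhR_eval (n : ℕ) (a : ℕ → ℕ → ℝ) (t : ℝ) : (mhR n a).eval t = mhP n a 1 t := by
  simp only [mhR, mhP, mhB, eval_finsetSum, eval_mul, eval_C, eval_pow, eval_X, Finset.sum_mul]
  rw [Finset.sum_comm]
  simp

lemma mhR_coeff (n : ℕ) (a : ℕ → ℕ → ℝ) {k : ℕ} (hk : k ≤ n) : (mhR n a).coeff k = mhB n a k := by
  simp only [mhR, finsetSum_coeff, coeff_C_mul, coeff_X_pow]
  rw [Finset.sum_eq_single k]
  · simp
  · intro j _ hj
    simp [hj.symm]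
  · intro h
    simp at h
    omega

lemma mh_iterDeriv (p : ℝ[X]) (k : ℕ) :
    iteratedDeriv k (fun x => p.eval x) = fun x => (derivative^[k] p).eval x := by
  induction k with
  | zero => simp
  | succ k ih =>
    rw [iteratedDeriv_succ, ih]
    funext x
    rw [Polynomial.deriv, Function.iterate_succ_apply']

lemma mhR_deriv (n : ℕ) (a : ℕ → ℕ → ℝ) {k : ℕ} (hk : k ≤ n) :
    iteratedDeriv k (fun t => mhP n a 1 t) 0 = k.factorial * mhB n a k := by
  have : (fun t => mhP n a 1 t) = fun t => (mhR n a).eval t := by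
    funext t
    rw [mhR_eval]
  rw [this, mh_iterDeriv]
  show eval 0 _ = _
  rw [← coeff_zero_eq_eval_zero, coeff_iterate_derivative]
  simp [mhR_coeff n a hk, Nat.descFactorial_self]

lemma mh_cheb_deriv {n : ℕ} {a : ℕ → ℕ → ℝ}
    (hT : ∀ s t, mhP n a s t = (Chebyshev.T ℝ n).eval (s + t)) {k : ℕ} (hk : k ≤ n) :
    (k.factorial : ℝ) * mhB n a k = (derivative^[k] (Chebyshev.T ℝ n)).eval 1 := by
  rw [← mhR_deriv n a hk]
  have : (fun t => mhP n a 1 t) = fun t => (fun z => (Chebyshev.T ℝ n).eval z) (1 + t) := by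
    funext t
    rw [hT]
  rw [this, iteratedDeriv_comp_const_add k (fun z => (Chebyshev.T ℝ n).eval z) 1, mh_iterDeriv]
  simp

lemma mh_contDiff {H : Type*} [NormedAddCommGroup H] [NormedSpace ℝ H] {n : ℕ} {P : H → ℝ}
    (L : (j : Fin (n + 1)) → ContinuousMultilinearMap ℝ (fun _ : Fin (j : ℕ) => H) ℝ)
    (hL : ∀ x, P x = ∑ j, L j (fun _ => x)) (N : WithTop ℕ∞) : ContDiff ℝ N P := by
  have : P = fun x => ∑ j, L j (fun _ => x) := funext hL
  rw [this]
  refine ContDiff.sum fun j _ => (L j).contDiff.comp (contDiff_pi.2 fun _ => contDiff_id)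

lemma mh_diag {H : Type*} [NormedAddCommGroup H] [NormedSpace ℝ H] {P : H → ℝ}
    (k : ℕ) (hP : ContDiff ℝ k P) (x y : H) :
    iteratedFDeriv ℝ k P x (fun _ => y) = iteratedDeriv k (fun t : ℝ => P (x + t • y)) 0 := by
  have h1 : (fun t : ℝ => P (x + t • y))
      = (fun z => P (x + z)) ∘ (ContinuousLinearMap.toSpanSingleton ℝ y) := by
    funext t
    simp
  have h2 : ContDiff ℝ k (fun z => P (x + z)) := hP.comp (contDiff_const.add contDiff_id)
  rw [h1, iteratedDeriv_eq_iteratedFDeriv,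
    ContinuousLinearMap.iteratedFDeriv_comp_right _ h2 _ le_rfl, iteratedFDeriv_comp_add_left]
  simp

lemma mh_bound {H : Type*} [NormedAddCommGroup H] [NormedSpace ℝ H]
    (n k : ℕ) (hk1 : 1 ≤ k) (hkn : k ≤ n) (P : H → ℝ)
    (L : (j : Fin (n + 1)) → ContinuousMultilinearMap ℝ (fun _ : Fin (j : ℕ) => H) ℝ)
    (hL : ∀ x, P x = ∑ j, L j (fun _ => x))
    (hPnorm : ∀ x : H, ‖x‖ ≤ 1 → |P x| ≤ 1)
    (x : H) (hx : ‖x‖ ≤ 1) (y : H) (hy : ‖y‖ ≤ 1) :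
    ‖iteratedFDeriv ℝ k P x (fun _ => y)‖
      ≤ (derivative^[k] (Chebyshev.T ℝ (n : ℤ))).eval 1 := by
  obtain ⟨a, ha, hT⟩ := mhBiv_poly n (Chebyshev.T ℝ (n : ℤ)) (by simp [Chebyshev.natDegree_T])
  have hB : mhBiv n (fun s t => P (s • x + t • y)) := by
    simp only [hL]
    exact mhBiv_sum _ _ fun j _ => mhBiv_multi (Nat.lt_succ_iff.1 j.2) _ _ _
  obtain ⟨b, hb, hbP⟩ := hB
  have hbb : mhBdd n b := by
    refine ⟨hb, fun s t hst => ?_⟩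
    rw [hbP]
    refine hPnorm _ ((norm_add_le _ _).trans ?_)
    rw [norm_smul, norm_smul, Real.norm_eq_abs, Real.norm_eq_abs]
    nlinarith [abs_nonneg s, abs_nonneg t]
  have h1 := mh_main (hk1.trans hkn) ha hT hbb k
  rw [← mh_cheb_deriv hT hkn, mh_diag k (mh_contDiff L hL _)]
  have : (fun t : ℝ => P (x + t • y)) = fun t => mhP n b 1 t := by
    funext t
    rw [hbP]
    simp
  rw [this, mhR_deriv n b hkn, norm_mul, Real.norm_natCast, Real.norm_eq_abs]
  gcongr

/-- Banach: a maximiser of a symmetric form may be taken diagonal, finite-dimensional case. -/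
lemma mh_merge {E : Type*} [NormedAddCommGroup E] [InnerProductSpace ℝ E] {k : ℕ}
    (L : ContinuousMultilinearMap ℝ (fun _ : Fin k => E) ℝ)
    (hsym : ∀ (v : Fin k → E) (σ : Equiv.Perm (Fin k)), L (v ∘ σ) = L v)
    (N : ℝ) (hN : ∀ m : Fin k → E, (∀ i, ‖m i‖ = 1) → |L m| ≤ N)
    (y : Fin k → E) (hy : ∀ i, ‖y i‖ = 1) (hyN : |L y| = N) (i j : Fin k) (hij : i ≠ j)
    (hne : y i + y j ≠ 0) :
    |L (Function.update (Function.update y i (‖y i + y j‖⁻¹ • (y i + y j))) j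
      (‖y i + y j‖⁻¹ • (y i + y j)))| = N := by
  classical
  set B : E → E → ℝ := fun u v => L (Function.update (Function.update y i u) j v) with hB
  have hN0 : 0 ≤ N := hyN ▸ abs_nonneg _
  have addr : ∀ u v w, B u (v + w) = B u v + B u w := fun u v w => by
    simp [hB, L.map_update_add]
  have smulr : ∀ u (c : ℝ) v, B u (c • v) = c * B u v := fun u c v => by
    simp [hB, L.map_update_smul]
  have comm : ∀ u v, B u v = B v u := fun u v => by
    simp only [hB]
    rw [← hsym _ (Equiv.swap i j)]
    congr 1
    funext l
    by_cases h1 : l = i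
    · subst h1
      simp [hij]
    · by_cases h2 : l = j
      · subst h2
        simp [hij]
      · simp [Equiv.swap_apply_of_ne_of_ne h1 h2, h1, h2]
  have addl : ∀ u v w, B (v + w) u = B v u + B w u := fun u v w => by
    rw [comm, addr, comm u v, comm u w]
  have smull : ∀ u (c : ℝ) v, B (c • v) u = c * B v u := fun u c v => by
    rw [comm, smulr, comm]
  have hunit : ∀ u v, ‖u‖ = 1 → ‖v‖ = 1 → |B u v| ≤ N := fun u v hu hv => by
    refine hN _ fun l => ?_
    by_cases h2 : l = j
    · subst h2
      simpa using hv
    · by_cases h1 : l = i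
      · subst h1
        simpa [h2] using hu
      · simp [h1, h2, hy]
  have hdiag : ∀ u, |B u u| ≤ N * ‖u‖ ^ 2 := fun u => by
    by_cases hu : u = 0
    · subst hu
      have : B 0 0 = 0 := by simpa using smulr 0 0 0
      simp [this]
    · have hu' : ‖u‖ ≠ 0 := norm_ne_zero_iff.2 hu
      have h1 : ‖(‖u‖⁻¹ • u : E)‖ = 1 := norm_smul_inv_norm (𝕜 := ℝ) hu
      have h2 : B u u = ‖u‖ ^ 2 * B (‖u‖⁻¹ • u) (‖u‖⁻¹ • u) := by
        rw [smulr, smull]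
        field_simp
      rw [h2, abs_mul, abs_of_nonneg (by positivity), mul_comm]
      gcongr
      exact hunit _ _ h1 h1
  have hyB : B (y i) (y j) = L y := by simp [hB]
  have hpol : 4 * B (y i) (y j) = B (y i + y j) (y i + y j) - B (y i - y j) (y i - y j) := by
    have hs : y i - y j = y i + (-1 : ℝ) • y j := by simp [sub_eq_add_neg]
    rw [hs]
    simp only [addl, addr, smull, smulr, comm (y j) (y i)]
    ring
  have hpar : ‖y i + y j‖ ^ 2 + ‖y i - y j‖ ^ 2 = 4 := by
    have := parallelogram_law_with_norm ℝ (y i) (y j)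
    rw [hy, hy] at this
    nlinarith
  have hge : N * ‖y i + y j‖ ^ 2 ≤ |B (y i + y j) (y i + y j)| := by
    have h1 := hdiag (y i - y j)
    have h2 : 4 * N = |B (y i + y j) (y i + y j) - B (y i - y j) (y i - y j)| := by
      rw [← hpol, hyB, abs_mul, hyN]
      norm_num
    have h3 := abs_sub (B (y i + y j) (y i + y j)) (B (y i - y j) (y i - y j))
    nlinarith
  have heq : |B (y i + y j) (y i + y j)| = N * ‖y i + y j‖ ^ 2 := le_antisymm (hdiag _) hge
  have hne' : ‖y i + y j‖ ≠ 0 := norm_ne_zero_iff.2 hne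
  show |B (‖y i + y j‖⁻¹ • (y i + y j)) (‖y i + y j‖⁻¹ • (y i + y j))| = N
  rw [smulr, smull, abs_mul, abs_mul, heq, abs_of_nonneg (by positivity)]
  field_simp

lemma mh_inner_gain {E : Type*} [NormedAddCommGroup E] [InnerProductSpace ℝ E] {u v e : E}
    (hu : ‖u‖ = 1) (hv : ‖v‖ = 1) (huv : u ≠ v) (hue : 0 < inner ℝ u e) (hve : 0 ≤ inner ℝ v e) :
    u + v ≠ 0 ∧ inner ℝ u e + inner ℝ v e
      < 2 * inner ℝ (‖u + v‖⁻¹ • (u + v)) e := by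
  have h0 : 0 < inner ℝ (u + v) e := by
    rw [inner_add_left]
    linarith
  have hne : u + v ≠ 0 := by
    rintro h
    simp [h] at h0
  refine ⟨hne, ?_⟩
  have hpos : 0 < ‖u + v‖ := norm_pos_iff.2 hne
  have hlt : ‖u + v‖ < 2 := by
    have h1 := parallelogram_law_with_norm ℝ u v
    rw [hu, hv] at h1
    have h2 : 0 < ‖u - v‖ := norm_pos_iff.2 (sub_ne_zero.2 huv)
    nlinarith
  rw [real_inner_smul_left, ← inner_add_left]
  have : 1 < 2 * ‖u + v‖⁻¹ := by
    rw [← div_eq_mul_inv, lt_div_iff₀ hpos]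
    linarith
  nlinarith

lemma mh_banach_fin {E : Type*} [NormedAddCommGroup E] [InnerProductSpace ℝ E]
    [FiniteDimensional ℝ E] {k : ℕ}
    (L : ContinuousMultilinearMap ℝ (fun _ : Fin k => E) ℝ)
    (hsym : ∀ (v : Fin k → E) (σ : Equiv.Perm (Fin k)), L (v ∘ σ) = L v) (hk : 1 ≤ k)
    (m : Fin k → E) (hm : ∀ i, ‖m i‖ = 1) :
    ∃ z : E, ‖z‖ = 1 ∧ |L m| ≤ |L (fun _ => z)| := by
  classical
  set K : Set (Fin k → E) := Set.pi Set.univ (fun _ => Metric.sphere (0 : E) 1) with hK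
  have hKc : IsCompact K := isCompact_univ_pi fun _ => isCompact_sphere 0 1
  have hKm : ∀ y, y ∈ K ↔ ∀ i, ‖y i‖ = 1 := fun y => by simp [hK, Set.mem_pi]
  have hcont : Continuous fun y => |L y| := L.cont.abs
  obtain ⟨y0, hy0, hmax⟩ := hKc.exists_isMaxOn ⟨m, (hKm m).2 hm⟩ hcont.continuousOn
  set N := |L y0| with hNdef
  have hN : ∀ y : Fin k → E, (∀ i, ‖y i‖ = 1) → |L y| ≤ N := fun y hy => hmax ((hKm y).2 hy)
  set S : Set (Fin k → E) := K ∩ {y | |L y| = N} with hS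
  have hSc : IsCompact S := hKc.inter_right (isClosed_eq hcont continuous_const)
  set i0 : Fin k := ⟨0, hk⟩ with hi0
  set e := y0 i0 with he
  have hΦ : Continuous fun y : Fin k → E => ∑ i, |inner ℝ (y i) e| := by fun_prop
  obtain ⟨y1, hy1, hmax1⟩ := hSc.exists_isMaxOn ⟨y0, hy0, rfl⟩ hΦ.continuousOn
  -- flip signs
  set ε : Fin k → ℝ := fun i => if 0 ≤ inner ℝ (y1 i) e then 1 else -1 with hε
  have hεa : ∀ i, |ε i| = 1 := fun i => by
    simp only [hε]
    split_ifs <;> simp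
  set y : Fin k → E := fun i => ε i • y1 i with hy
  have hynorm : ∀ i, ‖y i‖ = 1 := fun i => by
    simp only [hy]
    rw [norm_smul, Real.norm_eq_abs, hεa, (hKm y1).1 hy1.1 i, one_mul]
  have hyN : |L y| = N := by
    have : |L y1| = N := hy1.2
    rw [hy, L.map_smul_univ, smul_eq_mul, abs_mul, Finset.abs_prod, this]
    simp [hεa]
  have hyin : ∀ i, inner ℝ (y i) e = |inner ℝ (y1 i) e| := fun i => by
    simp only [hy, hε, real_inner_smul_left]
    split_ifs with h
    · rw [abs_of_nonneg h, one_mul]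
    · rw [abs_of_neg (not_le.1 h)]
      ring
  have hmax2 : ∀ z : Fin k → E, (∀ i, ‖z i‖ = 1) → |L z| = N →
      ∑ i, inner ℝ (z i) e ≤ ∑ i, inner ℝ (y i) e := fun z hz hzN => by
    have h1 : ∑ i, |inner ℝ (z i) e| ≤ ∑ i, |inner ℝ (y1 i) e| := hmax1 ⟨(hKm z).2 hz, hzN⟩
    simp only [hyin]
    exact (Finset.sum_le_sum fun i _ => le_abs_self _).trans h1
  have hpos : ∃ i, 0 < inner ℝ (y i) e := by
    by_contra! hcon
    have h1 : ∑ i, |inner ℝ (y0 i) e| ≤ ∑ i, |inner ℝ (y1 i) e| := hmax1 ⟨hy0, rfl⟩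
    have h2 : |inner ℝ (y0 i0) e| ≤ ∑ i, |inner ℝ (y0 i) e| :=
      Finset.single_le_sum (f := fun i => |inner ℝ (y0 i) e|) (fun _ _ => abs_nonneg _)
        (Finset.mem_univ i0)
    have h3 : ∑ i, |inner ℝ (y1 i) e| ≤ 0 :=
      Finset.sum_nonpos fun i _ => (hyin i) ▸ hcon i
    have h4 : inner ℝ (y0 i0) e = 1 := by
      rw [← he, real_inner_self_eq_norm_sq, he, (hKm y0).1 hy0]
      norm_num
    rw [h4] at h2
    norm_num at h2
    linarith
  obtain ⟨i, hi⟩ := hpos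
  have hall : ∀ j, y j = y i := by
    intro j
    by_contra hne
    have hji : i ≠ j := fun h => hne (by rw [h])
    obtain ⟨hs, hgain⟩ := mh_inner_gain (hynorm i) (hynorm j) (fun h => hne h.symm) hi
      (by rw [hyin]; exact abs_nonneg _)
    have hmerge := mh_merge L hsym N hN y hynorm hyN i j hji hs
    set w := ‖y i + y j‖⁻¹ • (y i + y j) with hw
    have hwn : ‖w‖ = 1 := norm_smul_inv_norm (𝕜 := ℝ) hs
    have hle := hmax2 _ (fun l => ?_) hmerge
    · have hsum : ∀ f : Fin k → ℝ, ∑ l, f l = f i + f j + ∑ l ∈ (Finset.univ.erase i).erase j, f l := by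
        intro f
        rw [← Finset.add_sum_erase _ f (Finset.mem_univ i),
          ← Finset.add_sum_erase (Finset.univ.erase i) f (a := j) (by simp [hji.symm])]
        ring
      rw [hsum, hsum (fun l => inner ℝ (y l) e)] at hle
      have hrest : ∑ l ∈ (Finset.univ.erase i).erase j,
          inner ℝ (Function.update (Function.update y i w) j w l) e
          = ∑ l ∈ (Finset.univ.erase i).erase j, inner ℝ (y l) e := by
        refine Finset.sum_congr rfl fun l hl => ?_
        simp only [Finset.mem_erase] at hl
        rw [Function.update_of_ne hl.1, Function.update_of_ne hl.2.1]
      rw [hrest, Function.update_self, Function.update_of_ne hji, Function.update_self] at hle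
      linarith
    · by_cases h2 : l = j
      · subst h2
        simpa using hwn
      · by_cases h1 : l = i
        · subst h1
          simpa [h2] using hwn
        · simp [h1, h2, hynorm]
  refine ⟨y i, hynorm i, ?_⟩
  have : (fun _ => y i) = y := funext fun j => (hall j).symm
  rw [this, hyN]
  exact hN m hm

lemma mh_banach {H : Type*} [NormedAddCommGroup H] [InnerProductSpace ℝ H] {k : ℕ}
    (L : ContinuousMultilinearMap ℝ (fun _ : Fin k => H) ℝ)
    (hsym : ∀ (v : Fin k → H) (σ : Equiv.Perm (Fin k)), L (v ∘ σ) = L v) (hk : 1 ≤ k)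
    (m : Fin k → H) (hm : ∀ i, ‖m i‖ = 1) :
    ∃ z : H, ‖z‖ = 1 ∧ |L m| ≤ |L (fun _ => z)| := by
  let F : Submodule ℝ H := Submodule.span ℝ (Set.range m)
  haveI : FiniteDimensional ℝ F := FiniteDimensional.span_of_finite ℝ (Set.finite_range m)
  let L' : ContinuousMultilinearMap ℝ (fun _ : Fin k => F) ℝ :=
    L.compContinuousLinearMap (fun _ => F.subtypeL)
  have hL' : ∀ v : Fin k → F, L' v = L (fun i => (v i : H)) := fun v => rfl
  obtain ⟨z, hz, h⟩ := mh_banach_fin L' (fun v σ => by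
    rw [hL', hL']
    exact hsym (fun i => (v i : H)) σ) hk
    (fun i => ⟨m i, Submodule.subset_span ⟨i, rfl⟩⟩) (fun i => hm i)
  exact ⟨z, hz, h⟩

lemma mh_norm_eq {H : Type*} [NormedAddCommGroup H] [InnerProductSpace ℝ H] {k : ℕ}
    (L : ContinuousMultilinearMap ℝ (fun _ : Fin k => H) ℝ)
    (hsym : ∀ (v : Fin k → H) (σ : Equiv.Perm (Fin k)), L (v ∘ σ) = L v) (hk : 1 ≤ k) :
    ‖L‖ = sSup ((fun y => ‖L (fun _ => y)‖) '' Metric.closedBall (0 : H) 1) := by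
  have hbd : ∀ b ∈ (fun y => ‖L (fun _ => y)‖) '' Metric.closedBall (0 : H) 1, b ≤ ‖L‖ := by
    rintro _ ⟨y, hy, rfl⟩
    have hy1 : ‖y‖ ≤ 1 := by simpa using hy
    refine (L.le_opNorm _).trans ?_
    simp only [Finset.prod_const]
    exact mul_le_of_le_one_right (norm_nonneg _) (pow_le_one₀ (norm_nonneg _) hy1)
  have hba : BddAbove ((fun y => ‖L (fun _ => y)‖) '' Metric.closedBall (0 : H) 1) := ⟨_, hbd⟩
  have h0 : (0 : H) ∈ Metric.closedBall (0 : H) 1 := by simp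
  apply le_antisymm
  · refine L.opNorm_le_bound ((norm_nonneg _).trans (le_csSup hba ⟨0, h0, rfl⟩)) fun m => ?_
    by_cases hm : ∃ i, m i = 0
    · obtain ⟨i, hi⟩ := hm
      rw [L.map_coord_zero i hi, norm_zero]
      exact mul_nonneg ((norm_nonneg _).trans (le_csSup hba ⟨0, h0, rfl⟩))
        (Finset.prod_nonneg fun _ _ => norm_nonneg _)
    · push Not at hm
      obtain ⟨z, hz, h⟩ := mh_banach L hsym hk (fun i => ‖m i‖⁻¹ • m i)
        (fun i => norm_smul_inv_norm (𝕜 := ℝ) (hm i))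
      have h1 : L m = (∏ i, ‖m i‖) * L (fun i => ‖m i‖⁻¹ • m i) := by
        rw [← smul_eq_mul, ← L.map_smul_univ]
        congr 1
        funext i
        rw [smul_smul, mul_inv_cancel₀ (norm_ne_zero_iff.2 (hm i)), one_smul]
      rw [h1, norm_mul, Real.norm_of_nonneg (Finset.prod_nonneg fun _ _ => norm_nonneg _), mul_comm]
      refine mul_le_mul_of_nonneg_right ?_ (Finset.prod_nonneg fun _ _ => norm_nonneg _)
      refine le_trans h (le_csSup hba ⟨z, by simp [hz], rfl⟩)
  · exact csSup_le ⟨_, 0, h0, rfl⟩ hbd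

end MHHelpers

/-- V. A. Markov's theorem on a real Hilbert space: if `P` is a continuous polynomial of
degree at most `n` with `‖P‖ ≤ 1` and `1 ≤ k ≤ n`, then for every `‖x‖ ≤ 1`,
`‖D^k P(x)‖ = ‖D̂^k P(x)‖ ≤ T_n^{(k)}(1) = n²(n²-1²)⋯(n²-(k-1)²)/(1·3⋯(2k-1))`. -/
theorem markov_hilbert
    {H : Type*} [NormedAddCommGroup H] [InnerProductSpace ℝ H] [CompleteSpace H]
    (n k : ℕ) (hk1 : 1 ≤ k) (hkn : k ≤ n) (P : H → ℝ)
    (hP : ∃ L : (j : Fin (n + 1)) → ContinuousMultilinearMap ℝ (fun _ : Fin (j : ℕ) => H) ℝ,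
      ∀ x, P x = ∑ j, L j (fun _ => x))
    (hPnorm : ∀ x : H, ‖x‖ ≤ 1 → |P x| ≤ 1)
    (x : H) (hx : ‖x‖ ≤ 1) :
    ‖iteratedFDeriv ℝ k P x‖
        = sSup ((fun y => ‖iteratedFDeriv ℝ k P x (fun _ => y)‖) '' closedBall (0 : H) 1) ∧
      sSup ((fun y => ‖iteratedFDeriv ℝ k P x (fun _ => y)‖) '' closedBall (0 : H) 1)
        ≤ chebTDerivOne n k ∧
      chebTDerivOne n k
        = (∏ i ∈ Finset.range k, ((n : ℝ) ^ 2 - (i : ℝ) ^ 2)) /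
            (∏ i ∈ Finset.range k, (2 * (i : ℝ) + 1)) := by
  obtain ⟨L, hL⟩ := hP
  refine ⟨?_, ?_, ?_⟩
  · exact mh_norm_eq _ (fun v σ =>
      ((mh_contDiff L hL _).contDiffAt).iteratedFDeriv_comp_perm v σ) hk1
  · refine csSup_le ⟨_, 0, by simp, rfl⟩ ?_
    rintro _ ⟨y, hy, rfl⟩
    exact mh_bound n k hk1 hkn P L hL hPnorm x hx y (by simpa using hy)
  · unfold chebTDerivOne
    rw [Polynomial.Chebyshev.iterate_derivative_T_eval_one_eq_div]
    push_cast
    rfl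
end
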